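/- arXiv:2408.07411 — 4 statements merged into one kernel-verified Lean document; each statement's English description precedes it below -/
import Mathlib

section
/- Let p > 3 be a prime and let Γ ≅ ℤ_p ⊕ Δ, where Δ is a finite Abelian group of order 2^α with 4 ≤ exp(Δ) < |Δ|/2. If p does not divide exp(Δ) − 1, then there exists a Γ-magic rectangle set MRS_Γ(p, exp(Δ); 2^α/exp(Δ)); otherwise there exists a Γ-magic rectangle set MRS_Γ(p, 2·exp(Δ); 2^α/(2·exp(Δ))). -/
/-!
The theorem reduces to finding a magic rectangle set with `p` rows and `e = exp Δ` columns, whether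
or not `p ∣ e - 1`: placing rectangles side by side in pairs gives `2 e` columns.

Write `Δ = ℤ_e ⊕ R` with `|R| ≥ 4` (`exists_cyclic_summand`) and let `h ∈ R` have order two. The
subgroup `K = 2ℤ_e ⊕ ⟨h⟩ ≅ ℤ₂ ⊕ ℤ_{e/2}` has order `e`, and `Q = Δ / K ≅ ℤ₂ ⊕ R / ⟨h⟩`. Since `e`
annihilates `Δ`, all cosets of `K` have the same sum, which equals its own negative. Each row of each
rectangle will run over a coset of `K` in its `Δ`-component, so the row sums in `Δ` agree.

Both `K` and `Q` have complete mappings (permutations `θ` such that `x + θ x` is a permutation).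
For `Q`, whose elements sum to zero because `|R / ⟨h⟩|` is even, this is an instance of M. Hall's
theorem (`hall`). For `K` there is an explicit one, `thetaK`, with many fixed points. Choose lifts
`a q` of the elements of `Q` with `a (c - q) = C - a q`, where `c ∈ Q` is the image of `C ∈ Δ` and
`q ↦ c - q` has no fixed point. The elements `a q + k` and `a (θ q) + θ k` and the negative of
their sum fill the rows `1`, `-1` and `0` of a column, and every other pair of rows `i`, `-i` is
filled with an element of `Δ` and its reflection, so all columns have the same sum in `Δ`.

The `ℤ_p`-component in row `i` is `i * T k`, so columns sum to zero. Rows sum to zero if `∑ T k = 0`.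
Every element of `ℤ_p ⊕ Δ` occurs once if `T` has no zeros and is invariant under `θ` and under the
reflection `k ↦ κ - k`, since then `T` depends only on the `Δ`-component. Taking `T` to be constant
on the set of fixed points `{0, κ}` of `θ` and on its complement achieves this (`exists_scalars`):
with `κ = 0` if `p ∤ e - 1`, and with `κ ≠ 0` if `p ∣ e - 1`. The latter forces `e ≥ 8`, which is what
makes a second fixed point available.
-/


/-- A `Γ`-magic rectangle set `MRS_Γ(a, b; c)`. -/
def IsMagicRectangleSet (Γ : Type*) [AddCommGroup Γ] [Fintype Γ] (a b c : ℕ) : Prop :=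
  ∃ (x : Fin c × Fin a × Fin b → Γ) (ω δ : Γ),
    Function.Bijective x ∧
    (∀ (s : Fin c) (i : Fin a), ∑ j : Fin b, x (s, i, j) = ω) ∧
    (∀ (s : Fin c) (j : Fin b), ∑ i : Fin a, x (s, i, j) = δ)

/-! ### Hall's theorem on differences of permutations -/

/-- Let `π` be the permutation with `c (π k) = a i + a j + t - a k`. On a `π`-invariant set `J`
replace `a` by `a ∘ π⁻¹` and `c` by `c ∘ π`: for `k ∈ J` this turns the pair `(a k, c k)` into
`(s - c k, s - a k)` with `s = a i + a j + t`, which has the same difference. Exchanging the roles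
of `i` and `j` in `c` then produces the difference `t` at `i`. -/
lemma exchange_of_invariant {ι A : Type*} [Finite ι] [DecidableEq ι] [AddCommGroup A]
    (a c : ι ≃ A) {i j : ι} {t : A} (π : Equiv.Perm ι)
    (hπ : ∀ k, c (π k) = a i + a j + t - a k)
    (J : Set ι) (hJ : ∀ k ∈ J, π k ∈ J) (hj : j ∈ J) (hi : i ∉ J) :
    ∃ a' c' : ι ≃ A, c' i - a' i = t ∧ ∀ k, k ≠ i → k ≠ j → c' k - a' k = c k - a k := by
  classical
  have hJ' : ∀ k, π k ∈ J ↔ k ∈ J := fun k => by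
    refine ⟨fun h => ?_, hJ k⟩
    simpa using Equiv.Perm.perm_symm_on_of_perm_on_finite (p := (· ∈ J)) (f := π)
      (fun x hx => hJ x hx) h
  set σ : Equiv.Perm ι := Equiv.Perm.ofSubtype (π.subtypePerm (p := (· ∈ J)) hJ') with hσ
  have hσJ : ∀ k ∈ J, σ k = π k := fun k hk => by
    rw [hσ, Equiv.Perm.ofSubtype_apply_of_mem _ hk]; rfl
  have hσn : ∀ k, k ∉ J → σ k = k := fun k hk =>
    Equiv.Perm.ofSubtype_apply_of_not_mem _ hk
  have hsJ : ∀ k ∈ J, σ.symm k ∈ J := fun k hk => by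
    by_contra h
    have := hσn _ h
    rw [Equiv.apply_symm_apply] at this
    exact h (this ▸ hk)
  refine ⟨σ.symm.trans a, ((Equiv.swap i j).trans σ).trans c, ?_, ?_⟩
  · have h1 : σ.symm i = i := by rw [Equiv.symm_apply_eq, hσn i hi]
    simp only [Equiv.trans_apply, Equiv.swap_apply_left, h1, hσJ j hj, hπ]
    abel
  · intro k hki hkj
    by_cases hk : k ∈ J
    · have h1 : a (σ.symm k) = a i + a j + t - c k := by
        have := hπ (σ.symm k)
        rw [← hσJ _ (hsJ k hk), Equiv.apply_symm_apply] at this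
        rw [this]; abel
      simp only [Equiv.trans_apply, Equiv.swap_apply_of_ne_of_ne hki hkj, hσJ k hk, hπ, h1]
      abel
    · have h1 : σ.symm k = k := by rw [Equiv.symm_apply_eq, hσn k hk]
      simp [h1, Equiv.swap_apply_of_ne_of_ne hki hkj, hσn k hk]

/-- The exchange step in Hall's theorem: the difference of two bijections can be given any
prescribed value at `i`, at the expense of its value at one other index `j`. The invariant set
needed for `exchange_of_invariant` is the `π`-orbit of `j` up to its first visit to `{i, j}`. -/
lemma exchange {ι A : Type*} [Finite ι] [AddCommGroup A]
    (a c : ι ≃ A) {i j : ι} (hij : i ≠ j) (t : A) :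
    ∃ a' c' : ι ≃ A, c' i - a' i = t ∧ ∀ k, k ≠ i → k ≠ j → c' k - a' k = c k - a k := by
  classical
  let π : Equiv.Perm ι := (a.trans (Equiv.subLeft (a i + a j + t))).trans c.symm
  have hπ : ∀ k, c (π k) = a i + a j + t - a k := fun k => by simp [π]
  have hex : ∃ m, 0 < m ∧ ((π ^ m) j = i ∨ (π ^ m) j = j) :=
    ⟨orderOf π, orderOf_pos π, by simp [pow_orderOf_eq_one]⟩
  obtain ⟨hm0, hm⟩ := Nat.find_spec hex
  have hmin := fun t (h : t < Nat.find hex) => Nat.find_min hex h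
  generalize Nat.find hex = m at hm0 hm hmin
  let J : Set ι := {k | ∃ s < m, (π ^ s) j = k}
  have hjJ : j ∈ J := ⟨0, hm0, rfl⟩
  have hiJ : i ∉ J := by
    rintro ⟨s, hs, h⟩
    rcases Nat.eq_zero_or_pos s with rfl | h0
    · exact hij (by simpa using h.symm)
    · exact hmin s hs ⟨h0, Or.inl h⟩
  have hstep : ∀ s, (π ^ (s + 1)) j = π ((π ^ s) j) := fun s => by
    rw [pow_succ', Equiv.Perm.mul_apply]
  rcases hm with hm | hm
  -- If the orbit runs into `i`, swapping two values of `c` closes it up at `j` instead.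
  · have hJ : ∀ k ∈ J, (π.trans (Equiv.swap i j)) k ∈ J := by
      rintro _ ⟨s, hs, rfl⟩
      rw [Equiv.trans_apply, ← hstep]
      rcases Nat.lt_or_ge (s + 1) m with h | h
      · have := hmin _ h
        push Not at this
        obtain ⟨h3, h4⟩ := this (Nat.succ_pos s)
        rw [Equiv.swap_apply_of_ne_of_ne h3 h4]
        exact ⟨s + 1, h, rfl⟩
      · obtain rfl : m = s + 1 := by omega
        rw [hm, Equiv.swap_apply_left]
        exact hjJ
    obtain ⟨a', c', h1, h2⟩ := exchange_of_invariant a ((Equiv.swap i j).trans c) (t := t)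
      (π.trans (Equiv.swap i j)) (fun k => by simp [hπ]) J hJ hjJ hiJ
    refine ⟨a', c', h1, fun k hki hkj => ?_⟩
    rw [h2 k hki hkj, Equiv.trans_apply, Equiv.swap_apply_of_ne_of_ne hki hkj]
  · refine exchange_of_invariant a c π hπ J ?_ hjJ hiJ
    rintro _ ⟨s, hs, rfl⟩
    rw [← hstep]
    rcases Nat.lt_or_ge (s + 1) m with h | h
    · exact ⟨s + 1, h, rfl⟩
    · obtain rfl : m = s + 1 := by omega
      rw [hm]
      exact hjJ

/-- M. Hall's theorem: every function on a finite abelian group whose values sum to zero is a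
difference of two permutations. -/
theorem hall {A : Type*} [Fintype A] [AddCommGroup A] (b : A → A) (hb : ∑ x, b x = 0) :
    ∃ a c : A ≃ A, ∀ x, c x - a x = b x := by
  classical
  have key : ∀ s : Finset A, 0 ∉ s → ∃ a c : A ≃ A, ∀ x ∈ s, c x - a x = b x := by
    intro s
    induction s using Finset.induction_on with
    | empty => exact fun _ => ⟨Equiv.refl A, Equiv.refl A, by simp⟩
    | insert k s hk ih =>
      intro h0
      rw [Finset.mem_insert, not_or] at h0
      obtain ⟨a, c, h⟩ := ih h0.2
      obtain ⟨a', c', h1, h2⟩ := exchange a c (Ne.symm h0.1) (b k)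
      refine ⟨a', c', fun x hx => ?_⟩
      rcases Finset.mem_insert.1 hx with rfl | hx
      · exact h1
      · rw [h2 x (fun e => hk (e ▸ hx)) (fun e => h0.2 (e ▸ hx)), h x hx]
  obtain ⟨a, c, h⟩ := key (Finset.univ.erase 0) (by simp)
  refine ⟨a, c, fun x => ?_⟩
  by_cases hx : x = 0
  · have h1 : ∑ x, (c x - a x) = 0 := by
      rw [Finset.sum_sub_distrib, Equiv.sum_comp c (fun x => x), Equiv.sum_comp a (fun x => x),
        sub_self]
    rw [← Finset.add_sum_erase _ _ (Finset.mem_univ 0)] at h1 hb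
    rw [Finset.sum_congr rfl h] at h1
    rw [hx]
    exact add_right_cancel (h1.trans hb.symm)
  · exact h x (by simp [hx])

/-- A finite abelian group whose elements sum to zero has a complete mapping, that is, a
permutation `θ` for which `x ↦ x + θ x` is again a permutation. -/
theorem exists_completeMapping {A : Type*} [Fintype A] [AddCommGroup A] (hA : ∑ x : A, x = 0) :
    ∃ θ : A ≃ A, Function.Injective fun x => x + θ x := by
  obtain ⟨a, c, h⟩ := hall (fun x : A => x) hA
  refine ⟨a, fun x y hxy => c.injective ?_⟩
  rw [← sub_add_cancel (c x) (a x), ← sub_add_cancel (c y) (a y), h, h]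
  exact hxy

theorem sum_zmod_two_prod {R : Type*} [Fintype R] [AddCommGroup R] (hR : Even (Fintype.card R)) :
    ∑ x : ZMod 2 × R, x = 0 := by
  have h0 : ∑ r : R, r + ∑ r : R, r = 0 := by
    have h := Equiv.sum_comp (Equiv.neg R) (fun r => r)
    simp only [Equiv.neg_apply] at h
    rw [Finset.sum_neg_distrib (fun r => r)] at h
    nth_rw 1 [← h]
    exact neg_add_cancel _
  ext
  · rw [Prod.fst_sum, Prod.fst_zero, Fintype.sum_prod_type]
    obtain ⟨m, hm⟩ := hR
    have h2 : ((m + m : ℕ) : ZMod 2) = 0 := by rw [← two_mul]; push_cast; reduce_mod_char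
    simp [hm, h2]
  · rw [Prod.snd_sum, Prod.snd_zero, Fintype.sum_prod_type]
    simpa [two_nsmul] using h0

/-! ### Splitting off a cyclic summand of maximal order -/

theorem exists_cyclic_summand {Δ : Type*} [AddCommGroup Δ] [Finite Δ] {k : ℕ}
    (hk : AddMonoid.exponent Δ = 2 ^ (k + 1)) :
    ∃ (R : Type) (_ : AddCommGroup R), Nonempty (Δ ≃+ ZMod (AddMonoid.exponent Δ) × R) := by
  classical
  obtain ⟨ι, _, n, hn, ⟨f⟩⟩ := AddCommGroup.equiv_directSum_zmod_of_finite' Δ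
  let g : Δ ≃+ ∀ i, ZMod (n i) := f.trans (DirectSum.addEquivProd _)
  have hdvd : ∀ i, n i ∣ 2 ^ (k + 1) := fun i => by
    have h : (2 ^ (k + 1)) • g.symm (Pi.single i 1) = 0 := by
      rw [← hk]; exact AddMonoid.exponent_nsmul_eq_zero _
    rw [← map_nsmul, EmbeddingLike.map_eq_zero_iff] at h
    have h := congrFun h i
    rw [Pi.smul_apply, Pi.single_eq_same, nsmul_one] at h
    exact (ZMod.natCast_eq_zero_iff _ _).1 h
  obtain ⟨i, hi⟩ : ∃ i, n i = 2 ^ (k + 1) := by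
    by_contra! hne
    have h : AddMonoid.exponent Δ ∣ 2 ^ k := by
      refine AddMonoid.exponent_dvd_of_forall_nsmul_eq_zero fun x => ?_
      apply g.injective
      rw [map_nsmul, map_zero]
      funext i
      obtain ⟨l, hl, h⟩ := (Nat.dvd_prime_pow Nat.prime_two).1 (hdvd i)
      have hlk : l ≤ k := by
        rcases Nat.lt_or_ge k l with h' | h'
        · exact absurd (by rw [h, show l = k + 1 by omega]) (hne i)
        · exact h'
      rw [Pi.smul_apply, nsmul_eq_mul, (ZMod.natCast_eq_zero_iff _ _).2
        (h ▸ pow_dvd_pow 2 hlk), zero_mul, Pi.zero_apply]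
    rw [hk, Nat.pow_dvd_pow_iff_le_right (by norm_num)] at h
    omega
  rw [hk, ← hi]
  exact ⟨∀ j : {j // j ≠ i}, ZMod (n j), inferInstance,
    ⟨g.trans { Equiv.piSplitAt i _ with map_add' := fun x y => rfl }⟩⟩

/-! ### A complete mapping of `ℤ₂ ⊕ ℤ_{2M}` with fixed points -/

/-- The indicator function of the residues `M, …, 2M - 1` modulo `2M`, with values in `ℤ₂`. -/
def upperHalf (M : ℕ) (y : ZMod (2 * M)) : ZMod 2 := if y.val < M then 0 else 1

lemma eq_or_upperHalf_ne {M : ℕ} (hM : 0 < M) {y z : ZMod (2 * M)} (h : 2 * y = 2 * z) :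
    y = z ∨ upperHalf M y ≠ upperHalf M z := by
  have : NeZero (2 * M) := ⟨by omega⟩
  have hy := y.val_lt
  have hz := z.val_lt
  have h' : (2 * y.val) ≡ (2 * z.val) [MOD 2 * M] := by
    rw [← ZMod.natCast_eq_natCast_iff]
    push_cast
    simpa using h
  have h'' : y.val ≡ z.val [MOD M] := Nat.ModEq.mul_left_cancel' (by norm_num) h'
  unfold upperHalf
  by_cases hyM : y.val < M <;> by_cases hzM : z.val < M
  · left
    exact ZMod.val_injective _ (Nat.ModEq.eq_of_lt_of_lt h'' hyM hzM)
  · right; simp [hyM, hzM]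
  · right; simp [hyM, hzM]
  · left
    apply ZMod.val_injective
    have h1 : y.val - M + M ≡ z.val - M + M [MOD M] := by
      rwa [Nat.sub_add_cancel (by omega), Nat.sub_add_cancel (by omega)]
    have := Nat.ModEq.eq_of_lt_of_lt (Nat.ModEq.add_right_cancel' M h1) (by omega) (by omega)
    omega

/-- The map `(0, y) ↦ (u y, y)`, `(1, y) ↦ (1 + u (y + 1), y + 1)` on `ℤ₂ ⊕ ℤ_{2M}`, where `u` is
`upperHalf M`. It is a complete mapping and fixes `(0, y)` for `y` in the lower half. -/
def thetaK (M : ℕ) (x : ZMod 2 × ZMod (2 * M)) : ZMod 2 × ZMod (2 * M) :=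
  (x.1 + upperHalf M (x.2 + (x.1.val : ZMod (2 * M))), x.2 + (x.1.val : ZMod (2 * M)))

lemma thetaK_injective (M : ℕ) : Function.Injective (thetaK M) := by
  rintro ⟨ε, y⟩ ⟨ε', y'⟩ h
  simp only [thetaK, Prod.mk.injEq] at h
  obtain ⟨h1, h2⟩ := h
  rw [h2] at h1
  obtain rfl := add_right_cancel h1
  rw [add_right_cancel h2]

lemma add_thetaK_injective {M : ℕ} (hM : 0 < M) :
    Function.Injective fun x => x + thetaK M x := by
  rintro ⟨ε, y⟩ ⟨ε', y'⟩ h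
  simp only [thetaK, Prod.mk_add_mk, Prod.mk.injEq, ← add_assoc, CharTwo.add_self_eq_zero,
    zero_add] at h
  obtain ⟨h1, h2⟩ := h
  -- The second coordinate of the sum is `2y` or `2y + 1`; its parity determines `ε`.
  have h3 := congrArg (ZMod.castHom (dvd_mul_right 2 M) (ZMod 2)) h2
  simp only [map_add, CharTwo.add_self_eq_zero, zero_add, map_natCast,
    ZMod.natCast_zmod_val] at h3
  subst h3
  rcases eq_or_upperHalf_ne hM (y := y + (ε.val : ZMod (2 * M)))
      (z := y' + (ε.val : ZMod (2 * M))) (by linear_combination h2) with h | h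
  · rw [add_right_cancel h]
  · exact absurd h1 h

lemma thetaK_zero {M : ℕ} (hM : 0 < M) : thetaK M 0 = 0 := by
  simp [thetaK, upperHalf, hM]

lemma thetaK_one {M : ℕ} (hM : 1 < M) : thetaK M (0, 1) = (0, 1) := by
  have : Fact (1 < 2 * M) := ⟨by omega⟩
  simp [thetaK, upperHalf, hM, ZMod.val_one]

/-! ### Magic rectangle sets from a group extension -/

lemma IsMagicRectangleSet.of_fintype {Γ S I J : Type*} [AddCommGroup Γ] [Fintype Γ]
    [Fintype S] [Fintype I] [Fintype J] (x : S → I → J → Γ) (ω δ : Γ)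
    (hinj : ∀ s i j s' i' j', x s i j = x s' i' j' → s = s' ∧ i = i' ∧ j = j')
    (hcard : Fintype.card S * (Fintype.card I * Fintype.card J) = Fintype.card Γ)
    (hrow : ∀ s i, ∑ j, x s i j = ω) (hcol : ∀ s j, ∑ i, x s i j = δ) :
    IsMagicRectangleSet Γ (Fintype.card I) (Fintype.card J) (Fintype.card S) := by
  classical
  let eS := (Fintype.equivFin S).symm
  let eI := (Fintype.equivFin I).symm
  let eJ := (Fintype.equivFin J).symm
  refine ⟨fun q => x (eS q.1) (eI q.2.1) (eJ q.2.2), ω, δ, ?_, fun s i => ?_, fun s j => ?_⟩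
  · rw [Fintype.bijective_iff_injective_and_card]
    refine ⟨?_, by simpa using hcard⟩
    rintro ⟨s, i, j⟩ ⟨s', i', j'⟩ h
    obtain ⟨h1, h2, h3⟩ := hinj _ _ _ _ _ _ h
    exact Prod.ext (eS.injective h1) (Prod.ext (eI.injective h2) (eJ.injective h3))
  · rw [← hrow (eS s) (eI i)]
    exact Equiv.sum_comp eJ fun j => x (eS s) (eI i) j
  · rw [← hcol (eS s) (eJ j)]
    exact Equiv.sum_comp eI fun i => x (eS s) i (eJ j)

/-- Rectangles can be placed side by side in pairs. -/
lemma IsMagicRectangleSet.glue {Γ : Type*} [AddCommGroup Γ] [Fintype Γ] {a b c : ℕ}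
    (h : IsMagicRectangleSet Γ a b (c * 2)) : IsMagicRectangleSet Γ a (2 * b) c := by
  obtain ⟨x, ω, δ, hx, hrow, hcol⟩ := h
  have := IsMagicRectangleSet.of_fintype (S := Fin c) (I := Fin a) (J := Fin 2 × Fin b)
    (fun s i j => x (finProdFinEquiv (s, j.1), i, j.2)) (2 • ω) δ ?_ ?_ ?_ ?_
  · simpa using this
  · rintro s i ⟨t, j⟩ s' i' ⟨t', j'⟩ h
    have h := hx.injective h
    simp only [Prod.mk.injEq, EmbeddingLike.apply_eq_iff_eq] at h
    obtain ⟨⟨rfl, rfl⟩, rfl, rfl⟩ := h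
    exact ⟨rfl, rfl, rfl⟩
  · rw [← Fintype.card_of_bijective hx]
    simp; ring
  · intro s i
    rw [Fintype.sum_prod_type]
    simp [hrow]
  · rintro s ⟨t, j⟩
    exact hcol _ _

/-- If the reflection `q ↦ π C - q` has no fixed point, then `π` has a set-theoretic section
compatible with this reflection and with `x ↦ C - x`: choose freely one lift from each pair
`{q, π C - q}`. -/
lemma exists_symmetric_section {Q Δ : Type*} [Finite Q] [AddCommGroup Q] [AddCommGroup Δ]
    (π : Δ →+ Q) (hπ : Function.Surjective π) (C : Δ) (hC : ∀ q, π C - q ≠ q) :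
    ∃ a : Q → Δ, (∀ q, π (a q) = q) ∧ ∀ q, a (π C - q) = C - a q := by
  classical
  obtain ⟨n, ⟨f⟩⟩ := Finite.exists_equiv_fin Q
  have hs := Function.surjInv_eq hπ
  generalize Function.surjInv hπ = s at hs
  refine ⟨fun q => if f q < f (π C - q) then s q else C - s (π C - q), fun q => ?_, fun q => ?_⟩
  · dsimp only
    split_ifs <;> simp [hs]
  · have hne : f (π C - q) ≠ f q := fun h => hC q (f.injective h)
    simp only [sub_sub_cancel]
    rcases lt_or_gt_of_ne hne with h | h
    · rw [if_pos h, if_neg h.not_gt, sub_sub_cancel]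
    · rw [if_neg h.not_gt, if_pos h]

/-- The `Δ`-component of the entry in row `i` and column `k` of the rectangle `q`, given a
parametrisation `E` of `Δ`. The rows `1`, `-1` and `0` hold `E q k`, its image under the complete
mapping, and minus the sum of the two. The other rows come in pairs `{i, -i}` holding `E q k` and
`C - E q k`; the representative with `i.val ≤ p / 2` gets `E q k`. -/
def rowEntry {p : ℕ} {Q K Δ : Type*} [AddCommGroup Δ] (E : Q → K → Δ) (θQ : Q → Q)
    (θK : K → K) (C : Δ) (i : ZMod p) (q : Q) (k : K) : Δ :=
  if i = 0 then -(E q k + E (θQ q) (θK k))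
  else if i = -1 then E (θQ q) (θK k)
  else if i.val ≤ p / 2 then E q k else C - E q k

/-- A sum over `ℤ_p` vanishes if the terms at `0, 1, -1` cancel and all other terms cancel in pairs
`{i, -i}`. -/
lemma sum_zmod_eq_zero_of_pairs {p : ℕ} [Fact p.Prime] (hp3 : 3 < p) {A : Type*} [AddCommGroup A]
    (g : ZMod p → A) (h1 : g 0 + g 1 + g (-1) = 0)
    (h2 : ∀ i, i ≠ 0 → i ≠ 1 → i ≠ -1 → g i + g (-i) = 0) : ∑ i, g i = 0 := by
  classical
  have : NeZero p := ⟨by omega⟩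
  have hodd : Odd p := (Fact.out : p.Prime).odd_of_ne_two (by omega)
  have : Fact (Odd p) := ⟨hodd⟩
  have : Fact (2 < p) := ⟨by omega⟩
  have : Fact (1 < p) := ⟨by omega⟩
  have hne : (1 : ZMod p) ≠ -1 := (ZMod.neg_one_ne_one).symm
  rw [← Finset.sum_sdiff (Finset.subset_univ ({0, 1, -1} : Finset (ZMod p)))]
  have h3 : ∑ i ∈ ({0, 1, -1} : Finset (ZMod p)), g i = 0 := by
    rw [Finset.sum_insert (by simp), Finset.sum_insert (by simpa using hne),
      Finset.sum_singleton, ← add_assoc, h1]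
  rw [h3, add_zero]
  refine Finset.sum_involution (fun i _ => -i) (fun i hi => ?_) (fun i hi _ => ?_)
    (fun i hi => ?_) (fun i hi => neg_neg i)
  · simp at hi
    exact h2 i hi.1 hi.2.1 hi.2.2
  · simp at hi
    exact fun h => hi.1 (ZMod.neg_eq_self_iff i |>.1 h |>.resolve_right fun h => by
      obtain ⟨m, hm⟩ := hodd; omega)
  · simp at hi ⊢
    refine ⟨hi.1, fun h => hi.2.2 ?_, hi.2.1⟩
    rw [← h, neg_neg]

/-- Given an extension `0 → K → Δ → Q → 0` in which `K` and `Q` have complete mappings, and scalars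
`T : K → ℤ_p` with the listed invariance properties, a magic rectangle set with rectangles indexed
by `Q`, rows by `ℤ_p` and columns by `K`. The entry is `i * T k` in `ℤ_p` and `rowEntry` in `Δ`;
each row of a rectangle runs over a coset of the image of `K`. Exactness in the middle is encoded
by `hπι` together with the cardinality hypothesis `hcard`. -/
theorem magic_of_extension {p : ℕ} (hp : p.Prime) (hp3 : 3 < p) {Γ Δ K Q : Type*}
    [AddCommGroup Γ] [Fintype Γ] [AddCommGroup Δ] [Fintype Δ] [AddCommGroup K] [Fintype K]
    [AddCommGroup Q] [Fintype Q] (e : Γ ≃+ ZMod p × Δ)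
    (ι : K →+ Δ) (hι : Function.Injective ι) (π : Δ →+ Q) (hπ : Function.Surjective π)
    (hπι : ∀ k, π (ι k) = 0) (hcard : Fintype.card Q * Fintype.card K = Fintype.card Δ)
    (hK : ∀ x : Δ, Fintype.card K • x = 0)
    (θK : K → K) (hθK : Function.Injective θK) (hθK' : Function.Injective fun k => k + θK k)
    (θQ : Q → Q) (hθQ : Function.Injective θQ) (hθQ' : Function.Injective fun q => q + θQ q)
    (C : Δ) (hC : ∀ q, π C - q ≠ q) (κ : K)
    (T : K → ZMod p) (hT0 : ∀ k, T k ≠ 0) (hTθ : ∀ k, T (θK k) = T k)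
    (hTκ : ∀ k, T (κ - k) = T k) (hT : ∑ k, T k = 0) :
    IsMagicRectangleSet Γ p (Fintype.card K) (Fintype.card Q) := by
  classical
  have : Fact p.Prime := ⟨hp⟩
  have : NeZero p := ⟨hp.ne_zero⟩
  obtain ⟨a, ha, haC⟩ := exists_symmetric_section π hπ C hC
  let E : Q → K → Δ := fun q k => a q + ι k
  have hE : ∀ q k, E q k = a q + ι k := fun _ _ => rfl
  have hπE : ∀ q k, π (E q k) = q := fun q k => by rw [hE, map_add, ha, hπι, add_zero]
  have hEinj : ∀ {q k q' k'}, E q k = E q' k' → q = q' ∧ k = k' := by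
    intro q k q' k' h
    have hq : q = q' := by rw [← hπE q k, h, hπE]
    subst hq
    exact ⟨rfl, hι (add_left_cancel h)⟩
  have hEC : ∀ q k, C + ι κ - E q k = E (π C - q) (κ - k) := fun q k => by
    rw [hE, hE, haC, map_sub]; abel
  let D : ZMod p → Q → K → Δ := rowEntry E θQ θK (C + ι κ)
  -- As `|K|` annihilates `Δ`, all cosets of the image of `ι` have this same sum.
  let ω := ∑ k, ι k
  have hsumE : ∀ q, ∑ k, E q k = ω := fun q => by
    simp only [hE, Finset.sum_add_distrib, Finset.sum_const, Finset.card_univ, hK, zero_add, ω]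
  have hneg : -ω = ω := by
    have h := Equiv.sum_comp (Equiv.neg K) (fun k => ι k)
    simp only [Equiv.neg_apply, map_neg, Finset.sum_neg_distrib] at h
    exact h
  have hcomp : ∀ (f : K → K) (_ : Function.Injective f) q, ∑ k, E q (f k) = ω := by
    intro f hf q
    rw [← hsumE q]
    exact Equiv.sum_comp (Equiv.ofBijective f (Finite.injective_iff_bijective.1 hf)) (E q)
  have hrowD : ∀ i q, ∑ k, D i q k = ω := by
    intro i q
    simp only [D, rowEntry]
    split_ifs
    · have h : ∀ k, -(E q k + E (θQ q) (θK k)) = -(a q + a (θQ q)) - ι (k + θK k) := fun k => by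
        rw [hE, hE, map_add]; abel
      have h' : ∑ k, ι (k + θK k) = ω :=
        Equiv.sum_comp (Equiv.ofBijective _ (Finite.injective_iff_bijective.1 hθK')) fun k => ι k
      simp only [h, Finset.sum_sub_distrib, Finset.sum_const, Finset.card_univ, hK, zero_sub, h',
        hneg]
    · exact hcomp θK hθK _
    · exact hsumE q
    · simp only [hEC]
      exact hcomp _ sub_right_injective _
  -- Outside row `0` an element of `Δ` determines the scalar `T k` of each column it occurs in,
  -- so `i * T k` determines the row.
  have hTE : ∀ {i q k i' q' k'}, i ≠ 0 → i' ≠ 0 → D i q k = D i' q' k' → T k = T k' := by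
    have key : ∀ i q k, i ≠ 0 → ∃ q₁ k₁, D i q k = E q₁ k₁ ∧ T k₁ = T k := by
      intro i q k hi
      simp only [D, rowEntry, if_neg hi]
      split_ifs
      · exact ⟨_, _, rfl, hTθ k⟩
      · exact ⟨_, _, rfl, rfl⟩
      · exact ⟨_, _, hEC q k, hTκ k⟩
    intro i q k i' q' k' hi hi' h
    obtain ⟨q₁, k₁, h1, h2⟩ := key i q k hi
    obtain ⟨q₂, k₂, h3, h4⟩ := key i' q' k' hi'
    rw [h1, h3] at h
    rw [← h2, ← h4, (hEinj h).2]
  have hDinj : ∀ {i q k q' k'}, D i q k = D i q' k' → q = q' ∧ k = k' := by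
    intro i q k q' k' h
    simp only [D, rowEntry] at h
    split_ifs at h
    · have h := neg_injective h
      have hq : q = q' := hθQ' (by simpa [hπE] using congrArg π h)
      subst hq
      refine ⟨rfl, hθK' (hι ?_)⟩
      simp only [hE] at h
      have h5 : a q + a (θQ q) + ι (k + θK k) = a q + a (θQ q) + ι (k' + θK k') := by
        rw [map_add, map_add]
        calc _ = a q + ι k + (a (θQ q) + ι (θK k)) := by abel
          _ = a q + ι k' + (a (θQ q) + ι (θK k')) := h
          _ = _ := by abel
      exact add_left_cancel h5
    · obtain ⟨h1, h2⟩ := hEinj h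
      exact ⟨hθQ h1, hθK h2⟩
    · exact hEinj h
    · exact hEinj (sub_right_injective h)
  have hcolD : ∀ q k q' k', ∑ i, D i q k = ∑ i, D i q' k' := by
    intro q k q' k'
    rw [← sub_eq_zero, ← Finset.sum_sub_distrib]
    have : Fact (2 < p) := ⟨by omega⟩
    have : Fact (1 < p) := ⟨by omega⟩
    have hne : (1 : ZMod p) ≠ -1 := (ZMod.neg_one_ne_one).symm
    apply sum_zmod_eq_zero_of_pairs hp3
    · have hD0 : ∀ q k, D 0 q k = -(E q k + E (θQ q) (θK k)) := fun q k => by simp [D, rowEntry]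
      have hD1 : ∀ q k, D 1 q k = E q k := fun q k => by
        have : 1 ≤ p / 2 := by omega
        simp [D, rowEntry, hne, ZMod.val_one, this]
      have hD2 : ∀ q k, D (-1) q k = E (θQ q) (θK k) := fun q k => by simp [D, rowEntry]
      rw [hD0, hD0, hD1, hD1, hD2, hD2]
      abel
    · intro i h0 h1 h2
      have : NeZero i := ⟨h0⟩
      have hval : (-i).val = p - i.val := ZMod.val_neg_of_ne_zero i
      have hlt := i.val_lt
      obtain ⟨m, hm⟩ : Odd p := hp.odd_of_ne_two (by omega)
      have h3 : -i ≠ -1 := fun h => h1 (neg_injective h)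
      have h4 : -i ≠ 0 := neg_ne_zero.2 h0
      by_cases hi : i.val ≤ p / 2
      · have hi' : ¬ p - i.val ≤ p / 2 := by omega
        simp only [D, rowEntry, h0, h2, h3, h4, hval, hi, hi', if_true, if_false]
        abel
      · have hi' : p - i.val ≤ p / 2 := by omega
        simp only [D, rowEntry, h0, h2, h3, h4, hval, hi, hi', if_true, if_false]
        abel
  obtain ⟨δ, hδ⟩ : ∃ δ, ∀ q k, ∑ i, D i q k = δ := ⟨_, fun q k => hcolD q k 0 0⟩
  have hsum0 : ∑ i : ZMod p, i = 0 := sum_zmod_eq_zero_of_pairs hp3 _ (by ring) (fun i _ _ _ => by ring)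
  have hfin := IsMagicRectangleSet.of_fintype (S := Q) (I := ZMod p) (J := K)
    (fun q i k => e.symm (i * T k, D i q k)) (e.symm (0, ω)) (e.symm (0, δ)) ?_ ?_ ?_ ?_
  · rwa [ZMod.card] at hfin
  · intro q i k q' i' k' h
    obtain ⟨h1, h2⟩ := Prod.mk.inj (e.symm.injective h)
    have hii : i = i' := by
      by_cases hi : i = 0
      · rw [hi, zero_mul, eq_comm, mul_eq_zero] at h1
        rw [hi, h1.resolve_right (hT0 _)]
      · have hi' : i' ≠ 0 := by
          rintro rfl
          rw [zero_mul, mul_eq_zero] at h1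
          exact h1.elim hi (hT0 _)
        rw [hTE hi hi' h2] at h1
        exact mul_right_cancel₀ (hT0 _) h1
    subst hii
    obtain ⟨hq, hk⟩ := hDinj h2
    exact ⟨hq, rfl, hk⟩
  · rw [Fintype.card_congr e.toEquiv, Fintype.card_prod, ZMod.card, ← hcard]
    ring
  · intro q i
    rw [← map_sum]
    congr 1
    ext
    · rw [Prod.fst_sum, ← Finset.mul_sum, hT, mul_zero]
    · rw [Prod.snd_sum, hrowD]
  · intro q k
    rw [← map_sum]
    congr 1
    ext
    · rw [Prod.fst_sum, ← Finset.sum_mul, hsum0, zero_mul]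
    · rw [Prod.snd_sum, hδ]

/-! ### Assembling the pieces -/

/-- The scalars `T`. If `p ∤ |K| - 1`, take `1 - |K|` at `0` and `1` elsewhere. If `p ∣ |K| - 1`, take
`1` at the two fixed points `0, κ` of `θ` and `2` elsewhere, with sum `2|K| - 2 = 0`. -/
lemma exists_scalars {p : ℕ} (hp : p.Prime) (hp2 : 2 < p) {K : Type*} [AddCommGroup K] [Fintype K]
    (θ : K → K) (hθ : Function.Injective θ) (h0 : θ 0 = 0) (κ : K)
    (hκ : p ∣ Fintype.card K - 1 → κ ≠ 0 ∧ θ κ = κ) :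
    ∃ (κ' : K) (T : K → ZMod p), (∀ k, T k ≠ 0) ∧ (∀ k, T (θ k) = T k) ∧
      (∀ k, T (κ' - k) = T k) ∧ ∑ k, T k = 0 := by
  classical
  have : Fact p.Prime := ⟨hp⟩
  have h1 : ∀ k, θ k = 0 ↔ k = 0 := fun k => ⟨fun h => hθ (h.trans h0.symm), fun h => h ▸ h0⟩
  have hpos : 1 ≤ Fintype.card K := Fintype.card_pos
  by_cases hdvd : p ∣ Fintype.card K - 1
  · obtain ⟨hκ0, hκ1⟩ := hκ hdvd
    have h2 : ∀ k, θ k = κ ↔ k = κ := fun k => ⟨fun h => hθ (h.trans hκ1.symm), fun h => h ▸ hκ1⟩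
    have htwo : (2 : ZMod p) ≠ 0 := fun h => by
      have := Nat.le_of_dvd (by norm_num) ((ZMod.natCast_eq_zero_iff 2 p).1 (by exact_mod_cast h))
      omega
    refine ⟨κ, fun k => if k = 0 ∨ k = κ then 1 else 2, fun k => ?_, fun k => ?_, fun k => ?_, ?_⟩
    · dsimp only
      split_ifs
      exacts [one_ne_zero, htwo]
    · simp only [h1, h2]
    · simp only [sub_eq_zero, sub_eq_self, eq_comm (a := κ), or_comm]
    · have h3 : ∀ k, (if k = 0 ∨ k = κ then 1 else 2 : ZMod p)
          = 2 - (if k = 0 then 1 else 0) - (if k = κ then 1 else 0) := fun k => by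
        by_cases hk : k = 0
        · have : k ≠ κ := fun h => hκ0 (h ▸ hk)
          simp only [hk, hκ0.symm, true_or, if_true, if_false]
          ring
        · by_cases hk' : k = κ
          · simp only [hk', hκ0, or_true, if_true, if_false]
            ring
          · simp only [hk, hk', or_self, if_false]
            ring
      have h4 : ((Fintype.card K : ℕ) : ZMod p) = 1 := by
        have := (ZMod.natCast_eq_zero_iff _ p).2 hdvd
        rwa [Nat.cast_sub hpos, Nat.cast_one, sub_eq_zero] at this
      simp only [h3, Finset.sum_sub_distrib, Finset.sum_const, Finset.card_univ,
        Finset.sum_ite_eq', Finset.mem_univ, if_true, nsmul_eq_mul, h4]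
      ring
  · refine ⟨0, fun k => 1 - if k = 0 then (Fintype.card K : ZMod p) else 0,
      fun k => ?_, fun k => ?_, fun k => ?_, ?_⟩
    · dsimp only
      split_ifs
      · intro h
        apply hdvd
        rw [← ZMod.natCast_eq_zero_iff, Nat.cast_sub hpos, Nat.cast_one, ← neg_sub, h, neg_zero]
      · simp
    · simp only [h1]
    · simp only [zero_sub, neg_eq_zero]
    · simp

lemma ZMod.one_sub_ne_self_of_two : ∀ z : ZMod 2, 1 - z ≠ z := by decide

/-- The magic rectangle set with `exp Δ` columns exists whether or not `p` divides `exp Δ - 1`. -/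
theorem magic_of_exponent {Γ Δ : Type*} [AddCommGroup Γ] [Fintype Γ] [AddCommGroup Δ] [Fintype Δ]
    {p : ℕ} (hp : p.Prime) (hp3 : 3 < p) (e : Γ ≃+ ZMod p × Δ)
    {α : ℕ} (hcard : Fintype.card Δ = 2 ^ α) {m : ℕ} (hm : AddMonoid.exponent Δ = 2 ^ (m + 2))
    (hmα : m + 4 ≤ α) :
    IsMagicRectangleSet Γ p (2 ^ (m + 2)) (2 ^ (α - (m + 2))) := by
  classical
  have : Fact p.Prime := ⟨hp⟩
  obtain ⟨R, _, ⟨g⟩⟩ := exists_cyclic_summand hm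
  have hM : 2 * (2 * 2 ^ m) = 2 ^ (m + 2) := by ring
  rw [hm, ← hM] at g
  have hM0 : 0 < 2 ^ m := by positivity
  generalize hMdef : 2 ^ m = M at g hM hM0
  have : NeZero (2 * (2 * M)) := ⟨by omega⟩
  have : NeZero (2 * M) := ⟨by omega⟩
  have : Finite R := Finite.of_injective (fun r => g.symm (0, r)) fun r s h => by simpa using h
  have : Fintype R := Fintype.ofFinite R
  obtain ⟨n, rfl⟩ : ∃ n, α = m + 4 + n := ⟨α - (m + 4), by omega⟩
  have hR : Fintype.card R = 2 ^ (n + 2) := by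
    have h1 : Fintype.card Δ = 2 ^ (m + 2) * Fintype.card R := by
      rw [Fintype.card_congr g.toEquiv, Fintype.card_prod, ZMod.card, hM]
    refine Nat.eq_of_mul_eq_mul_left (show 0 < 2 ^ (m + 2) by positivity) ?_
    rw [← h1, hcard]
    ring
  have : Fact (Nat.Prime 2) := ⟨Nat.prime_two⟩
  obtain ⟨h, hh⟩ := exists_prime_addOrderOf_dvd_card (G := R) 2
    (by rw [hR]; exact dvd_pow_self 2 (by omega))
  have hR' : Nat.card (R ⧸ AddSubgroup.zmultiples h) = 2 ^ (n + 1) := by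
    have h1 := AddSubgroup.card_eq_card_quotient_mul_card_addSubgroup (AddSubgroup.zmultiples h)
    rw [Nat.card_zmultiples, hh, Nat.card_eq_fintype_card, hR] at h1
    refine Nat.eq_of_mul_eq_mul_right (show 0 < 2 by norm_num) ?_
    rw [← h1]
    ring
  have : Fintype (R ⧸ AddSubgroup.zmultiples h) := Fintype.ofFinite _
  rw [Nat.card_eq_fintype_card] at hR'
  -- The subgroup `K` is generated by twice a generator of the cyclic summand and by `h`.
  let ι₁ : ZMod (2 * M) →+ ZMod (2 * (2 * M)) := ZMod.lift (2 * M)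
    ⟨zmultiplesHom _ 2, by
      have := ZMod.natCast_self (2 * (2 * M))
      push_cast at this
      simpa [mul_comm, mul_assoc, mul_left_comm] using this⟩
  let ι₂ : ZMod 2 →+ R := ZMod.lift 2
    ⟨zmultiplesHom _ h, by
      have := addOrderOf_nsmul_eq_zero h
      rw [hh, ← natCast_zsmul] at this
      exact this⟩
  have hι₁ : Function.Injective ι₁ := by
    rw [ZMod.lift_injective]
    intro z hz
    have hz : ((z * 2 : ℤ) : ZMod (2 * (2 * M))) = 0 := by simpa using hz
    rw [ZMod.intCast_zmod_eq_zero_iff_dvd] at hz ⊢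
    push_cast at hz ⊢
    rw [mul_comm z 2] at hz
    exact (mul_dvd_mul_iff_left two_ne_zero).1 hz
  have hι₂ : Function.Injective ι₂ := by
    rw [ZMod.lift_injective]
    intro z hz
    have hz : z • h = 0 := by simpa using hz
    rw [← addOrderOf_dvd_iff_zsmul_eq_zero, hh] at hz
    rwa [ZMod.intCast_zmod_eq_zero_iff_dvd]
  let ι : ZMod 2 × ZMod (2 * M) →+ ZMod (2 * (2 * M)) × R :=
    (ι₁.comp (AddMonoidHom.snd _ _)).prod (ι₂.comp (AddMonoidHom.fst _ _))
  let π : ZMod (2 * (2 * M)) × R →+ ZMod 2 × (R ⧸ AddSubgroup.zmultiples h) :=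
    (ZMod.castHom (dvd_mul_right 2 (2 * M)) (ZMod 2)).toAddMonoidHom.prodMap
      (QuotientAddGroup.mk' _)
  have hπ₁ : ∀ y, ZMod.castHom (dvd_mul_right 2 (2 * M)) (ZMod 2) (ι₁ y) = 0 := by
    intro y
    obtain ⟨z, rfl⟩ := ZMod.intCast_surjective y
    have h2 : (2 : ZMod 2) = 0 := rfl
    simp only [ι₁, ZMod.lift_coe, zmultiplesHom_apply, map_zsmul, map_ofNat, h2, smul_zero]
  have hπ₂ : ∀ y, (QuotientAddGroup.mk (ι₂ y) : R ⧸ AddSubgroup.zmultiples h) = 0 := by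
    intro y
    obtain ⟨z, rfl⟩ := ZMod.intCast_surjective y
    rw [QuotientAddGroup.eq_zero_iff]
    simp only [ι₂, ZMod.lift_coe]
    exact ⟨z, rfl⟩
  have hcardK : Fintype.card (ZMod 2 × ZMod (2 * M)) = 2 ^ (m + 2) := by
    rw [Fintype.card_prod, ZMod.card, ZMod.card, hM]
  have hcardQ : Fintype.card (ZMod 2 × (R ⧸ AddSubgroup.zmultiples h)) = 2 ^ (n + 2) := by
    rw [Fintype.card_prod, ZMod.card, hR']
    ring
  obtain ⟨θQ, hθQ⟩ := exists_completeMapping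
    (sum_zmod_two_prod (R := R ⧸ AddSubgroup.zmultiples h)
      (by rw [hR']; exact (even_two.pow_of_ne_zero (by omega))))
  obtain ⟨κ, T, hT0, hTθ, hTκ, hT⟩ := exists_scalars hp (by omega) (thetaK M) (thetaK_injective M)
    (thetaK_zero hM0) (0, 1) (fun hdvd => by
      -- `p ∣ 2 ^ (m + 2) - 1` excludes `m = 0`, because `p > 3`
      have hM1 : 1 < M := by
        rcases Nat.lt_or_ge 1 M with h | h
        · exact h
        · obtain rfl : M = 1 := by omega
          rw [hcardK, ← hM] at hdvd
          have := Nat.le_of_dvd (by norm_num) hdvd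
          omega
      have : Fact (1 < 2 * M) := ⟨by omega⟩
      exact ⟨by simp, thetaK_one hM1⟩)
  have hfin := magic_of_extension hp hp3 (e.trans ((AddEquiv.refl _).prodCongr g)) ι
    (fun x y hxy => by
      obtain ⟨h1, h2⟩ := Prod.mk.inj hxy
      exact Prod.ext (hι₂ h2) (hι₁ h1))
    π
    (by
      rintro ⟨x, y⟩
      obtain ⟨u, hu⟩ := ZMod.castHom_surjective (dvd_mul_right 2 (2 * M)) x
      obtain ⟨v, rfl⟩ := QuotientAddGroup.mk_surjective y
      exact ⟨(u, v), Prod.ext hu rfl⟩)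
    (fun k => Prod.ext (hπ₁ _) (hπ₂ _))
    (by
      rw [hcardK, hcardQ, Fintype.card_prod, ZMod.card, hR, hM]
      ring)
    (fun x => by
      rw [hcardK, ← hm]
      apply g.symm.injective
      rw [map_nsmul, AddMonoid.exponent_nsmul_eq_zero, map_zero])
    (thetaK M) (thetaK_injective M) (add_thetaK_injective hM0) θQ θQ.injective hθQ
    (1, 0)
    (fun q hq => by
      have h1 := congrArg Prod.fst hq
      exact ZMod.one_sub_ne_self_of_two q.1 (by simpa [π] using h1))
    κ T hT0 hTθ hTκ hT
  rw [hcardK, hcardQ] at hfin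
  rwa [show m + 4 + n - (m + 2) = n + 2 by omega]

theorem stmt10 {Γ Δ : Type*} [AddCommGroup Γ] [Fintype Γ] [AddCommGroup Δ] [Fintype Δ]
    (p : ℕ) (hp : p.Prime) (hp3 : 3 < p) (e : Γ ≃+ ZMod p × Δ)
    (α : ℕ) (hcard : Fintype.card Δ = 2 ^ α)
    (hexp4 : 4 ≤ AddMonoid.exponent Δ)
    (hexp : AddMonoid.exponent Δ < Fintype.card Δ / 2) :
    (¬ p ∣ (AddMonoid.exponent Δ - 1) →
      IsMagicRectangleSet Γ p (AddMonoid.exponent Δ) (2 ^ α / AddMonoid.exponent Δ)) ∧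
    (p ∣ (AddMonoid.exponent Δ - 1) →
      IsMagicRectangleSet Γ p (2 * AddMonoid.exponent Δ)
        (2 ^ α / (2 * AddMonoid.exponent Δ))) := by
  obtain ⟨l, hl, he⟩ := (Nat.dvd_prime_pow Nat.prime_two).1
    (hcard ▸ AddGroup.exponent_dvd_card (G := Δ))
  rw [he] at hexp4 hexp ⊢
  obtain ⟨m, rfl⟩ : ∃ m, l = m + 2 := by
    refine ⟨l - 2, ?_⟩
    have : 1 < l := (Nat.pow_lt_pow_iff_right (a := 2) (by norm_num)).1 (by omega)
    omega
  have hmα : m + 4 ≤ α := by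
    have h1 : 2 ^ (m + 3) < 2 ^ α := by
      rw [← hcard, pow_succ]
      omega
    exact (Nat.pow_lt_pow_iff_right (by norm_num)).1 h1
  have key := magic_of_exponent hp hp3 e hcard he hmα
  refine ⟨fun _ => ?_, fun _ => ?_⟩
  · rwa [Nat.pow_div hl (by norm_num)]
  -- The rectangles with `2 * exp Δ` columns are two rectangles with `exp Δ` columns side by side.
  · rw [← pow_succ', Nat.pow_div (by omega) (by norm_num), pow_succ']
    refine IsMagicRectangleSet.glue ?_
    rw [← pow_succ]
    rwa [show α - (m + 2 + 1) + 1 = α - (m + 2) by omega]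
end

section
/- Let p > 2 be a prime and let Γ ≅ ℤ_p ⊕ Δ, where Δ is a finite Abelian group of order 2^α with α ≥ 2 and Δ has more than one involution. Then there exists a Γ-magic rectangle set MRS_Γ(p, 4; 2^{α−2}). -/
universe u

/-! ### Zero-sum arrays -/

/-- A family of `c` arrays with `m` rows and four columns over `Γ`, all of whose rows and columns
have sum zero and whose entries together cover `A`. Covering is asked for instead of a bijection
onto `A` because it passes to homomorphic images; when `A` has `4 * c * m` elements the two are
the same. -/
def ZeroSumRect {Γ : Type*} [AddCommGroup Γ] (c m : ℕ) (A : Set Γ) : Prop :=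
  ∃ x : Fin c → Fin m → Fin 4 → Γ,
    (∀ a ∈ A, ∃ s i j, x s i j = a) ∧
    (∀ s i, ∑ j, x s i j = 0) ∧ (∀ s j, ∑ i, x s i j = 0)

namespace ZeroSumRect

/-- The arrays and the rows may be indexed by any finite types of the right sizes. -/
theorem of_fintype {Γ S I : Type*} [AddCommGroup Γ] [Fintype S] [Fintype I] {c m : ℕ}
    {A : Set Γ} (hS : Fintype.card S = c) (hI : Fintype.card I = m) (x : S → I → Fin 4 → Γ)
    (hA : ∀ a ∈ A, ∃ s i j, x s i j = a) (hr : ∀ s i, ∑ j, x s i j = 0)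
    (hc : ∀ s j, ∑ i, x s i j = 0) : ZeroSumRect c m A := by
  let eS := Fintype.equivFinOfCardEq hS
  let eI := Fintype.equivFinOfCardEq hI
  refine ⟨fun s i j => x (eS.symm s) (eI.symm i) j, fun a ha => ?_, fun s i => hr _ _,
    fun s j => ?_⟩
  · obtain ⟨s, i, j, h⟩ := hA a ha
    exact ⟨eS s, eI i, j, by simpa using h⟩
  · rw [← hc (eS.symm s) j]
    exact Equiv.sum_comp eI.symm fun i => x (eS.symm s) i j

theorem map {Γ Γ' : Type*} [AddCommGroup Γ] [AddCommGroup Γ'] {c m : ℕ} {A : Set Γ}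
    {B : Set Γ'} (φ : Γ →+ Γ') (hB : ∀ b ∈ B, ∃ a ∈ A, φ a = b) (h : ZeroSumRect c m A) :
    ZeroSumRect c m B := by
  obtain ⟨x, hA, hr, hc⟩ := h
  refine ⟨fun s i j => φ (x s i j), fun b hb => ?_, fun s i => ?_, fun s j => ?_⟩
  · obtain ⟨a, ha, rfl⟩ := hB b hb
    obtain ⟨s, i, j, rfl⟩ := hA a ha
    exact ⟨s, i, j, rfl⟩
  · rw [← map_sum, hr, map_zero]
  · rw [← map_sum, hc, map_zero]

end ZeroSumRect

/-! ### Homomorphisms from cyclic groups and from the Klein group -/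

/-- The homomorphism `ZMod N → G` sending `1` to an element `g` with `N • g = 0`. -/
def zmodHom {G : Type*} [AddCommGroup G] (N : ℕ) (g : G) (hg : N • g = 0) : ZMod N →+ G :=
  ZMod.lift N ⟨zmultiplesHom G g, by simpa using hg⟩

theorem zmodHom_intCast {G : Type*} [AddCommGroup G] {N : ℕ} {g : G} (hg : N • g = 0) (m : ℤ) :
    zmodHom N g hg (m : ZMod N) = m • g := by
  simp [zmodHom]

theorem zmodHom_one {G : Type*} [AddCommGroup G] {N : ℕ} {g : G} (hg : N • g = 0) :
    zmodHom N g hg 1 = g := by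
  simpa using zmodHom_intCast hg 1

/-- The homomorphism from the Klein group to `G` with `(1, 0) ↦ u` and `(0, 1) ↦ v`. -/
def klein {G : Type*} [AddCommGroup G] (u v : G) (hu : u + u = 0) (hv : v + v = 0) :
    ZMod 2 × ZMod 2 →+ G :=
  (zmodHom 2 u (by rw [two_nsmul, hu])).coprod (zmodHom 2 v (by rw [two_nsmul, hv]))

theorem klein_intCast {G : Type*} [AddCommGroup G] {u v : G} (hu : u + u = 0) (hv : v + v = 0)
    (m n : ℤ) : klein u v hu hv ((m : ZMod 2), (n : ZMod 2)) = m • u + n • v := by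
  simp only [klein, AddMonoidHom.coprod_apply, zmodHom_intCast]

theorem exists_klein_eq {G : Type*} [AddCommGroup G] {u v : G} (hu : u + u = 0) (hv : v + v = 0)
    (h : ZMod 2 × ZMod 2) : ∃ m n : ℤ, klein u v hu hv h = m • u + n • v := by
  obtain ⟨a, b⟩ := h
  obtain ⟨m, rfl⟩ := ZMod.intCast_surjective a
  obtain ⟨n, rfl⟩ := ZMod.intCast_surjective b
  exact ⟨m, n, klein_intCast hu hv m n⟩

theorem klein_injective {G : Type*} [AddCommGroup G] {u v : G} (hu : u + u = 0)
    (hv : v + v = 0) (hu0 : u ≠ 0) (hv0 : v ≠ 0) (huv : u ≠ v) :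
    Function.Injective (klein u v hu hv) := by
  rw [injective_iff_map_eq_zero]
  have huv' : u + v ≠ 0 := fun h => huv (by
    have h1 : u = -v := eq_neg_of_add_eq_zero_left h
    rw [h1]; exact neg_eq_of_add_eq_zero_left hv)
  have h2 : ∀ a : ZMod 2, a = 0 ∨ a = 1 := by decide
  rintro ⟨a, b⟩
  rcases h2 a with rfl | rfl <;> rcases h2 b with rfl | rfl <;>
    simp [klein, zmodHom_one, hu0, hv0, huv']

/-! ### Lifting along a Klein subgroup -/

/-- A zero-sum array lifts along a surjective homomorphism: arbitrary preimages are corrected in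
one column so that the rows have sum zero, then in one row so that the columns do. -/
theorem exists_lift_grid {G Q I J : Type*} [AddCommGroup G] [AddCommGroup Q] [Fintype I]
    [Fintype J] (π : G →+ Q) (hπ : Function.Surjective π) (i₀ : I) (j₀ : J) (a : I → J → Q)
    (hr : ∀ i, ∑ j, a i j = 0) (hc : ∀ j, ∑ i, a i j = 0) :
    ∃ b : I → J → G, (∀ i j, π (b i j) = a i j) ∧ (∀ i, ∑ j, b i j = 0) ∧
      (∀ j, ∑ i, b i j = 0) := by
  classical
  choose σ hσ using hπ
  let R : I → G := fun i => ∑ j, σ (a i j)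
  let C : J → G := fun j => ∑ i, σ (a i j)
  let T : G := ∑ i, R i
  have hT : ∑ j, C j = T := Finset.sum_comm
  have hR : ∀ i, π (R i) = 0 := fun i => by simp [R, map_sum, hσ, hr]
  have hC : ∀ j, π (C j) = 0 := fun j => by simp [C, map_sum, hσ, hc]
  have hT0 : π T = 0 := by simp [T, map_sum, hR]
  refine ⟨fun i j => σ (a i j) - (if j = j₀ then R i else 0) -
    (if i = i₀ then C j - (if j = j₀ then T else 0) else 0), fun i j => ?_, fun i => ?_,
    fun j => ?_⟩
  · beta_reduce
    split_ifs <;> simp [hσ, hR, hC, hT0]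
  · simp only [Finset.sum_sub_distrib, Finset.sum_ite_eq', Finset.mem_univ, if_true]
    split_ifs
    · simp [hT, R]
    · simp [R]
  · simp only [Finset.sum_sub_distrib, Finset.sum_ite_eq', Finset.mem_univ, if_true]
    split_ifs <;> simp [T, C]

/-- If `π : G → Q` is surjective with kernel covered by the Klein group, each zero-sum array over
`Q` gives four over `G`, one for each `h` in the Klein group: lift the array and shift row `i` by
`L i h`. The map `L i` is the identity for an even number of rows, and for the remaining three it is
multiplication by `1`, `ω`, `ω²`, the Klein group being the additive group of the field with four
elements `0, 1, ω, ω²`. As `1 + ω + ω² = 0`, the shifts have sum zero along each column, and along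
each row they add up to `4 • h = 0`; each `L i` is a bijection, so that all elements occur. -/
theorem ZeroSumRect.lift {G Q : Type*} [AddCommGroup G] [AddCommGroup Q] (π : G →+ Q)
    (hπ : Function.Surjective π) (ι : ZMod 2 × ZMod 2 →+ G)
    (hι : ∀ g, π g = 0 → ∃ h, ι h = g) {c k : ℕ}
    (h : ZeroSumRect c (2 * k + 3) (Set.univ : Set Q)) :
    ZeroSumRect (c * 4) (2 * k + 3) (Set.univ : Set G) := by
  obtain ⟨x, hA, hr, hc⟩ := h
  choose b hb hbr hbc using fun s => exists_lift_grid π hπ 0 0 (x s) (hr s) (hc s)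
  let e : Fin (2 * k + 3) ≃ (Fin k ⊕ Fin k) ⊕ Fin 3 :=
    Fintype.equivOfCardEq (by simp; ring)
  let L : (Fin k ⊕ Fin k) ⊕ Fin 3 → ZMod 2 × ZMod 2 → ZMod 2 × ZMod 2 := fun r h =>
    Sum.elim (fun _ => h) (fun i => (![h, (h.2, h.1 + h.2), (h.1 + h.2, h.1)] : Fin 3 → _) i) r
  have hL : ∀ r h, ∃ h', L r h' = h := by
    rintro (r | r)
    · exact fun h => ⟨h, rfl⟩
    · fin_cases r
      · exact fun h => ⟨h, rfl⟩
      · simp only [L, Sum.elim_inr]; decide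
      · simp only [L, Sum.elim_inr]; decide
  have hchar : ∀ h : ZMod 2 × ZMod 2, h + h = 0 := by decide
  have hLs : ∀ h, ∑ i, L (e i) h = 0 := by
    intro h
    rw [Equiv.sum_comp e (fun r => L r h)]
    simp only [L, Fintype.sum_sum_type, Sum.elim_inl, Sum.elim_inr, hchar, zero_add]
    revert h; decide
  refine ZeroSumRect.of_fintype (S := Fin c × (ZMod 2 × ZMod 2)) (I := Fin (2 * k + 3))
    (by simp) (by simp)
    (fun s i j => b s.1 i j + ι (L (e i) s.2)) (fun a _ => ?_) (fun s i => ?_) (fun s j => ?_)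
  · obtain ⟨s, i, j, h⟩ := hA (π a) trivial
    obtain ⟨h', hh'⟩ := hι (a - b s i j) (by rw [map_sub, hb, h, sub_self])
    obtain ⟨h'', rfl⟩ := hL (e i) h'
    exact ⟨(s, h''), i, j, by simp [hh']⟩
  · rw [Finset.sum_add_distrib, hbr, zero_add, Finset.sum_const, ← map_nsmul]
    have : ∀ h : ZMod 2 × ZMod 2, (4 : ℕ) • h = 0 := by decide
    simp [this]
  · rw [Finset.sum_add_distrib, hbc, zero_add, ← map_sum, hLs, map_zero]

/-! ### Adding pairs of rows over the integers -/

/-- The cosets of the Klein subgroup `{0, u, v, u + v}`, each listed as `t, t + u + v, t + u, t + v`,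
split `Δ` into quadruples whose first two and last two entries have the same sum. -/
theorem exists_coset_quads {Δ : Type*} [AddCommGroup Δ] [Finite Δ] {u v : Δ} (hu : u + u = 0)
    (hv : v + v = 0) (hu0 : u ≠ 0) (hv0 : v ≠ 0) (huv : u ≠ v) {c : ℕ}
    (hc : c * 4 = Nat.card Δ) :
    ∃ f : Fin c → Fin 4 → Δ, (∀ d, ∃ s j, f s j = d) ∧
      ∀ s, f s 0 + f s 1 = f s 2 + f s 3 := by
  let ι := klein u v hu hv
  have hι : Function.Injective ι := klein_injective hu hv hu0 hv0 huv
  have hQ : Nat.card (Δ ⧸ ι.range) = c := by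
    have h1 := AddSubgroup.card_eq_card_quotient_mul_card_addSubgroup ι.range
    have h2 : Nat.card ι.range = 4 := by
      rw [← Nat.card_congr (AddMonoidHom.ofInjective hι).toEquiv]
      simp
    rw [h2] at h1
    omega
  let e : Fin c ≃ Δ ⧸ ι.range := (Finite.equivFinOfCardEq hQ).symm
  refine ⟨fun s j => (e s).out + ι (![(0, 0), (1, 1), (1, 0), (0, 1)] j), fun d => ?_,
    fun s => ?_⟩
  · have h : -(e (e.symm d)).out + d ∈ ι.range := by
      rw [← QuotientAddGroup.eq, Equiv.apply_symm_apply, QuotientAddGroup.out_eq']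
    obtain ⟨w, hw⟩ := h
    have hj : ∀ w, ∃ j, (![(0, 0), (1, 1), (1, 0), (0, 1)] : Fin 4 → ZMod 2 × ZMod 2) j = w := by
      decide
    obtain ⟨j, rfl⟩ := hj w
    exact ⟨e.symm d, j, by beta_reduce; rw [hw, add_neg_cancel_left]⟩
  · have h : ∀ x : Δ, ∀ a b a' b' : ZMod 2 × ZMod 2, a + b = a' + b' →
        (x + ι a) + (x + ι b) = (x + ι a') + (x + ι b') := by
      intro x a b a' b' h
      rw [add_add_add_comm, ← map_add, h, map_add, add_add_add_comm]
    exact h _ _ _ _ _ (by decide)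

/-- Two rows `y` and `-y` can be appended, where the `ℤ`-components of `y` are
`n + 1, n + 1, -(n + 1), -(n + 1)` and the `Δ`-components are those of a coset quadruple, with the
same signs. -/
theorem ZeroSumRect.add_pair {Δ : Type*} [AddCommGroup Δ] [Finite Δ] {u v : Δ}
    (hu : u + u = 0) (hv : v + v = 0) (hu0 : u ≠ 0) (hv0 : v ≠ 0) (huv : u ≠ v) {c m n : ℕ}
    (hc : c * 4 = Nat.card Δ)
    (h : ZeroSumRect c m (Set.Icc (-n : ℤ) n ×ˢ (Set.univ : Set Δ))) :
    ZeroSumRect c (m + 2) (Set.Icc (-(n + 1 : ℕ) : ℤ) (n + 1 : ℕ) ×ˢ (Set.univ : Set Δ)) := by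
  obtain ⟨f, hf, hfs⟩ := exists_coset_quads hu hv hu0 hv0 huv hc
  obtain ⟨x, hA, hr, hcol⟩ := h
  let σ : Fin 4 → ℤ := ![1, 1, -1, -1]
  let y : Fin c → Fin 4 → ℤ × Δ := fun s j => σ j • ((n + 1 : ℤ), f s j)
  have hy : ∀ s, ∑ j, y s j = 0 := by
    intro s
    have := hfs s
    simp only [y, σ, Fin.sum_univ_four]
    ext
    · simp
      ring
    · simp only [Matrix.cons_val_zero, Matrix.cons_val_one, Matrix.cons_val, one_smul, neg_smul,
        Prod.snd_add, Prod.snd_neg, Prod.snd_zero, this]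
      abel
  refine ZeroSumRect.of_fintype (S := Fin c) (I := Fin m ⊕ Fin 2) (by simp) (by simp)
    (fun s i j => Sum.elim (fun i => x s i j) (fun i => (![y s j, -y s j] : Fin 2 → _) i) i)
    ?_ ?_ ?_
  · rintro ⟨t, d⟩ ⟨ht, -⟩
    simp only [Set.mem_Icc, Nat.cast_add, Nat.cast_one] at ht
    by_cases ht' : -(n : ℤ) ≤ t ∧ t ≤ n
    · obtain ⟨s, i, j, h⟩ := hA (t, d) ⟨ht', trivial⟩
      exact ⟨s, Sum.inl i, j, h⟩
    · have key : ∀ s j, ∃ i j', (![y s j', -y s j'] : Fin 2 → _) i = ((n + 1 : ℤ), f s j) := by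
        intro s j
        fin_cases j
        exacts [⟨0, 0, by simp [y, σ]⟩, ⟨0, 1, by simp [y, σ]⟩, ⟨1, 2, by simp [y, σ]⟩,
          ⟨1, 3, by simp [y, σ]⟩]
      have key' : ∀ s j, ∃ i j', (![y s j', -y s j'] : Fin 2 → _) i = -((n + 1 : ℤ), f s j) := by
        intro s j
        obtain ⟨i, j', h⟩ := key s j
        refine ⟨1 - i, j', ?_⟩
        rw [← h]
        fin_cases i <;> simp
      rcases (by omega : t = n + 1 ∨ t = -(n + 1)) with rfl | rfl
      · obtain ⟨s, j, rfl⟩ := hf d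
        obtain ⟨i, j', h⟩ := key s j
        exact ⟨s, Sum.inr i, j', h⟩
      · obtain ⟨s, j, hd⟩ := hf (-d)
        obtain ⟨i, j', h⟩ := key' s j
        exact ⟨s, Sum.inr i, j', by simpa [hd] using h⟩
  · rintro s (i | i)
    · exact hr s i
    · fin_cases i
      · exact hy s
      · simpa [Finset.sum_neg_distrib] using hy s
  · intro s j
    simp [Fintype.sum_sum_type, hcol]

/-- Repeated use of `ZeroSumRect.add_pair` covers a complete residue system of the odd modulus. -/
theorem ZeroSumRect.to_zmod {Δ : Type*} [AddCommGroup Δ] [Finite Δ] {u v : Δ}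
    (hu : u + u = 0) (hv : v + v = 0) (hu0 : u ≠ 0) (hv0 : v ≠ 0) (huv : u ≠ v) {c n : ℕ}
    (hc : c * 4 = Nat.card Δ) (k : ℕ)
    (h : ZeroSumRect c (2 * n + 1) (Set.Icc (-n : ℤ) n ×ˢ (Set.univ : Set Δ))) :
    ZeroSumRect c (2 * (n + k) + 1) (Set.univ : Set (ZMod (2 * (n + k) + 1) × Δ)) := by
  have h' : ZeroSumRect c (2 * (n + k) + 1)
      (Set.Icc (-(n + k : ℕ) : ℤ) (n + k : ℕ) ×ˢ (Set.univ : Set Δ)) := by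
    induction k with
    | zero => exact h
    | succ k ih => exact ih.add_pair hu hv hu0 hv0 huv hc
  refine h'.map ((Int.castAddHom (ZMod (2 * (n + k) + 1))).prodMap (AddMonoidHom.id Δ)) ?_
  rintro ⟨t, d⟩ -
  have h1 := ZMod.natAbs_valMinAbs_le t
  refine ⟨(t.valMinAbs, d), ⟨?_, trivial⟩, by simp⟩
  simp only [Set.mem_Icc]
  omega

/-! ### Small arrays -/

theorem rect_klein_three : ZeroSumRect 1 3 (Set.univ : Set (ZMod 3 × (ZMod 2 × ZMod 2))) := by
  let x : Fin 1 → Fin 3 → Fin 4 → ZMod 3 × (ZMod 2 × ZMod 2) :=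
    ![![![(0, (0, 0)), (0, (1, 1)), (1, (1, 0)), (2, (0, 1))],
      ![(1, (1, 1)), (1, (0, 1)), (0, (1, 0)), (1, (0, 0))],
      ![(2, (1, 1)), (2, (1, 0)), (2, (0, 0)), (0, (0, 1))]]]
  exact ⟨x, (by
      have h : ∀ a, ∃ s i j, x s i j = a := by decide +kernel
      exact fun a _ => h a), by decide +kernel, by decide +kernel⟩

theorem rect_klein_five :
    ZeroSumRect 1 5 (Set.Icc (-(2 : ℕ) : ℤ) (2 : ℕ) ×ˢ (Set.univ : Set (ZMod 2 × ZMod 2))) := by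
  let x : Fin 1 → Fin 5 → Fin 4 → ℤ × (ZMod 2 × ZMod 2) :=
    ![![![(-2, (0, 0)), (-2, (1, 0)), (2, (0, 0)), (2, (1, 0))],
      ![(-1, (0, 0)), (1, (1, 0)), (-2, (0, 1)), (2, (1, 1))],
      ![(2, (0, 1)), (0, (1, 0)), (0, (0, 0)), (-2, (1, 1))],
      ![(0, (0, 1)), (0, (1, 1)), (1, (1, 1)), (-1, (0, 1))],
      ![(1, (0, 0)), (1, (0, 1)), (-1, (1, 0)), (-1, (1, 1))]]]
  exact ⟨x, (by
      have h : ∀ t ∈ Finset.Icc (-2 : ℤ) 2, ∀ d, ∃ s i j, x s i j = (t, d) := by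
        decide +kernel
      rintro ⟨t, d⟩ ⟨ht, -⟩
      exact h t (Finset.mem_Icc.2 (by simpa using ht)) d), by decide +kernel, by decide +kernel⟩

theorem rect_elementary_three :
    ZeroSumRect 2 3 (Set.univ : Set (ZMod 3 × (ZMod 2 × ZMod 2 × ZMod 2))) := by
  let x : Fin 2 → Fin 3 → Fin 4 → ZMod 3 × (ZMod 2 × ZMod 2 × ZMod 2) :=
    ![![![(-1, (1, 1, 0)), (-1, (1, 0, 0)), (-1, (1, 0, 1)), (0, (1, 1, 1))],
      ![(1, (1, 1, 1)), (-1, (0, 1, 1)), (1, (1, 1, 0)), (-1, (0, 1, 0))],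
      ![(0, (0, 0, 1)), (-1, (1, 1, 1)), (0, (0, 1, 1)), (1, (1, 0, 1))]],
    ![![(0, (0, 0, 0)), (0, (0, 1, 0)), (1, (0, 1, 1)), (-1, (0, 0, 1))],
      ![(-1, (0, 0, 0)), (0, (1, 0, 0)), (1, (0, 0, 1)), (0, (1, 0, 1))],
      ![(1, (0, 0, 0)), (0, (1, 1, 0)), (1, (0, 1, 0)), (1, (1, 0, 0))]]]
  exact ⟨x, (by
      have h : ∀ a, ∃ s i j, x s i j = a := by decide +kernel
      exact fun a _ => h a), by decide +kernel, by decide +kernel⟩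

theorem rect_elementary_five :
    ZeroSumRect 2 5 (Set.Icc (-(2 : ℕ) : ℤ) (2 : ℕ) ×ˢ
      (Set.univ : Set (ZMod 2 × ZMod 2 × ZMod 2))) := by
  let x : Fin 2 → Fin 5 → Fin 4 → ℤ × (ZMod 2 × ZMod 2 × ZMod 2) :=
    ![![![(-1, (1, 0, 1)), (2, (1, 1, 1)), (1, (0, 0, 1)), (-2, (0, 1, 1))],
      ![(0, (0, 1, 0)), (-2, (1, 0, 1)), (0, (0, 0, 1)), (2, (1, 1, 0))],
      ![(2, (1, 0, 1)), (-1, (0, 1, 0)), (-1, (1, 1, 1)), (0, (0, 0, 0))],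
      ![(-1, (1, 1, 0)), (0, (1, 1, 0)), (-1, (0, 1, 1)), (2, (0, 1, 1))],
      ![(0, (1, 0, 0)), (1, (1, 1, 0)), (1, (1, 0, 0)), (-2, (1, 1, 0))]],
    ![![(-1, (1, 0, 0)), (1, (1, 0, 1)), (-2, (0, 0, 1)), (2, (0, 0, 0))],
      ![(2, (1, 0, 0)), (1, (1, 1, 1)), (-2, (0, 1, 0)), (-1, (0, 0, 1))],
      ![(0, (1, 1, 1)), (0, (1, 0, 1)), (1, (0, 1, 0)), (-1, (0, 0, 0))],
      ![(-2, (1, 1, 1)), (-2, (1, 0, 0)), (2, (0, 1, 0)), (2, (0, 0, 1))],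
      ![(1, (0, 0, 0)), (0, (0, 1, 1)), (1, (0, 1, 1)), (-2, (0, 0, 0))]]]
  exact ⟨x, (by
      have h : ∀ t ∈ Finset.Icc (-2 : ℤ) 2, ∀ d, ∃ s i j, x s i j = (t, d) := by
        decide +kernel
      rintro ⟨t, d⟩ ⟨ht, -⟩
      exact h t (Finset.mem_Icc.2 (by simpa using ht)) d), by decide +kernel, by decide +kernel⟩

theorem rect_two_four :
    ZeroSumRect 2 3 (Set.Icc (-(1 : ℕ) : ℤ) (1 : ℕ) ×ˢ (Set.univ : Set (ZMod 2 × ZMod 4))) := by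
  let x : Fin 2 → Fin 3 → Fin 4 → ℤ × (ZMod 2 × ZMod 4) :=
    ![![![(0, (0, 0)), (0, (1, 2)), (1, (1, 3)), (-1, (0, 3))],
      ![(1, (0, 2)), (-1, (1, 1)), (0, (1, 0)), (0, (0, 1))],
      ![(-1, (0, 2)), (1, (0, 1)), (-1, (0, 1)), (1, (0, 0))]],
    ![![(0, (0, 3)), (0, (0, 2)), (1, (0, 3)), (-1, (0, 0))],
      ![(1, (1, 2)), (-1, (1, 2)), (0, (1, 1)), (0, (1, 3))],
      ![(-1, (1, 3)), (1, (1, 0)), (-1, (1, 0)), (1, (1, 1))]]]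
  exact ⟨x, (by
      have h : ∀ t ∈ Finset.Icc (-1 : ℤ) 1, ∀ d, ∃ s i j, x s i j = (t, d) := by
        decide +kernel
      rintro ⟨t, d⟩ ⟨ht, -⟩
      exact h t (Finset.mem_Icc.2 (by simpa using ht)) d), by decide +kernel, by decide +kernel⟩

/-! ### Arrays with three rows from complete mappings -/

/-- Let `x`, `y` and `x + y` each enumerate `Δ`. The columns `(0, x)`, `(1, y)`, `(-1, -(x + y))`
have sum zero. They are grouped in fours, the lower two entries being swapped in the last two
columns of a group; the top row has sum zero when the four `x`s do, and under the condition `h1` so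
do the two others. -/
theorem ZeroSumRect.of_completeMapping {Δ S : Type*} [AddCommGroup Δ] [Fintype S]
    (x y : S → Fin 4 → Δ) (hx : ∀ d, ∃ s j, x s j = d) (hy : ∀ d, ∃ s j, y s j = d)
    (hxy : ∀ d, ∃ s j, x s j + y s j = d) (h0 : ∀ s, ∑ j, x s j = 0)
    (h1 : ∀ s, y s 0 + y s 1 + (x s 0 + x s 1) = y s 2 + y s 3) {c : ℕ}
    (hc : Fintype.card S = c) :
    ZeroSumRect c 3 (Set.Icc (-(1 : ℕ) : ℤ) (1 : ℕ) ×ˢ (Set.univ : Set Δ)) := by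
  let Y : S → Fin 4 → ℤ × Δ := fun s j => (1, y s j)
  let Z : S → Fin 4 → ℤ × Δ := fun s j => (-1, -(x s j + y s j))
  refine ZeroSumRect.of_fintype (I := Fin 3) hc (by simp)
    (fun s => ![fun j => (0, x s j), ![Y s 0, Y s 1, Z s 2, Z s 3],
      ![Z s 0, Z s 1, Y s 2, Y s 3]]) ?_ ?_ ?_
  · rintro ⟨t, d⟩ ⟨ht, -⟩
    simp only [Set.mem_Icc, Nat.cast_one] at ht
    rcases (by omega : t = 0 ∨ t = 1 ∨ t = -1) with rfl | rfl | rfl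
    · obtain ⟨s, j, rfl⟩ := hx d
      exact ⟨s, 0, j, rfl⟩
    · obtain ⟨s, j, rfl⟩ := hy d
      fin_cases j
      exacts [⟨s, 1, 0, rfl⟩, ⟨s, 1, 1, rfl⟩, ⟨s, 2, 2, rfl⟩, ⟨s, 2, 3, rfl⟩]
    · obtain ⟨s, j, h⟩ := hxy (-d)
      have hZ : Z s j = (-1, d) := by simp only [Z, h, neg_neg]
      rw [← hZ]
      fin_cases j
      exacts [⟨s, 2, 0, rfl⟩, ⟨s, 2, 1, rfl⟩, ⟨s, 1, 2, rfl⟩, ⟨s, 1, 3, rfl⟩]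
  · intro s i
    have h0 := h0 s
    have h1 := h1 s
    rw [Fin.sum_univ_four] at h0
    fin_cases i
    · rw [Fin.sum_univ_four]
      ext
      · simp
      · simpa using h0
    · rw [Fin.sum_univ_four]
      ext
      · simp [Y, Z]
      · simp only [Y, Z]
        simp
        have : x s 0 + x s 1 = -(x s 2 + x s 3) := by
          rw [eq_neg_iff_add_eq_zero, ← h0]; abel
        rw [this] at h1
        rw [← sub_eq_zero] at h1
        rw [← h1]
        abel
    · rw [Fin.sum_univ_four]
      ext
      · simp [Y, Z]
      · simp only [Y, Z]
        simp
        rw [add_assoc, ← h1]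
        abel
  · intro s j
    rw [Fin.sum_univ_three]
    fin_cases j <;> ext <;> simp [Y, Z]

/-! ### The groups `ZMod 2 × ZMod (4 * L)` for `L ≥ 2`

The complete mapping is parametrised by triples `(r, ε, b)` of integers with `-L < r ≤ L` and
`ε, b ∈ {0, 1}`. At such a triple `x` has the components `ε` and `r + 2 * b * L`, and `y` has the
components `b + κ` and `r + ε + 2 * κ * L`, with `κ` depending on `r` and `ε` only: `κ(r, 0)` is `1`
exactly for `r = L`, and `κ(r, 1)` is `0` exactly for `r = L - 1` and `r = L`. This choice makes the
integers `r + ε + 2 * κ * L` a complete residue system modulo `4 * L`. The components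
of `x + y` are `ε + b + κ` and `ε + 2 * (r + (b + κ) * L)`; they determine `ε`, then the parity of
`b + κ`, then `r`, then `b`.
-/

theorem exists_intCast_eq (M : ℕ) (hM : 0 < M) (lo : ℤ) (t : ZMod M) :
    ∃ z : ℤ, lo ≤ z ∧ z < lo + M ∧ (z : ZMod M) = t := by
  obtain ⟨w, rfl⟩ := ZMod.intCast_surjective t
  have h1 := Int.emod_nonneg (w - lo) (b := (M : ℤ)) (by omega)
  have h2 := Int.emod_lt_of_pos (w - lo) (b := (M : ℤ)) (by omega)
  refine ⟨(w - lo) % M + lo, by omega, by omega, ?_⟩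
  rw [ZMod.intCast_eq_intCast_iff_dvd_sub]
  refine ⟨(w - lo) / M, ?_⟩
  have := Int.mul_ediv_add_emod (w - lo) M
  linarith

/-- The integer pair `(a, t)`, read in `ZMod 2 × ZMod (4 * L)`. -/
def toTwo (L : ℕ) : ℤ × ℤ →+ ZMod 2 × ZMod (4 * L) :=
  (Int.castAddHom _).prodMap (Int.castAddHom _)

theorem toTwo_eq {L : ℕ} {a b : ℤ × ℤ} (k l : ℤ) (h1 : b.1 - a.1 = 2 * k)
    (h2 : b.2 - a.2 = 4 * L * l) : toTwo L a = toTwo L b := by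
  ext
  · exact (ZMod.intCast_eq_intCast_iff_dvd_sub _ _ _).2 ⟨k, h1⟩
  · exact (ZMod.intCast_eq_intCast_iff_dvd_sub _ _ _).2 ⟨l, by push_cast; exact h2⟩

theorem exists_toTwo_eq {L : ℕ} (hL : 0 < L) (lo : ℤ) (d : ZMod 2 × ZMod (4 * L)) :
    ∃ a t : ℤ, (a = 0 ∨ a = 1) ∧ lo ≤ t ∧ t < lo + 4 * L ∧ toTwo L (a, t) = d := by
  obtain ⟨a, h1, h2, h3⟩ := exists_intCast_eq 2 (by norm_num) 0 d.1
  obtain ⟨t, h4, h5, h6⟩ := exists_intCast_eq (4 * L) (by omega) lo d.2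
  push_cast at h2 h5
  exact ⟨a, t, by omega, h4, h5, Prod.ext h3 h6⟩

/-- The number `κ` that corrects wrap-around modulo `4 * L`, as a function of `r` and `ε = e`. -/
def kap (L r e : ℤ) : ℤ :=
  if e = 0 then (if r = L then 1 else 0) else (if r = L - 1 ∨ r = L then 0 else 1)

/-- The value of `x` at the triple `q = (r, ε, b)`. -/
def colX (L : ℤ) (q : ℤ × ℤ × ℤ) : ℤ × ℤ := (q.2.1, q.1 + 2 * q.2.2 * L)

/-- The value of `y` at the triple `q = (r, ε, b)`. -/
def colY (L : ℤ) (q : ℤ × ℤ × ℤ) : ℤ × ℤ :=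
  (q.2.2 + kap L q.1 q.2.1, q.1 + q.2.1 + 2 * kap L q.1 q.2.1 * L)

/-- The grouping of the triples in fours, with `L = l + 2`: one group for each `ε` and
`1 ≤ r + 1 ≤ L - 1`, holding the triples `(±(r + 1), ε, b)`, and one for each `b`, holding the
triples with first component `0` or `L`. -/
def col (l : ℕ) : (Fin 2 × Fin (l + 1)) ⊕ Fin 2 → Fin 4 → ℤ × ℤ × ℤ
  | .inl (e, r) => ![((r : ℤ) + 1, (e : ℤ), 0), (-((r : ℤ) + 1), (e : ℤ), 0),
      ((r : ℤ) + 1, (e : ℤ), 1), (-((r : ℤ) + 1), (e : ℤ), 1)]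
  | .inr b => ![(0, 0, (b : ℤ)), (0, 1, 1 - (b : ℤ)), ((l : ℤ) + 2, 0, (b : ℤ)),
      ((l : ℤ) + 2, 1, (b : ℤ))]

theorem exists_col_eq (l : ℕ) {r e b : ℤ} (hr : -((l : ℤ) + 2) < r) (hr' : r ≤ (l : ℤ) + 2)
    (he : e = 0 ∨ e = 1) (hb : b = 0 ∨ b = 1) : ∃ s j, col l s j = (r, e, b) := by
  have key : ∀ z : ℤ, z = 0 ∨ z = 1 → ∃ i : Fin 2, (i : ℤ) = z := by
    rintro z (rfl | rfl)
    exacts [⟨0, rfl⟩, ⟨1, rfl⟩]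
  rcases (by omega : r = 0 ∨ r = l + 2 ∨ (0 < r ∧ r < l + 2) ∨ (r < 0 ∧ -(l + 2) < r)) with
    rfl | rfl | h | h
  · rcases he with rfl | rfl
    · obtain ⟨i, rfl⟩ := key b hb
      exact ⟨.inr i, 0, rfl⟩
    · obtain ⟨i, hi⟩ := key (1 - b) (by omega)
      exact ⟨.inr i, 1, by simp [col, hi]⟩
  · obtain ⟨i, rfl⟩ := key b hb
    rcases he with rfl | rfl
    exacts [⟨.inr i, 2, rfl⟩, ⟨.inr i, 3, rfl⟩]
  · obtain ⟨i, rfl⟩ := key e he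
    have hk : (((r - 1).toNat : ℕ) : ℤ) + 1 = r := by omega
    rcases hb with rfl | rfl
    exacts [⟨.inl (i, ⟨(r - 1).toNat, by omega⟩), 0, by simp only [col]; simp only [hk]; rfl⟩,
      ⟨.inl (i, ⟨(r - 1).toNat, by omega⟩), 2, by simp only [col]; simp only [hk]; rfl⟩]
  · obtain ⟨i, rfl⟩ := key e he
    have hk : -((((-r - 1).toNat : ℕ) : ℤ) + 1) = r := by omega
    rcases hb with rfl | rfl
    exacts [⟨.inl (i, ⟨(-r - 1).toNat, by omega⟩), 1, by simp only [col]; simp only [hk]; rfl⟩,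
      ⟨.inl (i, ⟨(-r - 1).toNat, by omega⟩), 3, by simp only [col]; simp only [hk]; rfl⟩]

theorem rect_two_cyclic (l : ℕ) :
    ZeroSumRect (2 * (l + 2)) 3
      (Set.Icc (-(1 : ℕ) : ℤ) (1 : ℕ) ×ˢ (Set.univ : Set (ZMod 2 × ZMod (4 * (l + 2))))) := by
  have hmod : ∀ z : ℤ, ∃ b k : ℤ, (b = 0 ∨ b = 1) ∧ z = b + 2 * k :=
    fun z => ⟨z % 2, z / 2, by omega, by omega⟩
  refine ZeroSumRect.of_completeMapping
    (S := (Fin 2 × Fin (l + 1)) ⊕ Fin 2)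
    (fun s j => toTwo (l + 2) (colX (l + 2) (col l s j)))
    (fun s j => toTwo (l + 2) (colY (l + 2) (col l s j)))
    (fun d => ?_) (fun d => ?_) (fun d => ?_) (fun s => ?_) (fun s => ?_) (by simp; ring)
  · obtain ⟨e, t, he, h1, h2, rfl⟩ := exists_toTwo_eq (L := l + 2) (by omega) (-(l + 1)) d
    push_cast at h2
    by_cases ht : t ≤ l + 2
    · obtain ⟨s, j, h⟩ := exists_col_eq l (r := t) (e := e) (b := 0) (by omega) ht he (.inl rfl)
      exact ⟨s, j, by rw [h]; simp [colX]⟩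
    · obtain ⟨s, j, h⟩ := exists_col_eq l (r := t - 2 * (l + 2)) (e := e) (b := 1) (by omega)
        (by omega) he (.inr rfl)
      exact ⟨s, j, by rw [h]; simp [colX]⟩
  · obtain ⟨a, t, ha, h1, h2, rfl⟩ := exists_toTwo_eq (L := l + 2) (by omega) (-(l + 2)) d
    push_cast at h2
    have main : ∀ r e q : ℤ, -((l : ℤ) + 2) < r → r ≤ l + 2 → (e = 0 ∨ e = 1) →
        t - (r + e + 2 * kap (l + 2) r e * (l + 2)) = 4 * (l + 2) * q →
        ∃ s j, toTwo (l + 2) (colY (l + 2) (col l s j)) = toTwo (l + 2) (a, t) := by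
      intro r e q hr hr' he hq
      obtain ⟨b, k, hb, hk⟩ := hmod (a - kap (l + 2) r e)
      obtain ⟨s, j, h⟩ := exists_col_eq l hr hr' he hb
      refine ⟨s, j, ?_⟩
      rw [h]
      exact toTwo_eq k q (by simp only [colY]; linarith) (by simp only [colY]; push_cast; linarith)
    rcases (by omega : t = -(l + 2) ∨ (-(l + 2) < t ∧ t < l + 2) ∨ t = l + 2 ∨ t = l + 3 ∨
      (l + 3 < t ∧ t < 3 * (l + 2))) with h | h | h | h | h
    · exact main (l + 2) 0 (-1) (by omega) (by omega) (.inl rfl) (by simp [kap, h]; ring)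
    · refine main t 0 0 (by omega) (by omega) (.inl rfl) ?_
      have : t ≠ l + 2 := by omega
      simp [kap, this]
    · exact main (l + 1) 1 0 (by omega) (by omega) (.inr rfl) (by
        have : (l : ℤ) + 1 = l + 2 - 1 := by ring
        simp [kap, h, this])
    · exact main (l + 2) 1 0 (by omega) (by omega) (.inr rfl) (by simp [kap, h]; ring)
    · refine main (t - 1 - 2 * (l + 2)) 1 0 (by omega) (by omega) (.inr rfl) ?_
      have : ¬ (t - 1 - 2 * ((l : ℤ) + 2) = l + 2 - 1 ∨ t - 1 - 2 * ((l : ℤ) + 2) = l + 2) := by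
        omega
      simp only [kap, this, if_false, one_ne_zero]
      ring
  · obtain ⟨a, t, ha, h1, h2, rfl⟩ := exists_toTwo_eq (L := l + 2) (by omega) 0 d
    push_cast at h2
    obtain ⟨e, g, he, ht⟩ := hmod t
    obtain ⟨c, k, hc, hk⟩ := hmod (a - e)
    have hr : ∃ r q : ℤ, -((l : ℤ) + 2) < r ∧ r ≤ l + 2 ∧
        g - c * (l + 2) = r + 2 * (l + 2) * q := by
      have hg : 0 ≤ g ∧ g < 2 * (l + 2) := by omega
      rcases hc with rfl | rfl
      · by_cases hg' : g ≤ l + 2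
        · exact ⟨g, 0, by omega, by omega, by ring⟩
        · exact ⟨g - 2 * (l + 2), 1, by omega, by omega, by ring⟩
      · by_cases hg' : g = 0
        · exact ⟨l + 2, -1, by omega, by omega, by rw [hg']; ring⟩
        · exact ⟨g - (l + 2), 0, by omega, by omega, by ring⟩
    obtain ⟨r, q, hr, hr', hq⟩ := hr
    obtain ⟨b, k', hb, hk'⟩ := hmod (c - kap (l + 2) r e)
    obtain ⟨s, j, h⟩ := exists_col_eq l hr hr' he hb
    refine ⟨s, j, ?_⟩
    rw [h, ← map_add]
    refine toTwo_eq (k + k') (q + k') ?_ ?_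
    · simp only [colX, colY, Prod.fst_add]
      linarith
    · simp only [colX, colY, Prod.snd_add]
      push_cast
      linear_combination ht + 2 * hq + 2 * (l + 2 : ℤ) * hk'
  · rw [Fin.sum_univ_four]
    simp only [← map_add]
    rw [← map_zero (toTwo (l + 2))]
    rcases s with ⟨e, r⟩ | b
    · refine toTwo_eq (-2 * e) (-1) ?_ ?_
      · simp [col, colX]; ring
      · simp [col, colX]; ring
    · refine toTwo_eq (-1) (-1 - b) ?_ ?_
      · simp [col, colX]
      · simp [col, colX]; ring
  · simp only [← map_add]
    rcases s with ⟨e, r⟩ | b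
    · refine toTwo_eq (1 - e) 0 ?_ ?_
      · simp [col, colX, colY]; ring
      · simp [col, colX, colY]
    · have k1 : kap (l + 2) 0 0 = 0 := by
        have : (0 : ℤ) ≠ l + 2 := by omega
        simp [kap, this]
      have k2 : kap (l + 2) 0 1 = 1 := by
        have : ¬ ((0 : ℤ) = l + 2 - 1 ∨ (0 : ℤ) = l + 2) := by omega
        simp only [kap, this, if_false, one_ne_zero]
      have k3 : kap (l + 2) (l + 2) 0 = 1 := by simp [kap]
      have k4 : kap (l + 2) (l + 2) 1 = 0 := by simp [kap]
      refine toTwo_eq (b - 1) 0 ?_ ?_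
      · simp [col, colX, colY, k1, k2, k3, k4]; ring
      · simp [col, colX, colY, k1, k2, k3, k4]; ring

/-! ### Groups of order a power of two with at most one involution -/

/-- Doubling has fibres of size at most two, so that at most `2 ^ s` elements are killed by
`2 ^ s`. -/
theorem isAddCyclic_of_unique_involution {Q : Type*} [AddCommGroup Q] [Finite Q] {i : ℕ}
    (hcard : Nat.card Q = 2 ^ i)
    (h : ∀ u v : Q, u + u = 0 → v + v = 0 → u ≠ 0 → v ≠ 0 → u = v) : IsAddCyclic Q := by
  classical
  have := Fintype.ofFinite Q
  have hfib : ∀ a : Q, (Finset.univ.filter fun x : Q => x + x = a).card ≤ 2 := by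
    intro a
    by_contra! hlt
    obtain ⟨x, hx, y, hy, z, hz, hxy, hxz, hyz⟩ := Finset.two_lt_card.1 hlt
    simp only [Finset.mem_filter, Finset.mem_univ, true_and] at hx hy hz
    have := h (y - x) (z - x) (by rw [sub_add_sub_comm, hx, hy, sub_self])
      (by rw [sub_add_sub_comm, hx, hz, sub_self]) (sub_ne_zero.2 hxy.symm)
      (sub_ne_zero.2 hxz.symm)
    exact hyz (sub_left_injective this)
  have htor : ∀ s : ℕ, (Finset.univ.filter fun x : Q => 2 ^ s • x = 0).card ≤ 2 ^ s := by
    intro s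
    induction s with
    | zero =>
      simp only [pow_zero, one_smul]
      exact (Finset.card_le_one.2 (by simp))
    | succ s ih =>
      have h1 := Finset.card_le_mul_card_image (f := fun x : Q => x + x)
        ({x : Q | 2 ^ (s + 1) • x = 0} : Finset Q) 2 (fun a _ =>
          (Finset.card_le_card (Finset.filter_subset_filter _ (Finset.subset_univ _))).trans
            (hfib a))
      have h2 : (({x : Q | 2 ^ (s + 1) • x = 0} : Finset Q).image fun x : Q => x + x) ⊆
          ({x : Q | 2 ^ s • x = 0} : Finset Q) := by
        intro y hy
        simp only [Finset.mem_image, Finset.mem_filter, Finset.mem_univ, true_and] at hy ⊢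
        obtain ⟨x, hx, rfl⟩ := hy
        rw [← two_nsmul, smul_smul, ← pow_succ, hx]
      have h3 := Finset.card_le_card h2
      have h4 : 2 ^ (s + 1) = 2 * 2 ^ s := by ring
      omega
  refine isAddCyclic_of_card_nsmul_eq_zero_le fun n hn => ?_
  obtain ⟨t, -, ht⟩ := (Nat.dvd_prime_pow Nat.prime_two).1 (Nat.gcd_dvd_right n (2 ^ i))
  have h1 : (2 ^ t : ℕ) ≤ n := ht ▸ Nat.le_of_dvd hn (Nat.gcd_dvd_left _ _)
  refine le_trans (Finset.card_le_card fun a ha => ?_) ((htor t).trans h1)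
  simp only [Finset.mem_filter, Finset.mem_univ, true_and] at ha ⊢
  rw [← ht]
  refine addOrderOf_dvd_iff_nsmul_eq_zero.1 (Nat.dvd_gcd (addOrderOf_dvd_of_nsmul_eq_zero ha) ?_)
  rw [← hcard]
  exact addOrderOf_dvd_natCard a

/-! ### The model groups -/

/-- `ZMod (2 * k + 3) × Δ` is covered by zero-sum arrays with `2 * k + 3` rows and four columns,
the number of arrays being the one that makes this covering a bijection. -/
def Good (k : ℕ) (Δ : Type*) [AddCommGroup Δ] : Prop :=
  ∃ c, c * 4 = Nat.card Δ ∧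
    ZeroSumRect c (2 * k + 3) (Set.univ : Set (ZMod (2 * k + 3) × Δ))

theorem Good.of_surjective {k : ℕ} {Δ Δ' : Type*} [AddCommGroup Δ] [AddCommGroup Δ']
    (h : Good k Δ) (f : Δ →+ Δ') (hf : Function.Surjective f)
    (hcard : Nat.card Δ = Nat.card Δ') : Good k Δ' := by
  obtain ⟨c, hc, hx⟩ := h
  refine ⟨c, hc.trans hcard, hx.map ((AddMonoidHom.id _).prodMap f) ?_⟩
  rintro ⟨t, d⟩ -
  obtain ⟨d', rfl⟩ := hf d
  exact ⟨(t, d'), trivial, rfl⟩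

theorem Good.lift {k : ℕ} {Δ Q : Type*} [AddCommGroup Δ] [AddCommGroup Q] (h : Good k Q)
    (π : Δ →+ Q) (hπ : Function.Surjective π) (ι : ZMod 2 × ZMod 2 →+ Δ)
    (hι : ∀ g, π g = 0 → ∃ h, ι h = g) (hcard : Nat.card Q * 4 = Nat.card Δ) : Good k Δ := by
  obtain ⟨c, hc, hx⟩ := h
  refine ⟨c * 4, by rw [hc, hcard], hx.lift ((AddMonoidHom.id _).prodMap π) ?_
    ((AddMonoidHom.inr _ _).comp ι) ?_⟩
  · rintro ⟨t, q⟩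
    obtain ⟨d, rfl⟩ := hπ q
    exact ⟨(t, d), rfl⟩
  · rintro ⟨t, d⟩ h
    obtain ⟨rfl, h⟩ := Prod.ext_iff.1 h
    obtain ⟨w, rfl⟩ := hι d h
    exact ⟨w, rfl⟩

theorem Good.of_int {k c n : ℕ} {Δ : Type*} [AddCommGroup Δ] [Finite Δ] {u v : Δ}
    (hu : u + u = 0) (hv : v + v = 0) (hu0 : u ≠ 0) (hv0 : v ≠ 0) (huv : u ≠ v)
    (hc : c * 4 = Nat.card Δ) (hn : n ≤ k + 1)
    (h : ZeroSumRect c (2 * n + 1) (Set.Icc (-n : ℤ) n ×ˢ (Set.univ : Set Δ))) : Good k Δ := by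
  obtain ⟨m, hm⟩ := Nat.exists_eq_add_of_le hn
  have hk : 2 * (n + m) + 1 = 2 * k + 3 := by omega
  exact ⟨c, hc, hk ▸ h.to_zmod hu hv hu0 hv0 huv hc m⟩

theorem good_two_cyclic (k : ℕ) {i N : ℕ} (hN : N = 2 ^ (i + 1)) : Good k (ZMod 2 × ZMod N) := by
  rcases i with _ | _ | i
  · obtain rfl : N = 2 := by simpa using hN
    rcases k with _ | k
    · exact ⟨1, by simp, rect_klein_three⟩
    · exact .of_int (u := (1, 0)) (v := (0, 1)) (n := 2) (by decide) (by decide) (by decide)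
        (by decide) (by decide) (by simp) (by omega) rect_klein_five
  · obtain rfl : N = 4 := by simpa using hN
    exact .of_int (u := (1, 0)) (v := (0, 2)) (n := 1) (by decide) (by decide) (by decide)
      (by decide) (by decide) (by simp) (by omega) rect_two_four
  · obtain ⟨l, hl⟩ : ∃ l, 2 ^ (i + 1) = l + 2 :=
      ⟨2 ^ (i + 1) - 2, by have := Nat.one_le_two_pow (n := i); rw [pow_succ]; omega⟩
    obtain rfl : N = 4 * (l + 2) := by rw [hN, ← hl]; ring
    have h2 : ((2 * (l + 2) : ℕ) : ZMod (4 * (l + 2))) ≠ 0 := by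
      rw [Ne, ZMod.natCast_eq_zero_iff]
      intro h
      have := Nat.le_of_dvd (by omega) h
      omega
    have h4 : ((2 * (l + 2) : ℕ) : ZMod (4 * (l + 2))) + ((2 * (l + 2) : ℕ) : ZMod _) = 0 := by
      rw [← Nat.cast_add, ZMod.natCast_eq_zero_iff]
      exact ⟨1, by ring⟩
    have h1 : (1 : ZMod 2) + 1 = 0 := by decide
    exact .of_int (u := (1, 0)) (v := (0, ((2 * (l + 2) : ℕ) : ZMod (4 * (l + 2))))) (n := 1)
      (by simp [h1]) (by rw [Prod.mk_add_mk, h4]; rfl) (by simp)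
      (fun h => h2 (Prod.ext_iff.1 h).2) (by simp) (by simp; ring)
      (by omega) (rect_two_cyclic l)

/-- For order at least `16`, the arrays are lifted from `ZMod 2 × ZMod (N / 2)`. -/
theorem good_two_two_cyclic (k : ℕ) {i N : ℕ} (hN : N = 2 ^ (i + 1)) :
    Good k (ZMod 2 × ZMod 2 × ZMod N) := by
  rcases i with _ | i
  · obtain rfl : N = 2 := by simpa using hN
    rcases k with _ | k
    · exact ⟨2, by simp, rect_elementary_three⟩
    · exact .of_int (u := (1, 0, 0)) (v := (0, 1, 0)) (n := 2) (by decide) (by decide)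
        (by decide) (by decide) (by decide) (by simp) (by omega) rect_elementary_five
  · obtain ⟨M, hM⟩ : ∃ M, M = 2 ^ (i + 1) := ⟨_, rfl⟩
    obtain rfl : N = 2 * M := by rw [hN, hM]; ring
    have h1 : (1 : ZMod 2) + 1 = 0 := by decide
    have h2 : (M : ZMod (2 * M)) + M = 0 := by
      rw [← Nat.cast_add, ZMod.natCast_eq_zero_iff]
      exact ⟨1, by ring⟩
    refine (good_two_cyclic k hM).lift
      (((AddMonoidHom.id (ZMod 2)).prodMap
        (ZMod.castHom (Dvd.intro_left 2 rfl) (ZMod M)).toAddMonoidHom).comp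
          (AddMonoidHom.snd _ _)) ?_
      (klein (1, 0, 0) (0, 0, (M : ZMod (2 * M))) (by simp [h1]) (by simp [h2])) ?_ ?_
    · rintro ⟨b, m⟩
      obtain ⟨z, rfl⟩ := ZMod.intCast_surjective m
      exact ⟨(0, b, (z : ZMod (2 * M))), by simp⟩
    · rintro ⟨a, b, m⟩ h
      obtain ⟨a, rfl⟩ := ZMod.intCast_surjective a
      obtain ⟨z, rfl⟩ := ZMod.intCast_surjective m
      obtain ⟨rfl, hz⟩ : b = 0 ∧ (z : ZMod M) = 0 := by simpa using h
      obtain ⟨w, rfl⟩ := (ZMod.intCast_zmod_eq_zero_iff_dvd _ _).1 hz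
      refine ⟨((a : ZMod 2), (w : ZMod 2)), ?_⟩
      rw [klein_intCast]
      simp [mul_comm]
    · simp
      ring

/-! ### Induction on the order -/

/-- The case in which `Δ` modulo `V = {0, u, v, u + v}` is cyclic of order `N = 2 ^ i`, generated by
the image of `g`. If `N • g = 0`, then `Δ` is `V × ZMod N`. Otherwise some `u'` in `V` generates `V`
together with `N • g`, and `Δ` is `ZMod 2 × ZMod (2 * N)`, with generators `u'` and `g`. -/
theorem good_of_cyclic_quotient (k : ℕ) {Δ : Type*} [AddCommGroup Δ] [Finite Δ] {i : ℕ} {u v : Δ}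
    (hu : u + u = 0) (hv : v + v = 0)
    (hcard : 2 ^ i * 4 = Nat.card Δ) (g : Δ) (hN : ∃ m n : ℤ, 2 ^ i • g = m • u + n • v)
    (hg : ∀ d, ∃ m n l : ℤ, d = m • u + n • v + l • g) : Good k Δ := by
  have hu2 : 2 • u = 0 := by rw [two_nsmul, hu]
  have hv2 : 2 • v = 0 := by rw [two_nsmul, hv]
  by_cases hw : 2 ^ i • g = 0
  · rcases i with _ | i
    · refine (good_two_cyclic k (i := 0) (N := 2) rfl).of_surjective (klein u v hu hv)
        (fun d => ?_) (by rw [← hcard]; simp)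
      obtain ⟨m, n, l, rfl⟩ := hg d
      have hg0 : g = 0 := by simpa using hw
      exact ⟨(m, n), by rw [klein_intCast, hg0, smul_zero, add_zero]⟩
    · refine (good_two_two_cyclic k (i := i) rfl).of_surjective
        ((zmodHom 2 u hu2).coprod ((zmodHom 2 v hv2).coprod (zmodHom _ g hw)))
        (fun d => ?_) (by rw [← hcard]; simp; ring)
      obtain ⟨m, n, l, rfl⟩ := hg d
      exact ⟨(m, n, l), by simp only [AddMonoidHom.coprod_apply, zmodHom_intCast]; abel⟩
  · obtain ⟨u', hu', hspan⟩ : ∃ u' : Δ, u' + u' = 0 ∧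
        ∀ m n : ℤ, ∃ a b : ℤ, m • u + n • v = a • u' + b • (2 ^ i • g) := by
      obtain ⟨⟨a, b⟩, hab⟩ : ∃ h, klein u v hu hv h = 2 ^ i • g := by
        obtain ⟨m, n, h⟩ := hN
        exact ⟨(m, n), by rw [klein_intCast, h]⟩
      have h2 : ∀ a : ZMod 2, a = 0 ∨ a = 1 := by decide
      rcases h2 a with rfl | rfl <;> rcases h2 b with rfl | rfl <;>
        simp only [klein, AddMonoidHom.coprod_apply, zmodHom_one, map_zero, zero_add,
          add_zero] at hab
      · exact absurd hab.symm hw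
      · exact ⟨u, hu, fun m n => ⟨m, n, by rw [hab]⟩⟩
      · exact ⟨v, hv, fun m n => ⟨n, m, by rw [hab, add_comm]⟩⟩
      · exact ⟨u, hu, fun m n => ⟨m - n, n, by rw [← hab, smul_add, sub_smul]; abel⟩⟩
    have hg2 : 2 ^ (i + 1) • g = 0 := by
      obtain ⟨m, n, h⟩ := hN
      rw [pow_succ', mul_smul, h, smul_add, smul_comm, hu2, smul_comm, hv2]
      simp
    refine (good_two_cyclic k (i := i) rfl).of_surjective
      ((zmodHom 2 u' (by rw [two_nsmul, hu'])).coprod (zmodHom _ g hg2))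
      (fun d => ?_) (by rw [← hcard]; simp; ring)
    obtain ⟨m, n, l, rfl⟩ := hg d
    obtain ⟨a, b, h⟩ := hspan m n
    refine ⟨(a, ((b * 2 ^ i + l : ℤ) : ZMod _)), ?_⟩
    rw [h, AddMonoidHom.coprod_apply, zmodHom_intCast, zmodHom_intCast, add_smul, mul_smul,
      add_assoc]
    congr 3
    exact_mod_cast natCast_zsmul g (2 ^ i)

/-- Let `V = {0, u, v, u + v}`. If `Δ ⧸ V` has two involutions, its arrays lift to `Δ`; otherwise
`Δ ⧸ V` is cyclic and `Δ` is one of the model groups. -/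
theorem good_of_two_involutions (k n : ℕ) : ∀ {Δ : Type u} [AddCommGroup Δ] [Finite Δ],
    Nat.card Δ = 2 ^ n → ∀ u v : Δ, u + u = 0 → v + v = 0 → u ≠ 0 → v ≠ 0 → u ≠ v →
    Good k Δ := by
  induction n using Nat.strong_induction_on with
  | _ n ih =>
    intro Δ _ _ hcard u v hu hv hu0 hv0 huv
    have hι : Function.Injective (klein u v hu hv) := klein_injective hu hv hu0 hv0 huv
    have hQ : Nat.card (Δ ⧸ (klein u v hu hv).range) * 4 = Nat.card Δ := by
      rw [AddSubgroup.card_eq_card_quotient_mul_card_addSubgroup (klein u v hu hv).range,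
        ← Nat.card_congr (AddMonoidHom.ofInjective hι).toEquiv]
      simp
    obtain ⟨i, hin, hi⟩ := (Nat.dvd_prime_pow Nat.prime_two).1
      (hcard ▸ Dvd.intro _ hQ : Nat.card (Δ ⧸ (klein u v hu hv).range) ∣ 2 ^ n)
    have hker : ∀ d : Δ, (QuotientAddGroup.mk' (klein u v hu hv).range) d = 0 →
        ∃ h, klein u v hu hv h = d := fun d hd => (QuotientAddGroup.eq_zero_iff d).1 hd
    by_cases H : ∀ a b : Δ ⧸ (klein u v hu hv).range, a + a = 0 → b + b = 0 → a ≠ 0 → b ≠ 0 →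
        a = b
    · have := isAddCyclic_of_unique_involution hi H
      obtain ⟨q, hq⟩ := IsAddCyclic.exists_zsmul_surjective (G := Δ ⧸ (klein u v hu hv).range)
      obtain ⟨g, rfl⟩ := QuotientAddGroup.mk'_surjective _ q
      refine good_of_cyclic_quotient k (i := i) hu hv (by rw [← hi, hQ]) g ?_
        fun d => ?_
      · obtain ⟨h, h'⟩ := hker (2 ^ i • g) (by rw [map_nsmul, ← hi, card_nsmul_eq_zero'])
        rw [← h']
        exact exists_klein_eq hu hv h
      · obtain ⟨l, hl⟩ := hq (QuotientAddGroup.mk' _ d)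
        obtain ⟨h, h'⟩ := hker (d - l • g) (by
          rw [map_sub, map_zsmul, sub_eq_zero]; exact hl.symm)
        obtain ⟨m, n, hmn⟩ := exists_klein_eq hu hv h
        exact ⟨m, n, l, by rw [← hmn, h', sub_add_cancel]⟩
    · push Not at H
      obtain ⟨a, b, ha, hb, ha0, hb0, hab⟩ := H
      have hlt : i < n := by
        refine lt_of_le_of_ne hin ?_
        rintro rfl
        rw [hcard, hi] at hQ
        have := Nat.one_le_two_pow (n := i)
        omega
      exact (ih i hlt hi a b ha hb ha0 hb0 hab).lift (QuotientAddGroup.mk' _)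
        (QuotientAddGroup.mk'_surjective _) (klein u v hu hv) hker hQ

/-! ### The magic rectangle set -/

theorem stmt11 {Γ Δ : Type*} [AddCommGroup Γ] [Fintype Γ] [AddCommGroup Δ] [Fintype Δ]
    (p : ℕ) (hp : p.Prime) (hp2 : 2 < p) (e : Γ ≃+ ZMod p × Δ)
    (α : ℕ) (hα : 2 ≤ α) (hcard : Fintype.card Δ = 2 ^ α)
    (hinv : 1 < Nat.card {g : Δ // g ≠ 0 ∧ g + g = 0}) :
    IsMagicRectangleSet Γ p 4 (2 ^ (α - 2)) := by
  obtain ⟨⟨u, hu0, hu⟩, ⟨v, hv0, hv⟩, huv⟩ :=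
    (Finite.one_lt_card_iff_nontrivial.1 hinv).exists_pair_ne
  obtain ⟨k, rfl⟩ : ∃ k, p = 2 * k + 3 := by
    obtain ⟨m, hm⟩ := hp.odd_of_ne_two hp2.ne'
    exact ⟨m - 1, by omega⟩
  have hcard' : Nat.card Δ = 2 ^ α := by rw [Nat.card_eq_fintype_card, hcard]
  obtain ⟨c, hc, x, hA, hr, hcol⟩ := good_of_two_involutions k α hcard' u v hu hv hu0 hv0
    (fun h => huv (Subtype.ext h))
  obtain ⟨a, rfl⟩ := Nat.exists_eq_add_of_le hα
  obtain rfl : c = 2 ^ (2 + a - 2) := by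
    rw [hcard', pow_add] at hc
    rw [Nat.add_sub_cancel_left]
    omega
  refine ⟨fun q => e.symm (x q.1 q.2.1 q.2.2), 0, 0, ?_, fun s i => ?_, fun s j => ?_⟩
  · rw [Fintype.bijective_iff_surjective_and_card]
    constructor
    · intro g
      obtain ⟨s, i, j, h⟩ := hA (e g) trivial
      exact ⟨(s, i, j), by simp [h]⟩
    · have h1 : Fintype.card Γ = (2 * k + 3) * 2 ^ (2 + a) := by
        rw [← Nat.card_eq_fintype_card, Nat.card_congr e.toEquiv, Nat.card_prod, hcard',
          Nat.card_zmod]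
      rw [h1]
      simp
      ring
  · rw [← map_sum, hr, map_zero]
  · rw [← map_sum, hcol, map_zero]
end

section
/- Let p > 3 be a prime and let Γ ≅ ℤ_p ⊕ Δ, where Δ is a finite Abelian group of order 2^α with α ≥ 2 and Δ has more than one involution. Then there exists a Γ-magic rectangle set MRS_Γ(p, 2·exp(Δ); |Δ|/(2·exp(Δ))). -/
/-! ### Assembling an array from permutations -/

/-- Passage from arbitrary finite index types (and an isomorphic group) to the `Fin`-indexed
definition, for arrays all of whose row and column sums vanish. -/
lemma isMagicRectangleSet_of_types {Γ G S R K : Type*} [AddCommGroup Γ] [Fintype Γ]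
    [AddCommGroup G] [Fintype S] [Fintype R] [Fintype K] (e : Γ ≃+ G) (x : S → R → K → G)
    (hbij : Function.Bijective fun q : S × R × K => x q.1 q.2.1 q.2.2)
    (hrow : ∀ s r, ∑ k, x s r k = 0) (hcol : ∀ s k, ∑ r, x s r k = 0)
    {a b c : ℕ} (hS : Fintype.card S = c) (hR : Fintype.card R = a) (hK : Fintype.card K = b) :
    IsMagicRectangleSet Γ a b c := by
  let eS := (Fintype.equivFinOfCardEq hS).symm
  let eR := (Fintype.equivFinOfCardEq hR).symm
  let eK := (Fintype.equivFinOfCardEq hK).symm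
  refine ⟨fun q => e.symm (x (eS q.1) (eR q.2.1) (eK q.2.2)), 0, 0, ?_, ?_, ?_⟩
  · exact e.symm.bijective.comp (hbij.comp
      (Equiv.prodCongr eS (Equiv.prodCongr eR eK)).bijective)
  · intro s i
    rw [← map_sum, Equiv.sum_comp eK (fun k => x (eS s) (eR i) k), hrow, map_zero]
  · intro s j
    rw [← map_sum, Equiv.sum_comp eR (fun r => x (eS s) r (eK j)), hcol, map_zero]

/-- The `2h + 1` residues modulo `p = 2h + 1`, listed as `0` and `±(j + 1)` for `j < h`; the
Boolean `true` stands for the sign `-`. -/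
def residueLabel (p h : ℕ) : Option (Fin h × Bool) → ZMod p
  | none => 0
  | some (j, false) => ((j + 1 : ℕ) : ZMod p)
  | some (j, true) => -((j + 1 : ℕ) : ZMod p)

lemma residueLabel_injective {p h : ℕ} (hp : p = 2 * h + 1) :
    Function.Injective (residueLabel p h) := by
  have h0 : ∀ j : Fin h, ((j + 1 : ℕ) : ZMod p) ≠ 0 := by
    intro j hj
    rw [ZMod.natCast_eq_zero_iff] at hj
    have := Nat.le_of_dvd (by omega) hj
    omega
  have h1 : ∀ i j : Fin h, ((i + 1 : ℕ) : ZMod p) ≠ -((j + 1 : ℕ) : ZMod p) := by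
    intro i j hij
    rw [eq_neg_iff_add_eq_zero, ← Nat.cast_add, ZMod.natCast_eq_zero_iff] at hij
    have := Nat.le_of_dvd (by omega) hij
    omega
  have h2 : ∀ i j : Fin h, ((i + 1 : ℕ) : ZMod p) = ((j + 1 : ℕ) : ZMod p) → i = j := by
    intro i j hij
    rw [ZMod.natCast_eq_natCast_iff] at hij
    have := Nat.ModEq.eq_of_lt_of_lt hij (by omega) (by omega)
    ext; omega
  rintro (_ | ⟨i, (_ | _)⟩) (_ | ⟨j, (_ | _)⟩) hij <;> simp only [residueLabel] at hij
  · rfl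
  · exact absurd hij.symm (h0 _)
  · exact absurd (neg_eq_zero.1 hij.symm) (h0 _)
  · exact absurd hij (h0 _)
  · rw [h2 _ _ hij]
  · exact absurd hij (h1 _ _)
  · exact absurd (neg_eq_zero.1 hij) (h0 _)
  · exact absurd hij.symm (h1 _ _)
  · rw [h2 _ _ (neg_injective hij)]

/-- The assembly of the array. Column `q` of block `s` carries an element `col (s, q)` of `G`, and
contains, for each residue `l` modulo `p`, one entry with first component `l`; its second component
is the value of a permutation of `G` depending on `l`. These permutations are the identity for
`l = 0` and `φ j false`, `φ j true` for `l = ±(j + 1)`. The function `f j` says in which columns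
the entries with labels `±(j + 1)` are interchanged between the two rows they occupy. -/
lemma magic_assembly {Γ G S K : Type*} [AddCommGroup Γ] [Fintype Γ]
    [AddCommGroup G] [Fintype G] [Fintype S] [Fintype K] {p h m : ℕ} (hp : p = 2 * h + 1)
    (e : Γ ≃+ ZMod p × G) (col : S × K → G) (hcol : Function.Bijective col)
    (φ : Fin h → Bool → G → G) (hφ : ∀ j s, Function.Injective (φ j s))
    (f : Fin h → S → K → Bool)
    (hsum : ∀ g, g + ∑ j, (φ j false g + φ j true g) = 0)
    (hblock : ∀ s, ∑ k, col (s, k) = 0)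
    (hf : ∀ j s (r : ZMod p), ∑ k, (if f j s k then -r else r) = 0)
    (hrow : ∀ j s b, ∑ k, φ j (xor b (f j s k)) (col (s, k)) = 0)
    {c : ℕ} (hS : Fintype.card S = c) (hK : Fintype.card K = m) :
    IsMagicRectangleSet Γ p m c := by
  have : NeZero p := ⟨by omega⟩
  let Φ : Option (Fin h × Bool) → G → G := fun r => r.elim id fun q => φ q.1 q.2
  have hΦ : ∀ r, Function.Injective (Φ r) := by
    rintro (_ | ⟨j, b⟩)
    · exact Function.injective_id
    · exact hφ j b
  let F : S → K → Option (Fin h × Bool) → Option (Fin h × Bool) :=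
    fun s k => Option.map fun q => (q.1, xor q.2 (f q.1 s k))
  have hF : ∀ s k, Function.Involutive (F s k) := by
    rintro s k (_ | ⟨j, b⟩)
    · rfl
    · simp [F]
  have hR : Fintype.card (Option (Fin h × Bool)) = p := by
    simp; omega
  refine isMagicRectangleSet_of_types (S := S) (R := Option (Fin h × Bool)) (K := K) e
    (fun s r k => (residueLabel p h (F s k r), Φ (F s k r) (col (s, k)))) ?_ ?_ ?_ hS hR hK
  · rw [Fintype.bijective_iff_injective_and_card]
    constructor
    · rintro ⟨s, r, k⟩ ⟨s', r', k'⟩ heq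
      simp only [Prod.mk.injEq] at heq
      obtain ⟨h1, h2⟩ := heq
      have h3 := residueLabel_injective hp h1
      rw [h3] at h2
      have h4 := hcol.1 (hΦ _ h2)
      simp only [Prod.mk.injEq] at h4
      obtain ⟨rfl, rfl⟩ := h4
      rw [(hF s k).injective h3]
    · have := Fintype.card_congr (Equiv.ofBijective col hcol)
      rw [Fintype.card_prod] at this
      rw [Fintype.card_prod, Fintype.card_prod, Fintype.card_prod, hR, ZMod.card, ← this]
      ring
  · rintro s (_ | ⟨j, b⟩)
    · rw [Prod.ext_iff, Prod.fst_sum, Prod.snd_sum]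
      exact ⟨by simp [F, residueLabel], by simpa [F, Φ] using hblock s⟩
    · rw [Prod.ext_iff, Prod.fst_sum, Prod.snd_sum]
      refine ⟨?_, hrow j s b⟩
      rw [Prod.fst_zero, ← hf j s (residueLabel p h (some (j, b)))]
      refine Finset.sum_congr rfl fun k _ => ?_
      cases hb : b <;> cases hk : f j s k <;> simp [F, hk, residueLabel]
  · intro s k
    have h1 := Equiv.sum_comp (hF s k).toPerm
      (fun r => (residueLabel p h r, Φ r (col (s, k))))
    refine h1.trans ?_
    rw [Fintype.sum_option, Fintype.sum_prod_type, Prod.ext_iff]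
    have h2 := hsum (col (s, k))
    constructor
    · simp [residueLabel, Prod.fst_sum]
    · simp only [Fintype.sum_bool, Prod.snd_add, Prod.snd_sum, Prod.snd_zero]
      rw [← h2]
      simp [Φ, add_comm]

/-! ### Even cyclic groups and the mixing permutation -/

/-- The features of a cyclic group of even order that the constructions use: a parity `π`, an odd
element `o`, and a unique involution `t`. -/
structure EvenCyclicData (C : Type*) [AddCommGroup C] where
  /-- the parity homomorphism -/
  π : C →+ ZMod 2
  /-- an element of odd parity -/
  o : C
  /-- the involution -/
  t : C
  π_o : π o = 1
  t_ne : t ≠ 0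
  t_add : t + t = 0
  eq_of_add : ∀ u, u + u = 0 → u = 0 ∨ u = t

lemma evenCyclicData_zmod {n : ℕ} [NeZero n] (hn : 2 ∣ n) :
    Nonempty (EvenCyclicData (ZMod n)) := by
  obtain ⟨k, rfl⟩ := hn
  have hk : k ≠ 0 := by rintro rfl; exact NeZero.ne (2 * 0) rfl
  refine ⟨⟨(ZMod.castHom (dvd_mul_right 2 k) (ZMod 2)).toAddMonoidHom, 1, (k : ℕ), ?_, ?_, ?_, ?_⟩⟩
  · exact map_one (ZMod.castHom (dvd_mul_right 2 k) (ZMod 2))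
  · rw [Ne, ZMod.natCast_eq_zero_iff]
    intro h
    have := Nat.le_of_dvd (by omega) h
    omega
  · rw [← Nat.cast_add, ZMod.natCast_eq_zero_iff, two_mul]
  · intro u hu
    obtain ⟨v, rfl⟩ := ZMod.natCast_zmod_surjective u
    rw [← Nat.cast_add, ZMod.natCast_eq_zero_iff, ← two_mul] at hu
    have hu := Nat.dvd_of_mul_dvd_mul_left (by norm_num) hu
    obtain ⟨w, rfl⟩ := hu
    rcases Nat.even_or_odd' w with ⟨w, rfl | rfl⟩
    · left
      rw [ZMod.natCast_eq_zero_iff]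
      exact ⟨w, by ring⟩
    · right
      rw [ZMod.natCast_eq_natCast_iff]
      have : k * (2 * w + 1) = k + (2 * k) * w := by ring
      rw [this]
      simp [Nat.ModEq]

/-- Transport of the data along an isomorphism. -/
def EvenCyclicData.congr {C D : Type*} [AddCommGroup C] [AddCommGroup D] (d : EvenCyclicData C)
    (e : D ≃+ C) : EvenCyclicData D where
  π := d.π.comp e.toAddMonoidHom
  o := e.symm d.o
  t := e.symm d.t
  π_o := by simp [d.π_o]
  t_ne := by simp [d.t_ne]
  t_add := by rw [← map_add, d.t_add, map_zero]
  eq_of_add u hu := by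
    rcases d.eq_of_add (e u) (by rw [← map_add, hu, map_zero]) with h | h
    · left; simpa using h
    · right; rw [← h]; simp

/-- `ε` selects one element out of each pair `{b, b + t}`, where `t` is an involution. -/
structure IsHalving {B : Type*} [AddCommGroup B] (t : B) (ε : B → Bool) : Prop where
  t_ne : t ≠ 0
  t_add : t + t = 0
  flip : ∀ b, ε (b + t) = !ε b

lemma exists_isHalving {B : Type*} [AddCommGroup B] [Finite B] {t : B} (ht : t ≠ 0)
    (htt : t + t = 0) : ∃ ε, IsHalving t ε := by
  have := Fintype.ofFinite B
  -- within each pair, compare the positions in some enumeration of `B`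
  let i := Fintype.equivFin B
  refine ⟨fun b => decide (i b < i (b + t)), ht, htt, fun b => ?_⟩
  have h1 : b + t + t = b := by rw [add_assoc, htt, add_zero]
  have h2 : i b ≠ i (b + t) := fun h => ht (by simpa using i.injective h)
  simp only [h1]
  rcases lt_or_gt_of_ne h2 with h | h
  · simp [h, h.le]
  · simp [h, h.le]

section Mixing

variable {C B : Type*} [AddCommGroup C] [AddCommGroup B]

lemma EvenCyclicData.bool_eq (d : EvenCyclicData C) {z z' : C} {b b' : Bool}
    (h : z + z + cond b d.o 0 = z' + z' + cond b' d.o 0) : b = b' := by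
  have h1 := congrArg d.π h
  have h2 : ∀ x : ZMod 2, x + x = 0 := by decide
  cases b <;> cases b' <;> simp [d.π_o, h2] at h1 ⊢

lemma EvenCyclicData.eq_of_halving (d : EvenCyclicData C) {χ : C → Bool} (hχ : IsHalving d.t χ)
    {z z' w : C} (h : z + z + w = z' + z' + w) {v : C} (h' : χ (z + v) = χ (z' + v)) :
    z = z' := by
  have h1 : (z - z') + (z - z') = 0 := by
    have := add_right_cancel h
    rw [show (z - z') + (z - z') = (z + z) - (z' + z') by abel, this, sub_self]
  rcases d.eq_of_add _ h1 with h2 | h2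
  · exact sub_eq_zero.1 h2
  · have : z + v = (z' + v) + d.t := by rw [← h2]; abel
    rw [this, hχ.flip] at h'
    exact absurd h' (by simp)

/-- The permutation `(z, x) ↦ (z + ε(x), x + χ(z + ε(x)) t)` of `C × B`, with
`ε : B → {0, 1}` and `χ : C → {0, 1}`. -/
def mixing (d : EvenCyclicData C) (χ : C → Bool) (t : B) (ε : B → Bool) (g : C × B) : C × B :=
  (g.1 + cond (ε g.2) d.o 0, g.2 + cond (χ (g.1 + cond (ε g.2) d.o 0)) t 0)

lemma mixing_injective (d : EvenCyclicData C) (χ : C → Bool) (t : B) (ε : B → Bool) :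
    Function.Injective (mixing d χ t ε) := by
  rintro ⟨z, x⟩ ⟨z', x'⟩ h
  simp only [mixing, Prod.mk.injEq] at h
  obtain ⟨h1, h2⟩ := h
  rw [h1] at h2
  have h3 := add_right_cancel h2
  subst h3
  rw [add_right_cancel h1]

/-- Adding the first coordinate to the mixing permutation gives a permutation again: doubling
loses one bit of `z`, which has been stored in the choice between `x` and `x + t`, while the
choice within `{x, x + t}` is recovered from the parity of the first coordinate. -/
lemma mixing_add_injective (d : EvenCyclicData C) {χ : C → Bool} (hχ : IsHalving d.t χ)
    {t : B} {ε : B → Bool} (hε : IsHalving t ε) :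
    Function.Injective fun g => mixing d χ t ε g + (g.1, 0) := by
  rintro ⟨z, x⟩ ⟨z', x'⟩ h
  simp only [mixing, Prod.mk_add_mk, Prod.mk.injEq, add_zero] at h
  obtain ⟨h1, h2⟩ := h
  rw [add_right_comm, add_right_comm z'] at h1
  have h3 := d.bool_eq h1
  rw [h3] at h1 h2
  have h4 : χ (z + cond (ε x') d.o 0) = χ (z' + cond (ε x') d.o 0) := by
    cases ha : χ (z + cond (ε x') d.o 0) <;> cases hb : χ (z' + cond (ε x') d.o 0) <;>
      simp only [ha, hb, cond_true, cond_false, add_zero] at h2 ⊢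
    · rw [h2, hε.flip] at h3; simp at h3
    · rw [← h2, hε.flip] at h3; simp at h3
  rw [d.eq_of_halving hχ h1 h4] at h2
  rw [d.eq_of_halving hχ h1 h4, add_right_cancel h2]

end Mixing

/-! ### Complete mappings of Abelian `2`-groups -/

/-- A complete mapping: a permutation `θ` such that `b ↦ b + θ b` is a permutation too
(for a finite group injectivity suffices). -/
def HasCompleteMapping (B : Type*) [AddCommGroup B] : Prop :=
  ∃ θ : B → B, Function.Injective θ ∧ Function.Injective fun b => b + θ b

/-- A split mapping: two permutations `β false`, `β true` and a subset `ε` of `B` such that, for `b`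
in `ε` as well as for `b` in its complement, the values `b + β k b` are pairwise distinct for
different pairs `(b, k)`. It exists in cyclic groups of even order, and in groups with an involution
and a complete mapping. -/
def HasSplitMapping (B : Type*) [AddCommGroup B] : Prop :=
  ∃ (ε : B → Bool) (β : Bool → B → B), (∀ k, Function.Injective (β k)) ∧
    ∀ b b' k k', ε b = ε b' → b + β k b = b' + β k' b' → b = b' ∧ k = k'

lemma HasCompleteMapping.hasSplitMapping {B : Type*} [AddCommGroup B] {t : B} {e : B → Bool}
    (he : IsHalving t e) (h : HasCompleteMapping B) : HasSplitMapping B := by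
  obtain ⟨θ, h1, h2⟩ := h
  refine ⟨fun b => e (b + θ b), fun k b => θ b + cond k t 0, ?_, ?_⟩
  · intro k b b' hb
    exact h1 (add_right_cancel hb)
  · intro b b' k k' hb hs
    simp only [← add_assoc] at hs
    cases k <;> cases k' <;> simp only [cond_true, cond_false, add_zero] at hs
    · exact ⟨h2 hs, rfl⟩
    · simp only [hs, he.flip] at hb; simp at hb
    · simp only [← hs, he.flip] at hb; simp at hb
    · exact ⟨h2 (add_right_cancel hs), rfl⟩

lemma EvenCyclicData.hasSplitMapping {C : Type*} [AddCommGroup C] [Finite C]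
    (d : EvenCyclicData C) : HasSplitMapping C := by
  obtain ⟨χ, hχ⟩ := exists_isHalving d.t_ne d.t_add
  refine ⟨χ, fun k b => b + cond k d.o 0, fun k b b' hb => add_right_cancel hb, ?_⟩
  intro b b' k k' hb hs
  simp only [← add_assoc] at hs
  obtain rfl := d.bool_eq hs
  exact ⟨d.eq_of_halving hχ hs (v := 0) (by simpa using hb), rfl⟩

lemma HasSplitMapping.prod {C B : Type*} [AddCommGroup C] [AddCommGroup B] [Finite C]
    (d : EvenCyclicData C) (h : HasSplitMapping B) : HasCompleteMapping (C × B) := by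
  obtain ⟨χ, hχ⟩ := exists_isHalving d.t_ne d.t_add
  obtain ⟨ε, β, h1, h2⟩ := h
  refine ⟨fun g => (g.1 + cond (ε g.2) d.o 0, β (χ (g.1 + cond (ε g.2) d.o 0)) g.2), ?_, ?_⟩
  · rintro ⟨z, x⟩ ⟨z', x'⟩ h
    simp only [Prod.mk.injEq] at h
    obtain ⟨h3, h4⟩ := h
    rw [h3] at h4
    have h5 := h1 _ h4
    subst h5
    rw [add_right_cancel h3]
  · rintro ⟨z, x⟩ ⟨z', x'⟩ h
    simp only [Prod.mk_add_mk, Prod.mk.injEq, ← add_assoc] at h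
    obtain ⟨h3, h4⟩ := h
    obtain ⟨rfl, h5⟩ := h2 _ _ _ _ (d.bool_eq h3) h4
    rw [d.eq_of_halving hχ h3 h5]

lemma HasCompleteMapping.congr {B D : Type*} [AddCommGroup B] [AddCommGroup D]
    (h : HasCompleteMapping B) (e : D ≃+ B) : HasCompleteMapping D := by
  obtain ⟨θ, h1, h2⟩ := h
  refine ⟨fun x => e.symm (θ (e x)), fun x y hxy => ?_, fun x y hxy => ?_⟩
  · exact e.injective (h1 (e.symm.injective hxy))
  · have := congrArg e hxy
    simp only [map_add, AddEquiv.apply_symm_apply] at this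
    exact e.injective (h2 this)

/-- A nontrivial finite Abelian `2`-group splits off a cyclic factor of order its exponent. -/
lemma exists_equiv_zmod_exponent_prod {Δ : Type*} [AddCommGroup Δ] [Finite Δ] [Nontrivial Δ]
    {α : ℕ} (hcard : Nat.card Δ = 2 ^ α) :
    ∃ (B : Type) (_ : AddCommGroup B) (_ : Finite B),
      2 ∣ AddMonoid.exponent Δ ∧ Nonempty (Δ ≃+ ZMod (AddMonoid.exponent Δ) × B) := by
  obtain ⟨ι, _, n, hn, ⟨e⟩⟩ := AddCommGroup.equiv_directSum_zmod_of_finite' Δ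
  classical
  let e' : Δ ≃+ ((i : ι) → ZMod (n i)) := e.trans (DirectSum.addEquivProd _)
  have hne : ∀ i, NeZero (n i) := fun i => ⟨by have := hn (i := i); omega⟩
  have hprod : ∏ i, n i = 2 ^ α := by
    rw [← hcard, Nat.card_congr e'.toEquiv, Nat.card_pi]
    simp
  have hpow : ∀ i, ∃ k, n i = 2 ^ k := fun i => by
    obtain ⟨k, -, hk⟩ := (Nat.dvd_prime_pow Nat.prime_two).1
      (hprod ▸ Finset.dvd_prod_of_mem n (Finset.mem_univ i))
    exact ⟨k, hk⟩
  have hι : Nonempty ι := by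
    by_contra h
    rw [not_nonempty_iff] at h
    exact not_subsingleton Δ e'.toEquiv.subsingleton
  obtain ⟨i, hi⟩ := Finite.exists_max n
  have hdvd : ∀ j, n j ∣ n i := by
    intro j
    obtain ⟨k, hk⟩ := hpow j
    obtain ⟨l, hl⟩ := hpow i
    have := hi j
    rw [hk, hl] at this ⊢
    exact pow_dvd_pow 2 ((Nat.pow_le_pow_iff_right (by norm_num)).1 this)
  have hexp : AddMonoid.exponent Δ = n i := by
    apply Nat.dvd_antisymm
    · apply AddMonoid.exponent_dvd_of_forall_nsmul_eq_zero
      intro g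
      apply e'.injective
      rw [map_nsmul, map_zero]
      funext j
      have : ((n i : ℕ) : ZMod (n j)) = 0 := (ZMod.natCast_eq_zero_iff _ _).2 (hdvd j)
      simp [this]
    · have h1 := AddMonoid.exponent_nsmul_eq_zero (e'.symm (Pi.single i 1))
      rw [← map_nsmul, EmbeddingLike.map_eq_zero_iff] at h1
      have h2 := congrFun h1 i
      rw [Pi.smul_apply, Pi.single_eq_same, nsmul_one, Pi.zero_apply,
        ZMod.natCast_eq_zero_iff] at h2
      exact h2
  refine ⟨(j : {j // j ≠ i}) → ZMod (n j), inferInstance, inferInstance, ?_, ?_⟩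
  · obtain ⟨k, hk⟩ := hpow i
    rw [hexp, hk]
    have := hn (i := i)
    exact dvd_pow_self 2 (by rintro rfl; omega)
  · rw [hexp]
    refine ⟨e'.trans { Equiv.piSplitAt i (fun j => ZMod (n j)) with map_add' := ?_ }⟩
    intro x y
    rfl

lemma exists_involution {B : Type*} [AddCommGroup B] [Finite B] [Nontrivial B] {α : ℕ}
    (hcard : Nat.card B = 2 ^ α) : ∃ t : B, t ≠ 0 ∧ t + t = 0 := by
  have hα : α ≠ 0 := by
    rintro rfl
    have := Finite.one_lt_card (α := B)
    omega
  have := Fact.mk Nat.prime_two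
  obtain ⟨t, ht⟩ := exists_prime_addOrderOf_dvd_card' (G := B) 2 (hcard ▸ dvd_pow_self 2 hα)
  refine ⟨t, ?_, ?_⟩
  · rintro rfl; simp at ht
  · rw [← two_nsmul, ← ht, addOrderOf_nsmul_eq_zero]

/-- The Hall–Paige dichotomy for Abelian `2`-groups: cyclic, or possessing a complete mapping. -/
lemma evenCyclicData_or_hasCompleteMapping (N : ℕ) :
    ∀ (B : Type) [AddCommGroup B] [Finite B] [Nontrivial B], Nat.card B ≤ N →
      ∀ α : ℕ, Nat.card B = 2 ^ α → Nonempty (EvenCyclicData B) ∨ HasCompleteMapping B := by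
  induction N with
  | zero =>
    intro B _ _ _ h
    have := Finite.one_lt_card (α := B)
    omega
  | succ N ih =>
    intro B _ _ _ hN α hα
    obtain ⟨B', _, _, h2, ⟨e⟩⟩ := exists_equiv_zmod_exponent_prod hα
    have : NeZero (AddMonoid.exponent B) := ⟨AddMonoid.exponent_ne_zero_of_finite⟩
    obtain ⟨d⟩ := evenCyclicData_zmod h2
    rcases subsingleton_or_nontrivial B' with hB' | hB'
    · left
      have : Unique B' := ⟨⟨0⟩, fun _ => Subsingleton.elim _ _⟩
      exact ⟨d.congr (e.trans (AddEquiv.prodUnique (M := ZMod _) (N := B')))⟩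
    · right
      have hc : Nat.card B = AddMonoid.exponent B * Nat.card B' := by
        rw [Nat.card_congr e.toEquiv, Nat.card_prod, Nat.card_zmod]
      obtain ⟨β, -, hβ⟩ := (Nat.dvd_prime_pow Nat.prime_two).1
        (hα ▸ hc ▸ dvd_mul_left _ _ : Nat.card B' ∣ 2 ^ α)
      have hpos : 0 < Nat.card B' := Nat.card_pos
      have h2' : 2 ≤ AddMonoid.exponent B := Nat.le_of_dvd (NeZero.pos _) h2
      have hlt : Nat.card B' ≤ N := by nlinarith
      obtain ⟨t, ht, htt⟩ := exists_involution hβ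
      obtain ⟨ε, hε⟩ := exists_isHalving ht htt
      refine HasCompleteMapping.congr ?_ e
      rcases ih B' hlt β hβ with ⟨⟨d'⟩⟩ | h'
      · exact HasSplitMapping.prod d d'.hasSplitMapping
      · exact HasSplitMapping.prod d (h'.hasSplitMapping hε)

/-! ### Row sums -/

section Rows

variable {C B : Type*} [AddCommGroup C] [AddCommGroup B]

/-- The pair of permutations of `G` attached to residues `l` and `-l`: `φ` and `-(φ + D)`. -/
def signedPair {G : Type*} [AddCommGroup G] (φ D : G → G) (s : Bool) (g : G) : G :=
  cond s (-(φ g + D g)) (φ g)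

lemma signedPair_injective {G : Type*} [AddCommGroup G] {φ D : G → G}
    (h1 : Function.Injective φ) (h2 : Function.Injective fun g => φ g + D g) (s : Bool) :
    Function.Injective (signedPair φ D s) := by
  cases s
  · exact h1
  · exact fun x y h => h2 (neg_injective h)

/-- Reindexing by `z ↦ z + o`: a summand that changes sign under it has a sum equal to its own
negative. -/
lemma sum_add_sum_eq_zero_of_shift {M : Type*} [AddCommGroup M] [Fintype C] (o : C) (F : C → M)
    (h : ∀ z, F (z + o) = -F z) : ∑ z, F z + ∑ z, F z = 0 := by
  nth_rewrite 1 [← Equiv.sum_comp (Equiv.addRight o) F]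
  simp [h]

lemma sum_add_sum_eq_zero_of_neg {M : Type*} [AddCommGroup M] [Fintype C] (F : C → M)
    (h : ∀ z, F (-z) = -F z) : ∑ z, F z + ∑ z, F z = 0 := by
  nth_rewrite 1 [← Equiv.sum_comp (Equiv.neg C) F]
  simp [h]

/-- Row sums for the labels `±1`: with `φ` the mixing permutation and `D` the first coordinate,
over a block `C × {b, b + t}` in which the labels are interchanged where `c` holds; `c` is the
parity of the coordinate in `C`, or its negation. -/
lemma sum_signedPair_mixing [Fintype C] (d : EvenCyclicData C)
    (hC : ∀ z : C, Fintype.card C • z = 0) (χ : C → Bool) {t : B} {ε : B → Bool}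
    (hε : IsHalving t ε) (c : C → Bool) (hc : ∀ z, c (z + d.o) = !c z) (hc' : ∀ z, c (-z) = c z)
    (b : B) :
    ∑ z, (signedPair (mixing d χ t ε) (fun g => (g.1, 0)) (c z) (z, b) +
      signedPair (mixing d χ t ε) (fun g => (g.1, 0)) (c z) (z, b + t)) = 0 := by
  have ht : -t = t := neg_eq_of_add_eq_zero_left hε.t_add
  have key : ∀ z, signedPair (mixing d χ t ε) (fun g => (g.1, 0)) (c z) (z, b) +
      signedPair (mixing d χ t ε) (fun g => (g.1, 0)) (c z) (z, b + t) =
      (z + z + d.o - (cond (c z) (z + z + z) 0 + cond (c z) (z + z + z) 0)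
        - (cond (c z) d.o 0 + cond (c z) d.o 0),
       (cond (c z) (-b) b + cond (c z) (-b) b) +
        (t + (cond (χ z) t 0 + cond (χ (z + d.o)) t 0))) := by
    intro z
    simp only [signedPair, mixing, hε.flip]
    cases h1 : ε b <;> cases h2 : c z <;> cases h3 : χ z <;> cases h4 : χ (z + d.o) <;>
      simp only [h3, h4, Bool.not_false, Bool.not_true, cond_true, cond_false, add_zero,
        Prod.mk_add_mk, Prod.neg_mk, Prod.mk.injEq, neg_add, ht] <;> constructor <;> abel
  have h1 : ∑ z : C, z + ∑ z : C, z = 0 := sum_add_sum_eq_zero_of_neg (fun z => z) (fun _ => rfl)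
  have h2 := sum_add_sum_eq_zero_of_neg (fun z : C => cond (c z) (z + z + z) 0) (fun z => by
    simp only [hc']; cases c z <;> simp only [cond_true, cond_false, neg_zero]; abel)
  have h3 : ∑ z, cond (c z) d.o 0 + ∑ z, cond (c z) d.o 0 = 0 := by
    nth_rewrite 1 [← Equiv.sum_comp (Equiv.addRight d.o) (fun z => cond (c z) d.o 0)]
    rw [← Finset.sum_add_distrib, ← hC d.o, ← Finset.card_univ, ← Finset.sum_const]
    refine Finset.sum_congr rfl fun z _ => ?_
    simp only [Equiv.coe_addRight, hc]
    cases c z <;> simp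
  have h4 := sum_add_sum_eq_zero_of_shift d.o (fun z : C => cond (c z) (-b) b) (fun z => by
    simp only [hc]; cases c z <;> simp)
  have h5 : ∑ z, cond (χ z) t 0 + ∑ z, cond (χ (z + d.o)) t 0 = 0 := by
    have := Equiv.sum_comp (Equiv.addRight d.o) (fun z => cond (χ z) t 0)
    simp only [Equiv.coe_addRight] at this
    rw [this, ← Finset.sum_add_distrib]
    refine Finset.sum_eq_zero fun z _ => ?_
    cases χ z <;> simp [hε.t_add]
  have h6 : Fintype.card C • t = 0 := by
    -- the order of `C` is even, since `C` has an involution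
    have : 2 ∣ Fintype.card C := by
      have h7 : addOrderOf d.t = 2 :=
        addOrderOf_eq_prime (by rw [two_nsmul, d.t_add]) d.t_ne
      exact h7 ▸ addOrderOf_dvd_card
    obtain ⟨k, hk⟩ := this
    rw [hk, mul_nsmul, two_nsmul, hε.t_add, nsmul_zero]
  rw [Finset.sum_congr rfl fun z _ => key z, Prod.ext_iff, Prod.fst_sum, Prod.snd_sum]
  constructor
  · simp only [Finset.sum_sub_distrib, Finset.sum_add_distrib, h1, h2, h3, Finset.sum_const,
      Finset.card_univ, hC]
    simp
  · simp only [Finset.sum_add_distrib, h4, h5, Finset.sum_const, Finset.card_univ, h6]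
    simp

/-- The permutation used for the labels `±2`. A complete mapping of `B` gives it with `C` as a
mere spectator; if `B` is cyclic it is the mixing permutation with the roles of `C` and `B`
exchanged. -/
lemma exists_snd_permutation [Fintype C] [Finite B] (d : EvenCyclicData C)
    (hC : ∀ z : C, Fintype.card C • z = 0) (hB : ∀ b : B, Fintype.card C • b = 0)
    {t : B} {ε : B → Bool} (hε : IsHalving t ε)
    (h : Nonempty (EvenCyclicData B) ∨ HasCompleteMapping B) :
    ∃ φ : C × B → C × B, Function.Injective φ ∧ Function.Injective (fun g => φ g + (0, g.2)) ∧
      ∀ b, ∑ z, (φ (z, b) - φ (z, b + t)) = 0 := by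
  have hCB : ∀ g : C × B, Fintype.card C • g = 0 := fun g => Prod.ext (hC _) (hB _)
  rcases h with ⟨⟨d'⟩⟩ | ⟨θ, h1, h2⟩
  · obtain ⟨χ, hχ⟩ := exists_isHalving d.t_ne d.t_add
    have ht : t = d'.t := (d'.eq_of_add t hε.t_add).resolve_left hε.t_ne
    subst ht
    refine ⟨fun g => (mixing d' ε d.t χ g.swap).swap, ?_, ?_, ?_⟩
    · exact Prod.swap_injective.comp
        ((mixing_injective d' ε d.t χ).comp Prod.swap_injective)
    · exact Prod.swap_injective.comp
        ((mixing_add_injective d' hε hχ).comp Prod.swap_injective)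
    · intro b
      rw [← hCB (d.t, -d'.t), ← Finset.card_univ, ← Finset.sum_const]
      refine Finset.sum_congr rfl fun z _ => ?_
      have ht : -d.t = d.t := neg_eq_of_add_eq_zero_left d.t_add
      have h3 : b + d'.t + cond (χ z) d'.o 0 = b + cond (χ z) d'.o 0 + d'.t := by abel
      simp only [mixing, Prod.swap_prod_mk, Prod.mk_sub_mk, h3,
        hε.flip, Prod.mk.injEq]
      constructor
      · cases ε (b + cond (χ z) d'.o 0) <;> simp [ht]
      · abel
  · refine ⟨fun g => (g.1, θ g.2), ?_, ?_, ?_⟩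
    · rintro ⟨z, b⟩ ⟨z', b'⟩ hg
      simp only [Prod.mk.injEq] at hg
      rw [hg.1, h1 hg.2]
    · rintro ⟨z, b⟩ ⟨z', b'⟩ hg
      simp only [Prod.mk_add_mk, add_zero, Prod.mk.injEq] at hg
      rw [hg.1, @h2 b b' ((add_comm _ _).trans (hg.2.trans (add_comm _ _)))]
    · intro b
      simp only [Finset.sum_const, Finset.card_univ, hCB, Prod.mk_sub_mk, sub_self]

/-- The row sums for a label other than `±1`, in a block where the labels are interchanged
according to the position within `{b, b + t}`. -/
lemma sum_signedPair_of_sub [Fintype C] {φ D : C × B → C × B} {t : B}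
    (hφ : ∀ b, ∑ z, (φ (z, b) - φ (z, b + t)) = 0) (hD : ∀ b, ∑ z, D (z, b) = 0)
    (s : Bool) (b : B) :
    ∑ z, (signedPair φ D s (z, b) + signedPair φ D (!s) (z, b + t)) = 0 := by
  cases s
  · have : ∀ z, signedPair φ D false (z, b) + signedPair φ D (!false) (z, b + t) =
        (φ (z, b) - φ (z, b + t)) - D (z, b + t) := fun z => by
      simp only [signedPair, Bool.not_false, cond_true, cond_false]; abel
    simp only [this, Finset.sum_sub_distrib (fun z => φ (z, b) - φ (z, b + t)), hφ, hD, sub_zero]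
  · have : ∀ z, signedPair φ D true (z, b) + signedPair φ D (!true) (z, b + t) =
        -(φ (z, b) - φ (z, b + t)) - D (z, b) := fun z => by
      simp only [signedPair, Bool.not_true, cond_true, cond_false]; abel
    simp only [this, Finset.sum_sub_distrib (fun z => -(φ (z, b) - φ (z, b + t))),
      Finset.sum_neg_distrib, hφ, hD, sub_zero, neg_zero]

end Rows

/-! ### The rectangles -/

/-- The construction when `Δ = C × B` with `C` of order the exponent of `Δ`. The blocks are the sets
`C × {b, b + t}` for `b` in a half of `B`. -/
lemma magic_prod {Γ C B : Type*} [AddCommGroup Γ] [Fintype Γ] [AddCommGroup C] [Fintype C]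
    [AddCommGroup B] [Fintype B] {p n : ℕ} (hp : p = 2 * (n + 2) + 1)
    (e : Γ ≃+ ZMod p × (C × B)) (d : EvenCyclicData C)
    (hC : ∀ z : C, Fintype.card C • z = 0) (hB : ∀ b : B, Fintype.card C • b = 0)
    {t : B} {ε : B → Bool} (hε : IsHalving t ε)
    (h : Nonempty (EvenCyclicData B) ∨ HasCompleteMapping B) :
    IsMagicRectangleSet Γ p (2 * Fintype.card C)
      (Fintype.card (C × B) / (2 * Fintype.card C)) := by
  obtain ⟨χ, hχ⟩ := exists_isHalving d.t_ne d.t_add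
  obtain ⟨ψ, hψ1, hψ2, hψ3⟩ := exists_snd_permutation d hC hB hε h
  have hCB : ∀ g : C × B, Fintype.card C • g = 0 := fun g => Prod.ext (hC _) (hB _)
  have hdbl : ∑ z : C, z + ∑ z : C, z = 0 := sum_add_sum_eq_zero_of_neg (fun z => z) (fun _ => rfl)
  let par : C → Bool := fun z => decide (d.π z = 1)
  have hpar : ∀ z, par (z + d.o) = !par z := fun z => by
    have : ∀ x : ZMod 2, decide (x + 1 = 1) = !decide (x = 1) := by decide
    simp only [par, map_add, d.π_o, this]
  have hpar' : ∀ z, par (-z) = par z := fun z => by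
    have : ∀ x : ZMod 2, decide (-x = 1) = decide (x = 1) := by decide
    simp only [par, map_neg, this]
  let col : {b : B // ε b = false} × (C × Bool) → C × B :=
    fun q => (q.2.1, q.1 + cond q.2.2 t 0)
  have hcol : Function.Bijective col := by
    constructor
    · rintro ⟨⟨b, hb⟩, z, k⟩ ⟨⟨b', hb'⟩, z', k'⟩ heq
      simp only [col, Prod.mk.injEq] at heq
      obtain ⟨rfl, h2⟩ := heq
      cases k <;> cases k' <;> simp only [cond_true, cond_false, add_zero] at h2
      · subst h2; rfl
      · rw [h2, hε.flip, hb'] at hb; simp at hb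
      · rw [← h2, hε.flip, hb] at hb'; simp at hb'
      · obtain rfl := add_right_cancel h2; rfl
    · rintro ⟨z, b⟩
      cases hb : ε b
      · exact ⟨(⟨b, hb⟩, z, false), by simp [col]⟩
      · exact ⟨(⟨b + t, by rw [hε.flip, hb]; rfl⟩, z, true), by simp [col, add_assoc, hε.t_add]⟩
  let φ : Fin (n + 2) → C × B → C × B :=
    Fin.cons (mixing d χ t ε) (Fin.cons ψ fun _ => id)
  let D : Fin (n + 2) → C × B → C × B :=
    Fin.cons (fun g => (g.1, 0)) (Fin.cons (fun g => (0, g.2)) fun _ _ => 0)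
  let f : Fin (n + 2) → {b : B // ε b = false} → C × Bool → Bool :=
    Fin.cons (fun _ k => par k.1) fun _ _ k => k.2
  have hK : Fintype.card (C × Bool) = 2 * Fintype.card C := by
    simp [mul_comm]
  have hcard := Fintype.card_congr (Equiv.ofBijective col hcol)
  rw [Fintype.card_prod, hK] at hcard
  refine magic_assembly hp e col hcol (fun j => signedPair (φ j) (D j)) ?_ f ?_ ?_ ?_ ?_
    ?_ hK
  · intro j s
    refine signedPair_injective ?_ ?_ s
    · refine Fin.cases (mixing_injective d χ t ε) (fun j => ?_) j
      exact Fin.cases hψ1 (fun _ => Function.injective_id) j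
    · refine Fin.cases (mixing_add_injective d hχ hε) (fun j => ?_) j
      refine Fin.cases hψ2 (fun j => ?_) j
      intro x y hxy
      simpa [φ, D] using hxy
  · intro g
    have : ∀ j, signedPair (φ j) (D j) false g + signedPair (φ j) (D j) true g = -D j g :=
      fun j => by simp only [signedPair, cond_true, cond_false]; abel
    simp only [this, Fin.sum_univ_succ]
    simp [D, Prod.ext_iff]
  · rintro ⟨b, hb⟩
    rw [Fintype.sum_prod_type]
    simp only [col, Fintype.sum_bool, cond_true, cond_false, add_zero, Prod.mk_add_mk]
    rw [Prod.ext_iff, Prod.fst_sum, Prod.snd_sum]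
    constructor
    · simpa [Finset.sum_add_distrib] using hdbl
    · simp [hB]
  · intro j s r
    rw [Fintype.sum_prod_type]
    refine Fin.cases ?_ (fun j => ?_) j
    · simp only [f, Fin.cons_zero, Fintype.sum_bool, Finset.sum_add_distrib]
      refine sum_add_sum_eq_zero_of_shift d.o _ fun z => ?_
      simp only [hpar]
      cases par z <;> simp
    · simp [f]
  · rintro j ⟨b, hb⟩ s
    rw [Fintype.sum_prod_type]
    refine Fin.cases ?_ (fun j => ?_) j
    · have := sum_signedPair_mixing d hC χ hε (fun z => xor s (par z))
        (fun z => by simp only [hpar]; cases s <;> simp) (fun z => by simp only [hpar']) b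
      rw [← this]
      refine Finset.sum_congr rfl fun z _ => ?_
      simp [f, φ, D, col, add_comm]
    · have h1 : ∀ b, ∑ z, (φ j.succ (z, b) - φ j.succ (z, b + t)) = 0 := by
        refine Fin.cases hψ3 (fun j b => ?_) j
        simp [φ, hCB]
      have h2 : ∀ b, ∑ z, D j.succ (z, b) = 0 := by
        refine Fin.cases (fun b => ?_) (fun j b => ?_) j
        · simp [D, hCB]
        · simp [D]
      have := sum_signedPair_of_sub h1 h2 s b
      rw [← this]
      refine Finset.sum_congr rfl fun z _ => ?_
      simp [f, col, add_comm]
  · rw [← hcard, Nat.mul_div_cancel]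
    have : 0 < Fintype.card C := Fintype.card_pos
    omega

theorem stmt12 {Γ Δ : Type*} [AddCommGroup Γ] [Fintype Γ] [AddCommGroup Δ] [Fintype Δ]
    (p : ℕ) (hp : p.Prime) (hp3 : 3 < p) (e : Γ ≃+ ZMod p × Δ)
    (α : ℕ) (hα : 2 ≤ α) (hcard : Fintype.card Δ = 2 ^ α)
    (hinv : 1 < Nat.card {g : Δ // g ≠ 0 ∧ g + g = 0}) :
    IsMagicRectangleSet Γ p (2 * AddMonoid.exponent Δ)
      (Fintype.card Δ / (2 * AddMonoid.exponent Δ)) := by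
  have : Nontrivial Δ := by
    rw [← Fintype.one_lt_card_iff_nontrivial, hcard]
    exact Nat.one_lt_two_pow (by omega)
  have hcard' : Nat.card Δ = 2 ^ α := by rw [Nat.card_eq_fintype_card, hcard]
  obtain ⟨B, _, _, h2, ⟨e'⟩⟩ := exists_equiv_zmod_exponent_prod hcard'
  have := Fintype.ofFinite B
  have : NeZero (AddMonoid.exponent Δ) := ⟨AddMonoid.exponent_ne_zero_of_finite⟩
  obtain ⟨d⟩ := evenCyclicData_zmod h2
  rcases subsingleton_or_nontrivial B with hB | hB
  · -- a cyclic group has only one involution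
    exfalso
    have : Unique B := ⟨⟨0⟩, fun _ => Subsingleton.elim _ _⟩
    let d' := d.congr (e'.trans (AddEquiv.prodUnique (M := ZMod _) (N := B)))
    have : Subsingleton {g : Δ // g ≠ 0 ∧ g + g = 0} := by
      refine ⟨fun g g' => Subtype.ext ?_⟩
      rw [(d'.eq_of_add _ g.2.2).resolve_left g.2.1, (d'.eq_of_add _ g'.2.2).resolve_left g'.2.1]
    exact absurd (Finite.card_le_one_iff_subsingleton.2 this) (not_le.2 hinv)
  obtain ⟨β, -, hβ⟩ : ∃ β ≤ α, Nat.card B = 2 ^ β := by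
    refine (Nat.dvd_prime_pow Nat.prime_two).1 ?_
    rw [← hcard', Nat.card_congr e'.toEquiv, Nat.card_prod]
    exact dvd_mul_left _ _
  obtain ⟨t, ht, htt⟩ := exists_involution hβ
  obtain ⟨ε, hε⟩ := exists_isHalving ht htt
  have hkill : ∀ g : ZMod (AddMonoid.exponent Δ) × B, AddMonoid.exponent Δ • g = 0 := by
    intro g
    apply e'.symm.injective
    rw [map_nsmul, AddMonoid.exponent_nsmul_eq_zero, map_zero]
  -- write the odd number `p ≥ 5` as `2 (n + 2) + 1`
  obtain ⟨n, hn⟩ : ∃ n, p = 2 * (n + 2) + 1 := by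
    obtain ⟨k, hk⟩ := hp.odd_of_ne_two (by omega)
    exact ⟨k - 2, by omega⟩
  have key := magic_prod hn (e.trans (AddEquiv.prodCongr (AddEquiv.refl _) e')) d
    (fun z => (ZMod.card (AddMonoid.exponent Δ)).symm ▸ congrArg Prod.fst (hkill (z, 0)))
    (fun b => (ZMod.card (AddMonoid.exponent Δ)).symm ▸ congrArg Prod.snd (hkill (0, b))) hε
    (evenCyclicData_or_hasCompleteMapping _ B le_rfl β hβ)
  rwa [ZMod.card (AddMonoid.exponent Δ), ← Fintype.card_congr e'.toEquiv] at key
end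

section
/- Let a > 1, b > 1 and let Γ be a finite Abelian group of order a·b·c. Suppose that it is not the case that one of a, b is an odd number 2l+1 and the other is a power of 2 (i.e., {a,b} ≠ {2^α, 2l+1} for all positive integers α and l). Then a Γ-magic rectangle set MRS_Γ(a, b; c) exists if and only if a and b are both even or Γ belongs to the class 𝒢. -/
/-!
The existence of rectangles with sides `a`, `b` follows from that of rectangles with sides `p ∣ a`
and `q ∣ b`, since small rectangles with common row and column sums can be glued together
(`isMagicRectangleSet_of_dvd`).

If `a` and `b` are even, it suffices to take `p = q = 2`: choose a subgroup `N` of index `2`, an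
involution `e ∈ N` and `w ∉ N`, and use the squares with rows `r, w - r` and `w - (r + e), r + e`,
for `r` running through representatives of `N ⧸ ⟨e⟩` (`hasMagic_two`).

Otherwise the excluded case leaves both `a` and `b` with odd prime factors `p` and `q`. Membership
of `Γ` in `𝒢` is equivalent to `∑ g, g = 0` (`inClassG_iff_sum_eq_zero`), and this is necessary by
counting the total in terms of row or column sums (`IsMagicRectangleSet.sum_eq_zero`). Conversely,
suppose `∑ g, g = 0`, and let `H` be a subgroup of index `p * q`; its elements sum to zero as well,
because the index is odd. Two ingredients produce the `p × q` rectangles: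

* a `p × q` array of distinct elements of `Γ ⧸ H` with zero row and column sums, given by explicit
  formulas (`hasZeroSumArray_primes`), which lifts to `Γ` with zero sums (`exists_lift_zero_sum`);
* a `p × q` grid of bijections `H → H` whose rows and columns sum to zero (`hasGrid_of_odd`), built
  from a complete mapping of `H` (`exists_complete_mapping`). The latter comes from Hall's theorem on
  differences in abelian groups (`exists_injective_add_injective`).

Adding to the lifted array the values of the grid at each `h ∈ H` gives one rectangle for every `h`,
and each cell runs through one coset of `H` (`hasMagic_of_zero_sum`).
-/

/-- `Γ` belongs to the class `𝒢`: its order is odd or it has more than one involution. -/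
def InClassG (Γ : Type*) [AddCommGroup Γ] [Fintype Γ] : Prop :=
  Odd (Fintype.card Γ) ∨ 1 < Nat.card {g : Γ // g ≠ 0 ∧ g + g = 0}

/-! ### Subgroups of prescribed order -/

/-- A finite abelian group has a subgroup of every order dividing its own (the converse of
Lagrange's theorem): take a subgroup of order `m` and pull back one of order `n` from the
quotient. -/
lemma exists_addSubgroup_card (m : ℕ) : ∀ {G : Type*} [AddCommGroup G] [Finite G],
    m ∣ Nat.card G → ∃ H : AddSubgroup G, Nat.card H = m := by
  induction m using Nat.recOnMul with
  | zero =>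
    intro G _ _ h
    exact absurd (Nat.eq_zero_of_zero_dvd h) Nat.card_pos.ne'
  | one => intro G _ _ _; exact ⟨⊥, by simp⟩
  | prime p hp =>
    intro G _ _ h
    have := Fact.mk hp
    obtain ⟨g, hg⟩ := exists_prime_addOrderOf_dvd_card' p h
    exact ⟨AddSubgroup.zmultiples g, by rw [Nat.card_zmultiples, hg]⟩
  | mul m n hm hn =>
    intro G _ _ h
    obtain ⟨K, hK⟩ := hm ((dvd_mul_right m n).trans h)
    have hG := K.card_eq_card_quotient_mul_card_addSubgroup
    have hpos : 0 < m := hK ▸ Nat.card_pos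
    have hn' : n ∣ Nat.card (G ⧸ K) := by
      rw [hG, hK, mul_comm m n] at h
      exact Nat.dvd_of_mul_dvd_mul_right hpos h
    obtain ⟨L, hL⟩ := hn hn'
    refine ⟨L.comap (QuotientAddGroup.mk' K), ?_⟩
    have h1 := L.index_comap_of_surjective (QuotientAddGroup.mk'_surjective K)
    have h2 := L.card_mul_index
    have h3 := (L.comap (QuotientAddGroup.mk' K)).card_mul_index
    rw [h1, hG, hK, ← h2, hL] at h3
    have hi : 0 < L.index := Nat.pos_of_ne_zero AddSubgroup.FiniteIndex.index_ne_zero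
    apply Nat.eq_of_mul_eq_mul_right hi
    rw [h3]; ring

/-! ### The sum of all elements and the class `𝒢` -/

open Classical in
/-- Elements that differ from their negatives cancel in pairs. -/
lemma sum_univ_eq_sum_two_torsion (G : Type*) [AddCommGroup G] [Fintype G] :
    ∑ g : G, g = ∑ g : G with g + g = 0, g := by
  rw [← Finset.sum_filter_add_sum_filter_not Finset.univ (fun g : G => g + g = 0)]
  convert add_zero _
  refine Finset.sum_involution (fun g _ => -g) ?_ ?_ ?_ ?_
  · intro g _; simp
  · intro g hg _ h
    simp only [Finset.mem_filter, Finset.mem_univ, true_and] at hg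
    apply hg
    nth_rewrite 1 [← h]
    simp
  · intro g hg
    simp only [Finset.mem_filter, Finset.mem_univ, true_and] at hg ⊢
    intro h
    apply hg
    rw [← neg_eq_zero, neg_add, h]
  · intro g _; simp

/-- If `e` is an involution, translation by `e` pairs off the elements killed by `2`, so their sum
dies in `G ⧸ ⟨e⟩`. -/
lemma sum_univ_mem_zmultiples {G : Type*} [AddCommGroup G] [Fintype G] {e : G}
    (he0 : e ≠ 0) (he : e + e = 0) : ∑ g : G, g ∈ AddSubgroup.zmultiples e := by
  classical
  rw [sum_univ_eq_sum_two_torsion, ← QuotientAddGroup.eq_zero_iff,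
    ← QuotientAddGroup.mk'_apply, map_sum]
  refine Finset.sum_involution (fun g _ => g + e) ?_ ?_ ?_ ?_
  · intro g hg
    simp only [Finset.mem_filter, Finset.mem_univ, true_and] at hg
    rw [← map_add, show g + (g + e) = (g + g) + e by abel, hg, zero_add, QuotientAddGroup.mk'_apply,
      QuotientAddGroup.eq_zero_iff]
    exact AddSubgroup.mem_zmultiples e
  · intro g _ _ h
    exact he0 (by simpa using h)
  · intro g hg
    simp only [Finset.mem_filter, Finset.mem_univ, true_and] at hg ⊢
    rw [show g + e + (g + e) = (g + g) + (e + e) by abel, hg, he, add_zero]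
  · intro g _
    show g + e + e = g
    rw [add_assoc, he, add_zero]

lemma mem_zmultiples_involution {G : Type*} [AddCommGroup G] {e x : G} (he : e + e = 0)
    (hx : x ∈ AddSubgroup.zmultiples e) : x = 0 ∨ x = e := by
  obtain ⟨k, rfl⟩ := AddSubgroup.mem_zmultiples_iff.1 hx
  rcases Int.even_or_odd' k with ⟨m, rfl | rfl⟩
  · left; rw [mul_comm, mul_smul, two_zsmul, he, smul_zero]
  · right; rw [add_smul, mul_comm, mul_smul, two_zsmul, he, smul_zero, zero_add, one_smul]

lemma eq_zero_of_add_self_of_odd {G : Type*} [AddCommGroup G] [Finite G]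
    (h : Odd (Nat.card G)) {x : G} (hx : x + x = 0) : x = 0 := by
  obtain ⟨k, hk⟩ := h
  have h1 : Nat.card G • x = 0 := card_nsmul_eq_zero'
  rw [hk, add_smul, mul_comm, mul_smul, two_nsmul, hx, smul_zero, zero_add, one_smul] at h1
  exact h1

lemma exists_involution_of_even {G : Type*} [AddCommGroup G] [Fintype G]
    (h : Even (Fintype.card G)) : ∃ e : G, e ≠ 0 ∧ e + e = 0 := by
  obtain ⟨e, he⟩ := exists_prime_addOrderOf_dvd_card (G := G) 2 h.two_dvd
  refine ⟨e, ?_, ?_⟩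
  · rintro rfl; simp at he
  · rw [← two_nsmul, ← he, addOrderOf_nsmul_eq_zero]

/-- `Γ` is in `𝒢` iff its elements sum to zero. With two involutions `e ≠ f` the sum lies in
`⟨e⟩ ∩ ⟨f⟩ = 0`; with a single involution the sum is that involution. -/
lemma inClassG_iff_sum_eq_zero {Γ : Type*} [AddCommGroup Γ] [Fintype Γ] :
    InClassG Γ ↔ ∑ g : Γ, g = 0 := by
  classical
  constructor
  · rintro (h | h)
    · rw [sum_univ_eq_sum_two_torsion]
      refine Finset.sum_eq_zero fun g hg => ?_
      simp only [Finset.mem_filter, Finset.mem_univ, true_and] at hg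
      exact eq_zero_of_add_self_of_odd (by rwa [Nat.card_eq_fintype_card]) hg
    · obtain ⟨⟨e, he0, he⟩, ⟨f, hf0, hf⟩, hef⟩ := (Finite.one_lt_card_iff_nontrivial.1 h).exists_pair_ne
      rcases mem_zmultiples_involution he (sum_univ_mem_zmultiples he0 he) with h1 | h1
      · exact h1
      rcases mem_zmultiples_involution hf (sum_univ_mem_zmultiples hf0 hf) with h2 | h2
      · exact h2
      exact absurd (Subtype.ext (h1.symm.trans h2)) hef
  · intro h
    by_contra hG
    unfold InClassG at hG
    push Not at hG
    obtain ⟨hev, hle⟩ := hG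
    obtain ⟨e, he0, he⟩ := exists_involution_of_even (Nat.not_odd_iff_even.1 hev)
    have : Subsingleton {g : Γ // g ≠ 0 ∧ g + g = 0} := Finite.card_le_one_iff_subsingleton.1 hle
    rw [sum_univ_eq_sum_two_torsion, Finset.sum_eq_single e] at h
    · exact he0 h
    · intro g hg hne
      by_contra hg0
      simp only [Finset.mem_filter, Finset.mem_univ, true_and] at hg
      exact hne (congrArg Subtype.val
        (Subsingleton.elim (⟨g, hg0, hg⟩ : {g : Γ // g ≠ 0 ∧ g + g = 0}) ⟨e, he0, he⟩))
    · intro hn; simp [he] at hn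

/-- When the quotient has odd order, every element killed by `2` lies in `H`, so `H` and `G` have
the same sum of elements. -/
lemma sum_addSubgroup_eq_zero {G : Type*} [AddCommGroup G] [Fintype G] (H : AddSubgroup G)
    [Fintype H] (hodd : Odd (Nat.card (G ⧸ H))) (hG : ∑ g : G, g = 0) : ∑ h : H, h = 0 := by
  classical
  rw [sum_univ_eq_sum_two_torsion] at hG ⊢
  apply Subtype.ext
  rw [AddSubgroup.coe_zero, ← hG, AddSubgroup.val_finsetSum]
  refine Finset.sum_bij (fun h _ => (h : G)) ?_ ?_ ?_ ?_
  · intro h hh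
    simp only [Finset.mem_filter, Finset.mem_univ, true_and] at hh ⊢
    simpa using congrArg Subtype.val hh
  · intro _ _ _ _ h; exact Subtype.ext h
  · intro g hg
    simp only [Finset.mem_filter, Finset.mem_univ, true_and] at hg
    have : (g : G ⧸ H) = 0 :=
      eq_zero_of_add_self_of_odd hodd (by rw [← QuotientAddGroup.mk_add, hg]; rfl)
    refine ⟨⟨g, (QuotientAddGroup.eq_zero_iff g).1 this⟩, ?_, rfl⟩
    simp only [Finset.mem_filter, Finset.mem_univ, true_and]
    exact Subtype.ext hg
  · intro _ _; rfl

/-! ### Hall's theorem and complete mappings -/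

/-- The exchange step of Hall's theorem. Let fewer than `|G|` labels `l` have distinct arguments
`a l` and distinct values `a l + b l`. If the prescribed difference `b l₀` is replaced by `β`, the
arguments can be rearranged so that both families are distinct again.

Besides `a l₀` some argument `v` is free. Put `K = a l₀ + v + β` and leave `l₀` at its argument, so
that its new value is `K - v`. The reflection `(x, y) ↦ (K - y, K - x)` of argument-value pairs
preserves `y - x`; it is applied to the labels in the least set `O` that contains the label with
value `K - v` and, with each `k`, the label with value `K - a k`. Both families stay injective
because `O` is closed under all collisions this creates. -/
lemma exists_exchange {L G : Type*} [Finite L] [AddCommGroup G] [Finite G] [DecidableEq L]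
    (hcard : Nat.card L < Nat.card G) (a b : L → G) (ha : a.Injective)
    (hab : (a + b).Injective) (l₀ : L) (β : G) :
    ∃ a' : L → G, a'.Injective ∧ (a' + Function.update b l₀ β).Injective := by
  classical
  obtain ⟨v, hv⟩ : ∃ v, ∀ l, a l ≠ v := by
    by_contra! h
    exact absurd (Nat.card_le_card_of_surjective a h) (not_le.2 hcard)
  -- `v` becomes the second free argument, next to `a l₀`
  set K := a l₀ + v + β with hK
  -- the least set of labels closed under following the conflicts
  let P : Set L → Prop := fun S => ∀ l, l ≠ l₀ →
    (a l + b l = K - v ∨ ∃ k ∈ S, a l + b l = K - a k) → l ∈ S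
  let O : Set L := ⋂₀ {S | P S}
  have hO1 : ∀ l, l ≠ l₀ → a l + b l = K - v → l ∈ O := fun l hl h S hS => hS l hl (Or.inl h)
  have hO2 : ∀ l k, l ≠ l₀ → k ∈ O → a l + b l = K - a k → l ∈ O :=
    fun l k hl hk h S hS => hS l hl (Or.inr ⟨k, hk S hS, h⟩)
  have hO3 : ∀ l ∈ O, l ≠ l₀ ∧ (a l + b l = K - v ∨ ∃ k ∈ O, a l + b l = K - a k) := by
    intro l hl
    refine hl {l | l ≠ l₀ ∧ (a l + b l = K - v ∨ ∃ k ∈ O, a l + b l = K - a k)} ?_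
    rintro l hne (h | ⟨k, ⟨hk1, hk2⟩, h⟩)
    · exact ⟨hne, Or.inl h⟩
    · refine ⟨hne, Or.inr ⟨k, ?_, h⟩⟩
      rcases hk2 with h' | ⟨m, hm, h'⟩
      · exact hO1 k hk1 h'
      · exact hO2 k m hk1 hm h'
  have hl₀ : l₀ ∉ O := fun h => (hO3 _ h).1 rfl
  -- a reflected argument collides only with arguments that are reflected as well
  have key : ∀ l ∈ O, ∀ k, k ∉ O → a k ≠ K - (a l + b l) := by
    intro l hl k hk h
    rcases (hO3 l hl).2 with h' | ⟨m, hm, h'⟩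
    · rw [h', sub_sub_cancel] at h; exact hv k h
    · rw [h', sub_sub_cancel] at h; exact hk (ha h ▸ hm)
  have key2 : ∀ l ∈ O, ∀ k, k ∉ O → k ≠ l₀ → a k + b k ≠ K - a l :=
    fun l hl k hk hne h => hk (hO2 k l hne hl h)
  have hinj : ∀ l k, a l + b l = a k + b k → l = k := fun l k h => hab h
  refine ⟨fun l => if l ∈ O then K - (a l + b l) else a l, ?_, ?_⟩
  · intro l k h
    dsimp only at h
    split_ifs at h with h1 h2 h2
    · exact hinj _ _ (sub_right_injective h)
    · exact absurd h.symm (key l h1 k h2)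
    · exact absurd h (key k h2 l h1)
    · exact ha h
  · have hval : ∀ l, (if l ∈ O then K - (a l + b l) else a l) + Function.update b l₀ β l =
        if l ∈ O then K - a l else if l = l₀ then K - v else a l + b l := by
      intro l
      by_cases h0 : l = l₀
      · subst h0; simp only [hl₀, if_false, Function.update_self, if_true]; rw [hK]; abel
      · simp only [Function.update_of_ne h0, h0, if_false]
        split_ifs
        · abel
        · rfl
    intro l k h
    simp only [Pi.add_apply, hval] at h
    split_ifs at h with h1 h2 h3 h4 h5 h6 h7 h8
    · exact ha (sub_right_injective h)
    · exact absurd (sub_right_injective h) (hv l)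
    · exact absurd h.symm (key2 l h1 k h2 h3)
    · exact absurd (sub_right_injective h).symm (hv k)
    · rw [h4, h6]
    · exact absurd (hO1 k h6 h.symm) h5
    · exact absurd h (key2 k h7 l h1 h4)
    · exact absurd (hO1 l h4 h) h1
    · exact hinj _ _ h

/-- Hall's theorem: differences prescribed on fewer than `|G|` labels are realised by distinct
arguments with distinct values. Start from zero differences and change one label at a time. -/
lemma exists_injective_add_injective {L G : Type*} [Finite L] [AddCommGroup G] [Finite G]
    (hcard : Nat.card L < Nat.card G) (b : L → G) :
    ∃ a : L → G, a.Injective ∧ (a + b).Injective := by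
  classical
  have := Fintype.ofFinite L
  have := Fintype.ofFinite G
  suffices h : ∀ s : Finset L, ∃ a : L → G, a.Injective ∧
      (a + fun l => if l ∈ s then b l else 0).Injective by
    simpa using h Finset.univ
  intro s
  induction s using Finset.induction_on with
  | empty =>
    rw [Nat.card_eq_fintype_card, Nat.card_eq_fintype_card] at hcard
    obtain ⟨f⟩ := Function.Embedding.nonempty_of_card_le hcard.le
    exact ⟨f, f.injective, fun x y h => f.injective (by simpa using h)⟩
  | insert l s hl ih =>
    obtain ⟨a, ha, hab⟩ := ih
    obtain ⟨a', ha', hab'⟩ := exists_exchange hcard a _ ha hab l (b l)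
    refine ⟨a', ha', ?_⟩
    convert hab' using 2
    funext k
    by_cases hk : k = l
    · subst hk; simp
    · simp [hk]

/-- If the elements of `G` sum to zero then `G` has a complete mapping: a bijection `φ` such that
`g ↦ g + φ g` is a bijection too. Hall's theorem with `b g = g` on `G \ {0}` leaves one missing
argument and one missing value, which agree because all the sums involved vanish; this common
element is `φ 0`. -/
lemma exists_complete_mapping {G : Type*} [AddCommGroup G] [Fintype G] (h0 : ∑ g : G, g = 0) :
    ∃ φ : G → G, φ.Bijective ∧ (fun g => g + φ g).Bijective := by
  classical
  have hcard : Nat.card {g : G // g ≠ 0} < Nat.card G := by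
    rw [Nat.card_eq_fintype_card, Nat.card_eq_fintype_card]
    exact Fintype.card_subtype_lt (x := 0) (by simp)
  obtain ⟨a, ha, hab⟩ := exists_injective_add_injective hcard (fun g => (g : G))
  -- both `a` and `a + id` miss an element, to which `0` can be sent to obtain bijections of `G`
  have ext : ∀ f : {g : G // g ≠ 0} → G, f.Injective → ∃ v, ∀ l, f l ≠ v := by
    intro f _
    by_contra! h
    exact absurd (Nat.card_le_card_of_surjective f h) (not_le.2 hcard)
  have bij : ∀ (f : {g : G // g ≠ 0} → G) (v : G), f.Injective → (∀ l, f l ≠ v) →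
      (fun g : G => if h : g ≠ 0 then f ⟨g, h⟩ else v).Bijective := by
    intro f v hf hv
    refine Finite.injective_iff_bijective.1 fun x y h => ?_
    split_ifs at h with h1 h2 h2
    · exact congrArg Subtype.val (hf h)
    · exact absurd h (hv _)
    · exact absurd h.symm (hv _)
    · rw [not_not.1 h1, not_not.1 h2]
  have sum : ∀ (f : {g : G // g ≠ 0} → G) (v : G), f.Injective → (∀ l, f l ≠ v) →
      v + ∑ l, f l = 0 := by
    intro f v hf hv
    have h1 := (bij f v hf hv).sum_comp (fun g : G => g)
    rw [h0, Fintype.sum_eq_add_sum_subtype_ne _ (0 : G)] at h1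
    rw [dif_neg (not_not.2 rfl)] at h1
    refine Eq.trans ?_ h1
    exact congrArg (v + ·) (Finset.sum_congr rfl fun l _ => by rw [dif_pos l.2])
  obtain ⟨v, hv⟩ := ext a ha
  obtain ⟨w, hw⟩ := ext _ hab
  have hid : (0 : G) + ∑ l : {g : G // g ≠ 0}, (l : G) = 0 :=
    sum _ 0 Subtype.val_injective fun l => l.2
  have hvw : w = v := by
    have h1 := sum a v ha hv
    have h2 := sum _ w hab hw
    simp only [Pi.add_apply, Finset.sum_add_distrib] at h2
    rw [zero_add] at hid
    rw [hid, add_zero] at h2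
    exact add_right_cancel (h2.trans h1.symm)
  subst hvw
  refine ⟨_, bij a w ha hv, ?_⟩
  convert bij _ w hab hw using 1
  funext g
  by_cases hg : g = 0
  · simp [hg]
  · simp [hg, add_comm]

/-! ### Grids of bijections with vanishing row and column sums -/

/-- An `I × J` grid of self-bijections of `H` in which, at every point of `H`, each row and each
column sums to zero. -/
def HasGrid (H I J : Type*) [AddCommGroup H] [Fintype I] [Fintype J] : Prop :=
  ∃ θ : I → J → H → H, (∀ i j, (θ i j).Bijective) ∧
    (∀ i h, ∑ j, θ i j h = 0) ∧ (∀ j h, ∑ i, θ i j h = 0)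

section Grid
variable {H I J I' J' : Type*} [AddCommGroup H] [Fintype I] [Fintype J] [Fintype I'] [Fintype J']

lemma HasGrid.transpose (h : HasGrid H I J) : HasGrid H J I := by
  obtain ⟨θ, h1, h2, h3⟩ := h
  exact ⟨fun j i => θ i j, fun j i => h1 i j, h3, h2⟩

lemma HasGrid.congr_right (h : HasGrid H I J) (e : J' ≃ J) : HasGrid H I J' := by
  obtain ⟨θ, h1, h2, h3⟩ := h
  refine ⟨fun i j => θ i (e j), fun i j => h1 _ _, fun i x => ?_, fun j x => h3 _ _⟩
  rw [← h2 i x]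
  exact e.sum_comp (fun j => θ i j x)

/-- Two further columns: a copy of an existing column and its negative. -/
lemma HasGrid.add_two (h : HasGrid H I J) (j₀ : J) : HasGrid H I (J ⊕ Bool) := by
  obtain ⟨θ, h1, h2, h3⟩ := h
  refine ⟨fun i => Sum.elim (θ i) (fun b x => if b then θ i j₀ x else -θ i j₀ x), ?_, ?_, ?_⟩
  · rintro i (j | b)
    · exact h1 i j
    · cases b
      · simpa [Function.comp_def] using (Equiv.neg H).bijective.comp (h1 i j₀)
      · simpa using h1 i j₀
  · intro i x
    simp [h2]
  · rintro (j | b) x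
    · simpa using h3 j x
    · cases b <;> simp [h3]

lemma HasGrid.extend {j : ℕ} (h : HasGrid H I (Fin (j + 1))) (k : ℕ) :
    HasGrid H I (Fin (j + 1 + 2 * k)) := by
  induction k with
  | zero => exact h
  | succ k ih =>
    exact (ih.add_two ⟨0, by lia⟩).congr_right
      (Fintype.equivOfCardEq (by simp; ring))

/-- A complete mapping `φ` yields three bijections `id`, `φ`, `-(id + φ)` with sum zero. -/
lemma hasGrid_three (H : Type*) [AddCommGroup H] [Fintype H] (h0 : ∑ h : H, h = 0) :
    HasGrid H (Fin 3) (Fin 3) := by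
  obtain ⟨φ, hφ, hφ'⟩ := exists_complete_mapping h0
  let θ : Fin 3 → H → H := ![id, φ, fun h => -(h + φ h)]
  have hb : ∀ i, (θ i).Bijective := by
    intro i
    fin_cases i
    · exact Function.bijective_id
    · exact hφ
    · exact (Equiv.neg H).bijective.comp hφ'
  have hs : ∀ x, ∑ i, θ i x = 0 := by
    intro x
    simp [Fin.sum_univ_three, θ]
  -- a cyclic Latin square in the three bijections
  refine ⟨fun i j => θ (i + j), fun i j => hb _, fun i x => ?_, fun j x => ?_⟩
  · rw [← hs x]; exact Equiv.sum_comp (Equiv.addLeft i) (fun t => θ t x)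
  · rw [← hs x]; exact Equiv.sum_comp (Equiv.addRight j) (fun t => θ t x)

lemma hasGrid_of_odd (H : Type*) [AddCommGroup H] [Fintype H] (h0 : ∑ h : H, h = 0)
    (hI : Odd (Fintype.card I)) (hI1 : Fintype.card I ≠ 1)
    (hJ : Odd (Fintype.card J)) (hJ1 : Fintype.card J ≠ 1) : HasGrid H I J := by
  obtain ⟨k, hk⟩ := hI
  obtain ⟨l, hl⟩ := hJ
  have h1 := ((hasGrid_three H h0).extend (l - 1)).congr_right (J' := J)
    (Fintype.equivOfCardEq (by simp; lia))
  exact ((h1.transpose.extend (k - 1)).congr_right (J' := I)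
    (Fintype.equivOfCardEq (by simp; lia))).transpose

end Grid

/-! ### Lifting an array from a quotient -/

/-- An array over `G ⧸ H` with zero row and column sums lifts to one over `G`: the errors of any
lift lie in `H` and can be absorbed in one row and one column. -/
lemma exists_lift_zero_sum {G I J : Type*} [AddCommGroup G] [Fintype I] [Fintype J]
    (i₀ : I) (j₀ : J) (H : AddSubgroup G) (y : I → J → G ⧸ H)
    (hr : ∀ i, ∑ j, y i j = 0) (hc : ∀ j, ∑ i, y i j = 0) :
    ∃ Y : I → J → G, (∀ i j, (Y i j : G ⧸ H) = y i j) ∧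
      (∀ i, ∑ j, Y i j = 0) ∧ (∀ j, ∑ i, Y i j = 0) := by
  classical
  choose L hL using fun i j => QuotientAddGroup.mk'_surjective H (y i j)
  have hr' : ∀ i, ∑ j, L i j ∈ H := fun i => by
    rw [← QuotientAddGroup.eq_zero_iff, ← QuotientAddGroup.mk'_apply, map_sum, ← hr i]
    exact Finset.sum_congr rfl fun j _ => hL i j
  have hc' : ∀ j, ∑ i, L i j ∈ H := fun j => by
    rw [← QuotientAddGroup.eq_zero_iff, ← QuotientAddGroup.mk'_apply, map_sum, ← hc j]
    exact Finset.sum_congr rfl fun i _ => hL i j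
  have ht : ∑ i, ∑ j, L i j ∈ H := H.sum_mem fun i _ => hr' i
  refine ⟨fun i j => L i j - (if j = j₀ then ∑ j', L i j' else 0)
    - (if i = i₀ then ∑ i', L i' j else 0)
    + (if i = i₀ then if j = j₀ then ∑ i', ∑ j', L i' j' else 0 else 0), ?_, ?_, ?_⟩
  · intro i j
    rw [← hL i j, QuotientAddGroup.mk'_apply, QuotientAddGroup.eq]
    have h1 : (if j = j₀ then ∑ j', L i j' else 0) ∈ H := by
      split_ifs; exacts [hr' i, H.zero_mem]
    have h2 : (if i = i₀ then ∑ i', L i' j else 0) ∈ H := by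
      split_ifs; exacts [hc' j, H.zero_mem]
    have h3 : (if i = i₀ then if j = j₀ then ∑ i', ∑ j', L i' j' else 0 else 0) ∈ H := by
      split_ifs; exacts [ht, H.zero_mem, H.zero_mem]
    rw [show ∀ x u v t : G, -(x - u - v + t) + x = u + v - t by intros; abel]
    exact H.sub_mem (H.add_mem h1 h2) h3
  · intro i
    by_cases hi : i = i₀
    · simp [Finset.sum_add_distrib, Finset.sum_sub_distrib, hi, Finset.sum_comm (γ := I)]
    · simp [Finset.sum_sub_distrib, hi]
  · intro j
    by_cases hj : j = j₀
    · simp [Finset.sum_add_distrib, Finset.sum_sub_distrib, hj]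
    · simp [Finset.sum_sub_distrib, hj]

/-! ### Zero-sum arrays over groups of order `p * q` -/

/-- An `I × J` array of distinct elements of `Q` with zero row and column sums. -/
def HasZeroSumArray (Q I J : Type*) [AddCommGroup Q] [Fintype I] [Fintype J] : Prop :=
  ∃ y : I → J → Q, (∀ i j i' j', y i j = y i' j' → i = i' ∧ j = j') ∧
    (∀ i, ∑ j, y i j = 0) ∧ (∀ j, ∑ i, y i j = 0)

lemma HasZeroSumArray.transpose {Q I J : Type*} [AddCommGroup Q] [Fintype I] [Fintype J]
    (h : HasZeroSumArray Q I J) : HasZeroSumArray Q J I := by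
  obtain ⟨y, h1, h2, h3⟩ := h
  exact ⟨fun j i => y i j, fun j i j' i' h => (h1 i j i' j' h).symm, h3, h2⟩

lemma sum_zmod_eq_zero {p : ℕ} [NeZero p] (hp : Odd p) : ∑ t : ZMod p, t = 0 :=
  inClassG_iff_sum_eq_zero.1 (Or.inl (by rwa [ZMod.card]))

lemma sum_valMinAbs_eq_zero {p : ℕ} [NeZero p] (hp : Odd p) :
    ∑ t : ZMod p, t.valMinAbs = 0 := by
  have h := Equiv.sum_comp (Equiv.neg (ZMod p)) (fun t => t.valMinAbs)
  have h2 : ∑ t : ZMod p, (Equiv.neg (ZMod p) t).valMinAbs = -∑ t : ZMod p, t.valMinAbs := by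
    rw [← Finset.sum_neg_distrib]
    refine Finset.sum_congr rfl fun t _ => ?_
    exact ZMod.valMinAbs_neg_of_ne_half fun h => by
      obtain ⟨k, hk⟩ := hp
      lia
  lia

lemma two_ne_zero_zmod {p : ℕ} (hp : p.Prime) (hp2 : p ≠ 2) : (2 : ZMod p) ≠ 0 := by
  intro h
  have := (ZMod.natCast_eq_zero_iff 2 p).1 (by exact_mod_cast h)
  exact hp2 ((Nat.prime_dvd_prime_iff_eq hp Nat.prime_two).1 this)

lemma zmod_eq_of_dvd_valMinAbs_sub {p : ℕ} {s t : ZMod p}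
    (h : (p : ℤ) ∣ s.valMinAbs - t.valMinAbs) : s = t := by
  rw [← ZMod.intCast_zmod_eq_zero_iff_dvd] at h
  simpa [sub_eq_zero] using h

/-- Order `p²`, cyclic or not. With `h` of order `p` and `g` generating the quotient by `⟨h⟩`, the
entries are `σ(i + j) • g + σ(i - j) • h`, where `σ` is the representative in `(-p/2, p/2)`. The
representatives sum to `0` in `ℤ`, so carries into `⟨h⟩` do not matter, and the Latin squares `i + j`
and `i - j` are orthogonal since `p` is odd. -/
lemma hasZeroSumArray_sq {Q : Type*} [AddCommGroup Q] [Finite Q] {p : ℕ} [Fact p.Prime]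
    (hp2 : p ≠ 2) (hQ : Nat.card Q = p * p) : HasZeroSumArray Q (ZMod p) (ZMod p) := by
  have hp : p.Prime := Fact.out
  have hodd := hp.odd_of_ne_two hp2
  obtain ⟨h, hh⟩ := exists_prime_addOrderOf_dvd_card' (G := Q) p (hQ ▸ dvd_mul_left p p)
  have hcard : Nat.card (Q ⧸ AddSubgroup.zmultiples h) = p := by
    have := (AddSubgroup.zmultiples h).card_eq_card_quotient_mul_card_addSubgroup
    rw [hQ, Nat.card_zmultiples, hh] at this
    exact (Nat.eq_of_mul_eq_mul_right hp.pos this).symm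
  obtain ⟨g', hg'⟩ := exists_prime_addOrderOf_dvd_card'
    (G := Q ⧸ AddSubgroup.zmultiples h) p hcard.symm.dvd
  obtain ⟨g, rfl⟩ := QuotientAddGroup.mk_surjective g'
  have h2 := two_ne_zero_zmod hp hp2
  refine ⟨fun i j => (i + j).valMinAbs • g + (i - j).valMinAbs • h, ?_, ?_, ?_⟩
  · intro i j i' j' he
    dsimp only at he
    have h1 : i + j = i' + j' := by
      apply zmod_eq_of_dvd_valMinAbs_sub
      have h5 : ((i + j).valMinAbs - (i' + j').valMinAbs) • (g : Q ⧸ AddSubgroup.zmultiples h)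
          = 0 := by
        rw [← QuotientAddGroup.mk_zsmul, QuotientAddGroup.eq_zero_iff]
        refine AddSubgroup.mem_zmultiples_iff.2
          ⟨(i' - j').valMinAbs - (i - j).valMinAbs, ?_⟩
        rw [sub_smul, sub_smul, sub_eq_sub_iff_add_eq_add, add_comm, ← he]
      have h6 := addOrderOf_dvd_iff_zsmul_eq_zero.2 h5
      exact hg' ▸ h6
    have h3 : i - j = i' - j' := by
      apply zmod_eq_of_dvd_valMinAbs_sub
      rw [h1, add_right_inj] at he
      have h5 : ((i - j).valMinAbs - (i' - j').valMinAbs) • h = 0 := by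
        rw [sub_smul, he, sub_self]
      have h6 := addOrderOf_dvd_iff_zsmul_eq_zero.2 h5
      exact hh ▸ h6
    have h4 : i = i' := mul_left_cancel₀ h2 (by linear_combination h1 + h3)
    exact ⟨h4, by simpa [h4] using h1⟩
  · intro i
    have h5 := Equiv.sum_comp (Equiv.addLeft i) (fun t => t.valMinAbs)
    have h6 := Equiv.sum_comp (Equiv.subLeft i) (fun t => t.valMinAbs)
    rw [sum_valMinAbs_eq_zero hodd] at h5 h6
    simp only [Equiv.coe_addLeft, Equiv.subLeft_apply] at h5 h6
    rw [Finset.sum_add_distrib, ← Finset.sum_smul, ← Finset.sum_smul, h5, h6]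
    simp
  · intro j
    have h5 := Equiv.sum_comp (Equiv.addRight j) (fun t => t.valMinAbs)
    have h6 := Equiv.sum_comp (Equiv.subRight j) (fun t => t.valMinAbs)
    rw [sum_valMinAbs_eq_zero hodd] at h5 h6
    simp only [Equiv.coe_addRight, Equiv.subRight_apply] at h5 h6
    rw [Finset.sum_add_distrib, ← Finset.sum_smul, ← Finset.sum_smul, h5, h6]
    simp

/-- Nonzero coefficients modulo `p`, indexed by `ZMod q`, with sum zero: all equal to `1` except
one coefficient `1 - q`, or except a `2` and a `-1` when `q ≡ 1` modulo `p`. -/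
lemma exists_ne_zero_sum_eq_zero {p q : ℕ} [Fact p.Prime] [Fact q.Prime] (hp2 : p ≠ 2) :
    ∃ ε : ZMod q → ZMod p, (∀ j, ε j ≠ 0) ∧ ∑ j, ε j = 0 := by
  have h2 := two_ne_zero_zmod Fact.out hp2
  have h01 : (0 : ZMod q) ≠ 1 := zero_ne_one
  by_cases hq : (q : ZMod p) = 1
  · refine ⟨fun j => 1 + (if j = 0 then 1 else 0) - (if j = 1 then 2 else 0), ?_, ?_⟩
    · intro j
      by_cases h : j = 0
      · subst h; simpa [one_add_one_eq_two] using h2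
      · by_cases h' : j = 1
        · subst h'
          simp only [if_neg h, if_true, add_zero]
          intro h3
          exact one_ne_zero (α := ZMod p) (by linear_combination -h3)
        · simp [h, h']
    · simp only [Finset.sum_sub_distrib, Finset.sum_add_distrib, Finset.sum_ite_eq',
        Finset.mem_univ, if_true, Finset.sum_const, Finset.card_univ, ZMod.card, nsmul_eq_mul, hq]
      ring
  · refine ⟨fun j => 1 - (if j = 0 then (q : ZMod p) else 0), ?_, ?_⟩
    · intro j
      by_cases h : j = 0
      · subst h; simpa [sub_eq_zero] using Ne.symm hq
      · simp [h]
    · simp [Finset.sum_sub_distrib]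

lemma exists_zmod_hom {Q : Type*} [AddCommGroup Q] [Finite Q] (p : ℕ) [Fact p.Prime]
    (h : p ∣ Nat.card Q) : ∃ φ : ZMod p →+ Q, Function.Injective φ := by
  obtain ⟨u, hu⟩ := exists_prime_addOrderOf_dvd_card' p h
  refine ⟨ZMod.lift p ⟨zmultiplesHom Q u, ?_⟩, ?_⟩
  · simp [← hu, addOrderOf_nsmul_eq_zero]
  · rw [ZMod.lift_injective]
    intro m hm
    rw [ZMod.intCast_zmod_eq_zero_iff_dvd, ← hu, addOrderOf_dvd_iff_zsmul_eq_zero]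
    simpa using hm

/-- Order `p * q` with `p < q`. Identify `Q` with `ZMod p × ZMod q` and take the entries
`(ε j * i, δ i * j)`, where the coefficients `ε` and `δ` sum to zero, `δ i = 1` for `i ≠ 0` and
`δ 0 = 1 - p`, which is nonzero modulo `q` as `p < q`. The entry determines whether `i = 0`, hence
`j`, hence `i`. -/
lemma hasZeroSumArray_of_lt {Q : Type*} [AddCommGroup Q] [Finite Q] {p q : ℕ} [Fact p.Prime]
    [Fact q.Prime] (hp2 : p ≠ 2) (hpq : p < q) (hQ : Nat.card Q = p * q) :
    HasZeroSumArray Q (ZMod p) (ZMod q) := by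
  have hp : p.Prime := Fact.out
  have hq : q.Prime := Fact.out
  have hpodd := hp.odd_of_ne_two hp2
  have hqodd := hq.odd_of_ne_two (by have := hp.two_le; lia)
  obtain ⟨φ, hφ⟩ := exists_zmod_hom (Q := Q) p (hQ ▸ dvd_mul_right p q)
  obtain ⟨ψ, hψ⟩ := exists_zmod_hom (Q := Q) q (hQ ▸ dvd_mul_left q p)
  obtain ⟨ε, hε, hε0⟩ := exists_ne_zero_sum_eq_zero (p := p) (q := q) hp2
  have hδ : (1 - p : ZMod q) ≠ 0 := by
    intro h
    have h1 : ((1 : ℕ) : ZMod q) = (p : ℕ) := by push_cast; exact sub_eq_zero.1 h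
    rw [ZMod.natCast_eq_natCast_iff'] at h1
    rw [Nat.mod_eq_of_lt hpq, Nat.mod_eq_of_lt hq.one_lt] at h1
    exact hp.one_lt.ne h1
  -- the images of `φ` and `ψ` meet trivially
  have hindep : ∀ s s' t t', φ s + ψ t = φ s' + ψ t' → s = s' ∧ t = t' := by
    intro s s' t t' h
    have h1 : φ (s - s') = ψ (t' - t) := by
      rw [map_sub, map_sub, sub_eq_sub_iff_add_eq_add, h, add_comm]
    have h2 : φ (s - s') = 0 := by
      rw [← AddMonoid.addOrderOf_eq_one_iff, ← Nat.dvd_one,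
        ← (Nat.coprime_primes hp hq).2 hpq.ne]
      apply Nat.dvd_gcd
      · rw [addOrderOf_dvd_iff_nsmul_eq_zero, ← map_nsmul]; simp
      · rw [addOrderOf_dvd_iff_nsmul_eq_zero, h1, ← map_nsmul]; simp
    rw [h2] at h1
    constructor
    · exact sub_eq_zero.1 (hφ (by rw [h2, map_zero]))
    · exact (sub_eq_zero.1 (hψ (by rw [← h1, map_zero]))).symm
  refine ⟨fun i j => φ (ε j * i) + ψ ((if i = 0 then 1 - (p : ZMod q) else 1) * j), ?_, ?_, ?_⟩
  · intro i j i' j' h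
    obtain ⟨h1, h2⟩ := hindep _ _ _ _ h
    have hi : i = 0 ↔ i' = 0 := by
      constructor
      · rintro rfl; simpa [hε] using h1.symm
      · rintro rfl; simpa [hε] using h1
    have hj : j = j' := by
      by_cases h0 : i = 0
      · rw [if_pos h0, if_pos (hi.1 h0)] at h2
        exact mul_left_cancel₀ hδ h2
      · rw [if_neg h0, if_neg (fun h => h0 (hi.2 h))] at h2
        simpa using h2
    subst hj
    exact ⟨mul_left_cancel₀ (hε _) h1, rfl⟩
  · intro i
    rw [Finset.sum_add_distrib, ← map_sum, ← map_sum, ← Finset.sum_mul, ← Finset.mul_sum, hε0,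
      sum_zmod_eq_zero hqodd]
    simp
  · intro j
    rw [Finset.sum_add_distrib, ← map_sum, ← map_sum, ← Finset.sum_mul, ← Finset.mul_sum,
      sum_zmod_eq_zero hpodd]
    have : ∑ i : ZMod p, (if i = 0 then 1 - (p : ZMod q) else 1) = 0 := by
      have : ∀ i : ZMod p, (if i = 0 then 1 - (p : ZMod q) else 1) =
          1 - (if i = 0 then (p : ZMod q) else 0) := fun i => by split_ifs <;> simp
      simp [this, Finset.sum_sub_distrib]
    rw [this]
    simp

lemma hasZeroSumArray_primes {Q : Type*} [AddCommGroup Q] [Finite Q] {p q : ℕ} [Fact p.Prime]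
    [Fact q.Prime] (hp2 : p ≠ 2) (hq2 : q ≠ 2) (hQ : Nat.card Q = p * q) :
    HasZeroSumArray Q (ZMod p) (ZMod q) := by
  rcases lt_trichotomy p q with h | rfl | h
  · exact hasZeroSumArray_of_lt hp2 h hQ
  · exact hasZeroSumArray_sq hp2 hQ
  · exact (hasZeroSumArray_of_lt hq2 h (by rw [hQ, mul_comm])).transpose

/-! ### Magic rectangle sets -/

/-- A magic rectangle set over `Γ` with arbitrary index types: `S` for the rectangles, `I` for the
rows and `J` for the columns. -/
def HasMagic (Γ S I J : Type*) [AddCommGroup Γ] [Fintype I] [Fintype J] : Prop :=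
  ∃ (x : S → I → J → Γ) (ω δ : Γ), Function.Bijective (fun t : S × I × J => x t.1 t.2.1 t.2.2) ∧
    (∀ s i, ∑ j, x s i j = ω) ∧ (∀ s j, ∑ i, x s i j = δ)

lemma HasMagic.congr {Γ S I J S' I' J' : Type*} [AddCommGroup Γ] [Fintype I] [Fintype J]
    [Fintype I'] [Fintype J'] (h : HasMagic Γ S I J) (eS : S' ≃ S) (eI : I' ≃ I) (eJ : J' ≃ J) :
    HasMagic Γ S' I' J' := by
  obtain ⟨x, ω, δ, hx, hr, hc⟩ := h
  refine ⟨fun s i j => x (eS s) (eI i) (eJ j), ω, δ, ?_, fun s i => ?_, fun s j => ?_⟩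
  · exact hx.comp (eS.prodCongr (eI.prodCongr eJ)).bijective
  · rw [← hr (eS s) (eI i)]; exact eJ.sum_comp (fun j => x (eS s) (eI i) j)
  · rw [← hc (eS s) (eJ j)]; exact eI.sum_comp (fun i => x (eS s) i (eJ j))

/-- Rectangles of the same size with common sums can be assembled into larger rectangles. -/
lemma HasMagic.glue {Γ S A B I J : Type*} [AddCommGroup Γ] [Fintype I] [Fintype J]
    [Fintype A] [Fintype B] (h : HasMagic Γ (S × A × B) I J) :
    HasMagic Γ S (A × I) (B × J) := by
  obtain ⟨x, ω, δ, hx, hr, hc⟩ := h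
  refine ⟨fun s i j => x (s, i.1, j.1) i.2 j.2, Fintype.card B • ω, Fintype.card A • δ,
    ?_, fun s i => ?_, fun s j => ?_⟩
  · let e : S × (A × I) × (B × J) ≃ (S × A × B) × I × J :=
      { toFun := fun t => ((t.1, t.2.1.1, t.2.2.1), t.2.1.2, t.2.2.2)
        invFun := fun t => (t.1.1, (t.1.2.1, t.2.1), (t.1.2.2, t.2.2))
        left_inv := fun _ => rfl
        right_inv := fun _ => rfl }
    exact hx.comp e.bijective
  · simp [Fintype.sum_prod_type, hr]
  · simp [Fintype.sum_prod_type, hc]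

/-- A zero-sum array over `G ⧸ H` is lifted to `G`, and for each `h` in `H` the grid of bijections,
evaluated at `h`, is added to it. The cell `(i, j)` then runs through its coset of `H` exactly
once. -/
lemma hasMagic_of_zero_sum {G I J : Type*} [AddCommGroup G] [Fintype G] [Fintype I] [Fintype J]
    [Nonempty I] [Nonempty J] (H : AddSubgroup G)
    (hcard : Nat.card (G ⧸ H) = Fintype.card I * Fintype.card J)
    (hy : HasZeroSumArray (G ⧸ H) I J) (hθ : HasGrid H I J) : HasMagic G H I J := by
  classical
  have := Fintype.ofFinite H
  obtain ⟨y, hy, hr, hc⟩ := hy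
  obtain ⟨θ, hθ, hθr, hθc⟩ := hθ
  obtain ⟨Y, hY, hYr, hYc⟩ := exists_lift_zero_sum (Classical.arbitrary I) (Classical.arbitrary J)
    H y hr hc
  refine ⟨fun h i j => Y i j + θ i j h, 0, 0, ?_, fun h i => ?_, fun h j => ?_⟩
  · rw [Fintype.bijective_iff_injective_and_card]
    constructor
    · rintro ⟨h, i, j⟩ ⟨h', i', j'⟩ he
      dsimp only at he
      have h1 : y i j = y i' j' := by
        have h2 : ∀ i j h, ((Y i j + (θ i j h : G) : G) : G ⧸ H) = y i j := by
          intro i j h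
          rw [QuotientAddGroup.mk_add, hY, (QuotientAddGroup.eq_zero_iff _).2 (θ i j h).2, add_zero]
        rw [← h2 i j h, he, h2]
      obtain ⟨rfl, rfl⟩ := hy _ _ _ _ h1
      rw [add_right_inj] at he
      rw [(hθ i j).injective (Subtype.ext he)]
    · have := H.card_eq_card_quotient_mul_card_addSubgroup
      rw [hcard, Nat.card_eq_fintype_card, Nat.card_eq_fintype_card] at this
      rw [this]
      simp only [Fintype.card_prod]
      ring
  · rw [Finset.sum_add_distrib, hYr, zero_add, ← AddSubgroup.val_finsetSum, hθr]; rfl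
  · rw [Finset.sum_add_distrib, hYc, zero_add, ← AddSubgroup.val_finsetSum, hθc]; rfl

/-- Rectangles with odd prime sides, with all sums zero; `H` is a subgroup of index `p * q`. -/
lemma hasMagic_primes {G : Type*} [AddCommGroup G] [Fintype G] (h0 : ∑ g : G, g = 0) {p q n : ℕ}
    (hp : p.Prime) (hq : q.Prime) (hp2 : p ≠ 2) (hq2 : q ≠ 2) (hG : Nat.card G = p * q * n) :
    HasMagic G (Fin n) (Fin p) (Fin q) := by
  classical
  have := Fact.mk hp
  have := Fact.mk hq
  obtain ⟨H, hH⟩ := exists_addSubgroup_card n (G := G) (hG ▸ dvd_mul_left n _)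
  have := Fintype.ofFinite H
  have hn : 0 < n := hH ▸ Nat.card_pos
  have hcard : Nat.card (G ⧸ H) = p * q := by
    have := H.card_eq_card_quotient_mul_card_addSubgroup
    rw [hG, hH] at this
    exact (Nat.eq_of_mul_eq_mul_right hn this).symm
  have hpo := hp.odd_of_ne_two hp2
  have hqo := hq.odd_of_ne_two hq2
  have hH0 := sum_addSubgroup_eq_zero H (hcard ▸ hpo.mul hqo) h0
  have hM := hasMagic_of_zero_sum (I := ZMod p) (J := ZMod q) H (by simpa [ZMod.card] using hcard)
    (hasZeroSumArray_primes hp2 hq2 hcard)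
    (hasGrid_of_odd H hH0 (by rwa [ZMod.card]) (by rw [ZMod.card]; exact hp.one_lt.ne')
      (by rwa [ZMod.card]) (by rw [ZMod.card]; exact hq.one_lt.ne'))
  refine hM.congr (Fintype.equivOfCardEq ?_) (Fintype.equivOfCardEq ?_) (Fintype.equivOfCardEq ?_)
  · rw [Fintype.card_fin, ← Nat.card_eq_fintype_card, hH]
  · simp [ZMod.card]
  · simp [ZMod.card]

/-- Squares of side `2`. Let `N` have index `2`, `e` be an involution in `N` and `w ∉ N`. For `r`
running through representatives of `N ⧸ ⟨e⟩`, the squares with rows `r, w - r` and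
`w - (r + e), r + e` have row sums `w` and column sums `w + e`, and fill `G = N ∪ (w - N)`. -/
lemma hasMagic_two {G : Type*} [AddCommGroup G] [Fintype G] {n : ℕ}
    (hG : Nat.card G = 4 * n) : HasMagic G (Fin n) (Fin 2) (Fin 2) := by
  classical
  obtain ⟨N, hN⟩ := exists_addSubgroup_card (2 * n) (G := G) ⟨2, by rw [hG]; ring⟩
  have hn : 0 < n := by have : 0 < 2 * n := hN ▸ Nat.card_pos; lia
  have := Fintype.ofFinite N
  obtain ⟨e, he0, he⟩ := exists_involution_of_even (G := N)
    (by rw [← Nat.card_eq_fintype_card, hN]; exact even_two_mul n)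
  obtain ⟨w, hw⟩ : ∃ w, w ∉ N := by
    by_contra! h
    have h1 : N = ⊤ := (AddSubgroup.eq_top_iff' N).2 h
    rw [h1, AddSubgroup.card_top, hG] at hN
    lia
  have he2 : (e : G) + e = 0 := by simpa using congrArg Subtype.val he
  have hcard : Nat.card (N ⧸ AddSubgroup.zmultiples e) = n := by
    have := (AddSubgroup.zmultiples e).card_eq_card_quotient_mul_card_addSubgroup
    have ho : addOrderOf e = 2 := addOrderOf_eq_prime (by rw [two_nsmul, he]) he0
    rw [hN, Nat.card_zmultiples, ho] at this
    lia
  have := Fintype.ofFinite (N ⧸ AddSubgroup.zmultiples e)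
  have key : ∀ (s t : N ⧸ AddSubgroup.zmultiples e) (k l : Fin 2),
      (s.out : G) + (k : ℕ) • (e : G) = t.out + (l : ℕ) • (e : G) → s = t ∧ k = l := by
    intro s t k l h
    have h1 : s.out + (k : ℕ) • e = t.out + (l : ℕ) • e := Subtype.ext (by simpa using h)
    have hmk : ∀ (s : N ⧸ AddSubgroup.zmultiples e) (k : ℕ),
        ((s.out + k • e : N) : N ⧸ AddSubgroup.zmultiples e) = s := by
      intro s k
      rw [QuotientAddGroup.mk_add, (QuotientAddGroup.eq_zero_iff _).2
        (AddSubgroup.nsmul_mem_zmultiples e k), add_zero, QuotientAddGroup.out_eq']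
    have h2 : s = t := by rw [← hmk s k, h1, hmk]
    subst h2
    refine ⟨rfl, ?_⟩
    rw [add_right_inj] at h1
    fin_cases k <;> fin_cases l <;> simp_all
  have hmem : ∀ (s : N ⧸ AddSubgroup.zmultiples e) (k : ℕ), (s.out : G) + k • (e : G) ∈ N :=
    fun s k => N.add_mem s.out.2 (N.nsmul_mem e.2 k)
  have hM : HasMagic G (N ⧸ AddSubgroup.zmultiples e) (Fin 2) (Fin 2) := by
    refine ⟨fun s i j => if i = j then s.out + (i : ℕ) • (e : G)
      else w - (s.out + (i : ℕ) • (e : G)), w, w + e, ?_, fun s i => ?_, fun s j => ?_⟩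
    · rw [Fintype.bijective_iff_injective_and_card]
      constructor
      · rintro ⟨s, i, j⟩ ⟨s', i', j'⟩ h
        dsimp only at h
        have hne : ∀ (s t : N ⧸ AddSubgroup.zmultiples e) (k l : ℕ),
            (s.out : G) + k • (e : G) ≠ w - (t.out + l • (e : G)) := by
          intro s t k l h
          apply hw
          rw [eq_sub_iff_add_eq] at h
          rw [← h]
          exact N.add_mem (hmem _ _) (hmem _ _)
        split_ifs at h with h1 h2 h2
        · obtain ⟨rfl, rfl⟩ := key _ _ _ _ h
          rw [← h1, ← h2]
        · exact absurd h (hne _ _ _ _)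
        · exact absurd h.symm (hne _ _ _ _)
        · obtain ⟨rfl, rfl⟩ := key _ _ _ _ (sub_right_injective h)
          have : j = j' := by lia
          rw [this]
      · rw [← Nat.card_eq_fintype_card (α := G), hG]
        rw [← Nat.card_eq_fintype_card, Nat.card_prod, Nat.card_prod, hcard, Nat.card_fin]
        ring
    · fin_cases i <;> simp
    · fin_cases j
      · suffices (s.out : G) + (w - (s.out + e)) = w + e by simpa [Fin.sum_univ_two] using this
        nth_rewrite 2 [eq_neg_of_add_eq_zero_left he2]
        abel
      · suffices w - s.out + (s.out + e) = w + e by simpa [Fin.sum_univ_two] using this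
        abel
  exact hM.congr (Fintype.equivOfCardEq (by rw [Fintype.card_fin, ← Nat.card_eq_fintype_card, hcard]))
    (Equiv.refl _) (Equiv.refl _)

/-- It suffices to treat side lengths dividing the given ones. -/
lemma isMagicRectangleSet_of_dvd {Γ : Type*} [AddCommGroup Γ] [Fintype Γ] {a b c p q : ℕ}
    (hp : p ∣ a) (hq : q ∣ b)
    (h : ∀ n, a * b * c = p * q * n → HasMagic Γ (Fin n) (Fin p) (Fin q)) :
    IsMagicRectangleSet Γ a b c := by
  obtain ⟨k, rfl⟩ := hp
  obtain ⟨l, rfl⟩ := hq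
  have h1 : HasMagic Γ (Fin c × Fin k × Fin l) (Fin p) (Fin q) :=
    (h (c * (k * l)) (by ring)).congr (Fintype.equivOfCardEq (by simp)) (Equiv.refl _)
      (Equiv.refl _)
  obtain ⟨x, ω, δ, hx, hr, hc⟩ := h1.glue.congr (S' := Fin c) (I' := Fin (p * k))
    (J' := Fin (q * l)) (Equiv.refl _) (Fintype.equivOfCardEq (by simp [mul_comm]))
    (Fintype.equivOfCardEq (by simp [mul_comm]))
  exact ⟨fun t => x t.1 t.2.1 t.2.2, ω, δ, hx, hr, hc⟩

/-- Necessity. If `a` is odd, the total `t = (c * b) • δ` satisfies `t = a • t = |Γ| • δ = 0`, since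
`2 • t = 0`; symmetrically if `b` is odd. -/
lemma IsMagicRectangleSet.sum_eq_zero {Γ : Type*} [AddCommGroup Γ] [Fintype Γ] {a b c : ℕ}
    (hcard : Fintype.card Γ = a * b * c) (h : IsMagicRectangleSet Γ a b c)
    (hab : Odd a ∨ Odd b) : ∑ g : Γ, g = 0 := by
  obtain ⟨x, ω, δ, hx, hr, hc⟩ := h
  have h1 : ∑ g : Γ, g = (c * a) • ω := by
    rw [← hx.sum_comp (fun g => g)]
    simp only [Fintype.sum_prod_type, hr]
    simp [mul_smul]
  have h2 : ∑ g : Γ, g = (c * b) • δ := by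
    rw [← hx.sum_comp (fun g => g)]
    simp only [Fintype.sum_prod_type]
    simp_rw [Finset.sum_comm (s := (Finset.univ : Finset (Fin a))), hc]
    simp [mul_smul]
  have h3 : ∀ g : Γ, (a * b * c) • g = 0 := fun g => hcard ▸ card_nsmul_eq_zero
  -- the sum is killed by `2`
  have h4 : (∑ g : Γ, g) + ∑ g : Γ, g = 0 := by
    have h : ∑ g : Γ, -g = ∑ g : Γ, g := Equiv.sum_comp (Equiv.neg Γ) (fun g => g)
    rw [Finset.sum_neg_distrib] at h
    nth_rewrite 1 [← h]
    exact neg_add_cancel _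
  have h5 : ∀ m : ℕ, Odd m → m • (∑ g : Γ, g) = ∑ g : Γ, g := by
    rintro m ⟨k, rfl⟩
    rw [add_smul, mul_comm, mul_smul, two_nsmul, h4, smul_zero, zero_add, one_smul]
  rcases hab with ha | hb
  · rw [← h5 a ha, h2, ← mul_smul, ← h3 δ]; congr 1; ring
  · rw [← h5 b hb, h1, ← mul_smul, ← h3 ω]; congr 1; ring

lemma exists_odd_prime_dvd {n : ℕ} (hn : 1 < n) (h : ∀ α, 0 < α → n ≠ 2 ^ α) :
    ∃ p, p.Prime ∧ p ≠ 2 ∧ p ∣ n := by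
  rcases Nat.eq_two_pow_or_exists_odd_prime_and_dvd n with ⟨k, hk⟩ | ⟨p, hp, hd, ho⟩
  · refine absurd hk (h k (Nat.pos_of_ne_zero ?_))
    rintro rfl
    simp at hk; lia
  · exact ⟨p, hp, by rintro rfl; exact absurd ho (by decide), hd⟩

theorem stmt16 {Γ : Type*} [AddCommGroup Γ] [Fintype Γ] (a b c : ℕ)
    (ha : 1 < a) (hb : 1 < b) (hcard : Fintype.card Γ = a * b * c)
    (hne : ¬ ∃ α l : ℕ, 0 < α ∧ 0 < l ∧
      ((a = 2 ^ α ∧ b = 2 * l + 1) ∨ (a = 2 * l + 1 ∧ b = 2 ^ α))) :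
    IsMagicRectangleSet Γ a b c ↔ (Even a ∧ Even b) ∨ InClassG Γ := by
  rw [inClassG_iff_sum_eq_zero]
  by_cases hev : Even a ∧ Even b
  · refine iff_of_true (isMagicRectangleSet_of_dvd hev.1.two_dvd hev.2.two_dvd fun n hn => ?_)
      (Or.inl hev)
    exact hasMagic_two (by rw [Nat.card_eq_fintype_card, hcard, hn]; norm_num)
  have hodd : Odd a ∨ Odd b := by
    rw [← Nat.not_even_iff_odd, ← Nat.not_even_iff_odd]; tauto
  rw [or_iff_right hev]
  refine ⟨fun h => h.sum_eq_zero hcard hodd, fun h0 => ?_⟩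
  have hA : ∀ α, 0 < α → a ≠ 2 ^ α := by
    intro α hα h
    have h2 : Even a := h ▸ (Nat.even_pow.2 ⟨even_two, hα.ne'⟩)
    obtain ⟨l, hl⟩ := hodd.resolve_left (Nat.not_odd_iff_even.2 h2)
    exact hne ⟨α, l, hα, by lia, Or.inl ⟨h, hl⟩⟩
  have hB : ∀ α, 0 < α → b ≠ 2 ^ α := by
    intro α hα h
    have h2 : Even b := h ▸ (Nat.even_pow.2 ⟨even_two, hα.ne'⟩)
    obtain ⟨l, hl⟩ := hodd.resolve_right (Nat.not_odd_iff_even.2 h2)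
    exact hne ⟨α, l, hα, by lia, Or.inr ⟨hl, h⟩⟩
  obtain ⟨p, hp, hp2, hpa⟩ := exists_odd_prime_dvd ha hA
  obtain ⟨q, hq, hq2, hqb⟩ := exists_odd_prime_dvd hb hB
  exact isMagicRectangleSet_of_dvd hpa hqb fun n hn =>
    hasMagic_primes h0 hp hq hp2 hq2 (by rw [Nat.card_eq_fintype_card, hcard, hn])
end
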